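/- Suppose d is a square in ℤ_pˣ, and let β : ℕ → ℝ be determined by β(0) = 1, β(1) = (λ−2)/(q−1), and q·β(k+2) − λ·β(k+1) + β(k) = 0 for all k. Then there exists s₀ ∈ ℝ such that for every real s > s₀ the function f_s is integrable on V_d(ℤ_p) and ∫_{V_d(ℤ_p)} f_s = (1/2)·(1−q⁻¹)⁻¹·(1−q⁻²)³·(1−q^{1−2s})⁻¹·(1−(q⁻¹λ²−1)·q^{1−2s}+(q⁻¹λ²−1)·q^{2−4s}−q^{3−6s})⁻¹·(1 + (1+q⁻¹+q^{−2s}−2q⁻¹λ)·q^{1−2s}). -/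

import Mathlib

open Matrix MeasureTheory

noncomputable instance (p : ℕ) [Fact p.Prime] : MeasurableSpace ℚ_[p] := borel _
instance (p : ℕ) [Fact p.Prime] : BorelSpace ℚ_[p] := ⟨rfl⟩
noncomputable instance (p : ℕ) [Fact p.Prime] :
    MeasurableSpace (Matrix (Fin 2) (Fin 2) ℚ_[p]) :=
  inferInstanceAs (MeasurableSpace (Fin 2 → Fin 2 → ℚ_[p]))

/-- `V = M₂(ℚ_p) × M₂(ℚ_p)`. -/
abbrev VV (p : ℕ) [Fact p.Prime] :=
  Matrix (Fin 2) (Fin 2) ℚ_[p] × Matrix (Fin 2) (Fin 2) ℚ_[p]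

/-- `P(x,y) = −det(x·y^ι − y·x^ι)`, where `m^ι` is the adjugate. -/
noncomputable def Pq {p : ℕ} [Fact p.Prime] (v : VV p) : ℚ_[p] :=
  - (v.1 * v.2.adjugate - v.2 * v.1.adjugate).det

/-- The equivariant map `F₁ : V → ℚ_p³`. -/
noncomputable def Fmap1 {p : ℕ} [Fact p.Prime] (v : VV p) : ℚ_[p] × ℚ_[p] × ℚ_[p] :=
  (v.1 0 0 * v.2 0 1 - v.1 0 1 * v.2 0 0,
   (v.1 0 0 * v.2 1 1 - v.1 0 1 * v.2 1 0) + (v.1 1 0 * v.2 0 1 - v.1 1 1 * v.2 0 0),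
   v.1 1 0 * v.2 1 1 - v.1 1 1 * v.2 1 0)

/-- The equivariant map `F₂ : V → ℚ_p³`. -/
noncomputable def Fmap2 {p : ℕ} [Fact p.Prime] (v : VV p) : ℚ_[p] × ℚ_[p] × ℚ_[p] :=
  (v.1 0 0 * v.2 1 0 - v.2 0 0 * v.1 1 0,
   (v.1 0 0 * v.2 1 1 - v.2 0 1 * v.1 1 0) + (v.1 0 1 * v.2 1 0 - v.2 0 0 * v.1 1 1),
   v.1 0 1 * v.2 1 1 - v.2 0 1 * v.1 1 1)

/-- The maximum of the `p`-adic absolute values of the three coordinates. -/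
noncomputable def mcoord {p : ℕ} [Fact p.Prime] (t : ℚ_[p] × ℚ_[p] × ℚ_[p]) : ℝ :=
  max (max ‖t.1‖ ‖t.2.1‖) ‖t.2.2‖

/-- `V_d(ℤ_p)`: integral pairs whose invariant `P` lies in `d·(ℚ_pˣ)²`. -/
def Vd (p : ℕ) [Fact p.Prime] (d : ℤ_[p]) : Set (VV p) :=
  {v | (∀ i j, ‖v.1 i j‖ ≤ 1) ∧ (∀ i j, ‖v.2 i j‖ ≤ 1) ∧
    ∃ c : ℚ_[p], c ≠ 0 ∧ Pq v = (d : ℚ_[p]) * c ^ 2}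

open Classical in
/-- The integrand `f_s`. -/
noncomputable def fs (p : ℕ) [Fact p.Prime] (d : ℤ_[p]) (β : ℕ → ℝ) (s : ℝ)
    (v : VV p) : ℝ :=
  if h : Pq v ≠ 0 ∧
      (∃ l : ℕ, ‖(d : ℚ_[p])‖ * mcoord (Fmap1 v) ^ 2 = ‖Pq v‖ * (p : ℝ) ^ (2 * l)) ∧
      (∃ l : ℕ, ‖(d : ℚ_[p])‖ * mcoord (Fmap2 v) ^ 2 = ‖Pq v‖ * (p : ℝ) ^ (2 * l)) then
    β h.2.1.choose * β h.2.2.choose * ‖Pq v‖ ^ (s - 2)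
  else 0

/-!
Almost every pair is given by its two first rows `y` together with the matrix `N` that maps first
rows to second rows. In these coordinates `P` is the discriminant of `N` times `det y ^ 2`, and the
two levels compare it with the coefficients of the characteristic polynomial of `N` and of the
binary quadratic form attached to `N`. Integrating out `y`, which runs through a lattice determined
by `N`, shows that the pairs of levels `(l₁, l₂)` contribute
`κ(s) * w l₁ * w l₂ * p ^ (-2 * s * max l₁ l₂)`, where `w l` is the relative measure of the points
of level `l`. Summing by the value of `max l₁ l₂` leaves the power series of the squares of the
partial sums `u n` of `w * β`. These satisfy `u (n + 2) = λ * u (n + 1) - p * u n`, so that this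
series is a rational function of `p ^ (-2 * s)`, with the symmetric square Euler factor as its
denominator.
-/

open Metric Set ENNReal Filter Topology
open scoped Pointwise

namespace LocalZeta

section General

theorem addHaar_eq_of_measure_eq_one {G : Type*} [AddGroup G] [TopologicalSpace G]
    [IsTopologicalAddGroup G] [LocallyCompactSpace G] [SecondCountableTopology G]
    [MeasurableSpace G] [BorelSpace G] (μ ν : Measure G) [μ.IsAddHaarMeasure]
    [ν.IsAddHaarMeasure] {K : Set G} (hμ : μ K = 1) (hν : ν K = 1) : μ = ν := by
  have hsmul := Measure.isAddLeftInvariant_eq_smul μ ν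
  have hK : μ K = μ.addHaarScalarFactor ν * ν K := by
    conv_lhs => rw [hsmul]
    rfl
  rw [hμ, hν, mul_one] at hK
  rw [hsmul, show μ.addHaarScalarFactor ν = 1 by exact_mod_cast hK.symm, one_smul]

theorem setLIntegral_comp_eq_tsum {α ι : Type*} [MeasurableSpace α] [Countable ι]
    {μ : Measure α} {N : α → ℝ} (hN : Measurable N) {r : ι → ℝ} (hr : r.Injective)
    {S : Set α} (hS : MeasurableSet S) (h : ∀ᵐ x ∂μ, x ∈ S → ∃ i, N x = r i)
    (φ : ℝ → ℝ≥0∞) :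
    ∫⁻ x in S, φ (N x) ∂μ = ∑' i, φ (r i) * μ (S ∩ {x | N x = r i}) := by
  have hm (i : ι) : MeasurableSet (S ∩ {x | N x = r i}) :=
    hS.inter (measurableSet_eq_fun hN measurable_const)
  have hunion : S =ᵐ[μ] ⋃ i, S ∩ {x | N x = r i} := by
    filter_upwards [h] with x hx
    simp only [← inter_iUnion, eq_iff_iff]
    exact ⟨fun hxS ↦ ⟨hxS, mem_iUnion.2 (hx hxS)⟩, fun hxS ↦ hxS.1⟩
  have hdisj : Pairwise (Function.onFun Disjoint fun i ↦ S ∩ {x | N x = r i}) :=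
    fun i j hij ↦ disjoint_left.2 fun x hi hj ↦ hij (hr (hi.2.symm.trans hj.2))
  rw [setLIntegral_congr hunion, lintegral_iUnion hm hdisj]
  refine tsum_congr fun i ↦ ?_
  rw [setLIntegral_congr_fun (hm i) (g := fun _ ↦ φ (r i)) fun x hx ↦ congrArg φ hx.2,
    setLIntegral_const]

end General

variable {p : ℕ} [Fact p.Prime]

section Haar

theorem one_lt_cast : (1 : ℝ) < p := mod_cast (Fact.out : p.Prime).one_lt

theorem cast_pos : (0 : ℝ) < p := one_pos.trans one_lt_cast

theorem cast_ne_zero : (p : ℚ_[p]) ≠ 0 := mod_cast (Fact.out : p.Prime).ne_zero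

variable (p) in
/-- The ring of integers of `ℚ_p` as a compact neighbourhood of `0`, used to normalise Haar
measure. -/
def unitBall : TopologicalSpace.PositiveCompacts ℚ_[p] :=
  ⟨⟨closedBall 0 1, isCompact_closedBall 0 1⟩, 0, ball_subset_interior_closedBall (by simp)⟩

/-- The Haar measure `dx` on `ℚ_p` giving `ℤ_p` volume `1`. It is registered as the volume, so
that products of copies of `ℚ_p` carry the product measure. -/
noncomputable instance : MeasureSpace ℚ_[p] := ⟨Measure.addHaarMeasure (unitBall p)⟩

instance : (volume : Measure ℚ_[p]).IsAddHaarMeasure :=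
  inferInstanceAs (Measure.addHaarMeasure (unitBall p)).IsAddHaarMeasure

instance : (volume : Measure ℚ_[p]).Regular :=
  inferInstanceAs (Measure.addHaarMeasure (unitBall p)).Regular

instance : SigmaFinite (volume : Measure ℚ_[p]) :=
  inferInstanceAs (SigmaFinite (Measure.addHaarMeasure (unitBall p)))

theorem volume_closedBall_one : volume (closedBall (0 : ℚ_[p]) 1) = 1 :=
  Measure.addHaarMeasure_self

theorem volume_setOf_norm_le_one : volume {x : ℚ_[p] | ‖x‖ ≤ 1} = 1 := by
  simpa [closedBall, dist_zero_right] using volume_closedBall_one (p := p)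

theorem closedBall_one_eq_iUnion :
    closedBall (0 : ℚ_[p]) 1 = ⋃ k ∈ Finset.range p, closedBall (k : ℚ_[p]) (p : ℝ)⁻¹ := by
  have hp : (p : ℝ)⁻¹ ≤ 1 := inv_le_one_of_one_le₀ one_lt_cast.le
  ext x
  simp only [mem_iUnion, Finset.mem_range, exists_prop]
  constructor
  · intro hx
    obtain ⟨x, rfl⟩ : ∃ y : ℤ_[p], (y : ℚ_[p]) = x := ⟨⟨x, by simpa using hx⟩, rfl⟩
    obtain ⟨hlt, -⟩ := PadicInt.zmodRepr_spec x
    refine ⟨_, hlt, ?_⟩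
    have hnorm : ‖x - x.zmodRepr‖ < (p : ℝ) ^ (-1 + 1 : ℤ) := by
      simpa using PadicInt.norm_sub_zmodRepr_lt_one x
    rw [← PadicInt.norm_le_pow_iff_norm_lt_pow_add_one] at hnorm
    simpa [dist_eq_norm, PadicInt.norm_def] using hnorm
  · rintro ⟨k, -, hk⟩
    have hk1 : (k : ℚ_[p]) ∈ closedBall 0 1 := by
      simpa using Padic.norm_int_le_one (p := p) k
    rw [IsUltrametricDist.closedBall_eq_of_mem hk1]
    exact closedBall_subset_closedBall hp hk

theorem pairwiseDisjoint_closedBall_natCast :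
    (Finset.range p : Set ℕ).PairwiseDisjoint
      fun k : ℕ ↦ closedBall (k : ℚ_[p]) (p : ℝ)⁻¹ := by
  intro k hk l hl hkl
  refine (IsUltrametricDist.closedBall_eq_or_disjoint _ _ _).resolve_left fun heq ↦ hkl ?_
  have hmem : (k : ℚ_[p]) ∈ closedBall (l : ℚ_[p]) (p : ℝ)⁻¹ :=
    heq ▸ mem_closedBall_self (inv_nonneg.2 cast_pos.le)
  have hlt : ‖((k - l : ℤ) : ℚ_[p])‖ < 1 := by
    push_cast
    exact (mem_closedBall_iff_norm.1 hmem).trans_lt (inv_lt_one_of_one_lt₀ one_lt_cast)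
  rw [Padic.norm_intCast_lt_one_iff] at hlt
  simp only [Finset.coe_range, mem_Iio] at hk hl
  have := Int.eq_zero_of_abs_lt_dvd hlt (abs_lt.2 (by omega))
  omega

theorem volume_closedBall_inv : volume (closedBall (0 : ℚ_[p]) (p : ℝ)⁻¹) = (p : ℝ≥0∞)⁻¹ := by
  have hsum : 1 = p * volume (closedBall (0 : ℚ_[p]) (p : ℝ)⁻¹) := by
    have htrans (k : ℕ) : volume (closedBall (k : ℚ_[p]) (p : ℝ)⁻¹) =
        volume (closedBall (0 : ℚ_[p]) (p : ℝ)⁻¹) := by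
      simpa [vadd_closedBall] using
        measure_vadd volume (k : ℚ_[p]) (closedBall (0 : ℚ_[p]) (p : ℝ)⁻¹)
    rw [← volume_closedBall_one (p := p), closedBall_one_eq_iUnion,
      measure_biUnion_finset pairwiseDisjoint_closedBall_natCast
        fun _ _ ↦ isClosed_closedBall.measurableSet]
    simp only [htrans, Finset.sum_const, Finset.card_range, nsmul_eq_mul]
  exact ENNReal.eq_inv_of_mul_eq_one_left (by rw [mul_comm, ← hsum])

theorem distribHaarChar_padic (u : ℚ_[p]ˣ) : distribHaarChar ℚ_[p] u = ‖(u : ℚ_[p])‖₊ := by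
  have hball : volume (closedBall (0 : ℚ_[p]) 1) ≠ 0 ∧ volume (closedBall (0 : ℚ_[p]) 1) ≠ ∞ := by
    simp [volume_closedBall_one]
  have hsmul (v : ℚ_[p]ˣ) : v • closedBall (0 : ℚ_[p]) 1 = closedBall 0 ‖(v : ℚ_[p])‖ := by
    rw [Units.smul_def, smul_closedBall' v.ne_zero, smul_zero, mul_one]
  have hunit (v : ℚ_[p]ˣ) (hv : ‖(v : ℚ_[p])‖ = 1) : distribHaarChar ℚ_[p] v = 1 :=
    distribHaarChar_eq_of_measure_smul_eq_mul hball.1 hball.2 (by rw [hsmul, hv]; simp)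
  have hp : distribHaarChar ℚ_[p] (Units.mk0 (p : ℚ_[p]) cast_ne_zero) = (p : NNReal)⁻¹ :=
    distribHaarChar_eq_of_measure_smul_eq_mul hball.1 hball.2 (by
      rw [hsmul, Units.val_mk0, Padic.norm_p, volume_closedBall_inv, volume_closedBall_one,
        mul_one, ENNReal.coe_inv (mod_cast (Fact.out : p.Prime).ne_zero), ENNReal.coe_natCast])
  obtain ⟨n, hn⟩ : ∃ n : ℤ, ‖(u : ℚ_[p])‖ = (p : ℝ) ^ (-n) :=
    ⟨_, Padic.norm_eq_zpow_neg_valuation u.ne_zero⟩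
  obtain ⟨v, hv⟩ : ∃ v, u = Units.mk0 (p : ℚ_[p]) cast_ne_zero ^ n * v :=
    ⟨_, (mul_inv_cancel_left _ _).symm⟩
  have hv1 : ‖(v : ℚ_[p])‖ = 1 := by
    have := congrArg (fun w : ℚ_[p]ˣ ↦ ‖(w : ℚ_[p])‖) hv
    simp only [hn, Units.val_mul, Units.val_zpow_eq_zpow_val, Units.val_mk0, norm_mul,
      Padic.norm_p_zpow] at this
    exact (mul_eq_left₀ (zpow_ne_zero _ cast_pos.ne')).1 this.symm
  rw [hv, map_mul, map_zpow, hp, hunit v hv1]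
  ext
  simp [hv1]

theorem ae_ne_zero : ∀ᵐ x : ℚ_[p], x ≠ 0 := by simp [ae_iff]

end Haar

section Substitution

theorem map_mul_left_volume {a : ℚ_[p]} (ha : a ≠ 0) :
    (volume : Measure ℚ_[p]).map (a * ·) = ‖a‖ₑ⁻¹ • volume := by
  ext s hs
  have hpre : (a * ·) ⁻¹' s = (Units.mk0 a ha)⁻¹ • s := by
    ext x
    rw [mem_inv_smul_set_iff]
    rfl
  rw [Measure.map_apply (measurable_const_mul a) hs, hpre, ← distribHaarChar_mul volume,
    map_inv, distribHaarChar_padic, Units.val_mk0, ENNReal.coe_inv (nnnorm_ne_zero_iff.2 ha)]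
  rfl

theorem lintegral_comp_mul_add {a : ℚ_[p]} (ha : a ≠ 0) (b : ℚ_[p]) (f : ℚ_[p] → ℝ≥0∞) :
    ∫⁻ x, f (a * x + b) = ‖a‖ₑ⁻¹ * ∫⁻ x, f x := by
  calc ∫⁻ x, f (a * x + b)
      = ∫⁻ x, f (x + b) ∂(volume.map (a * ·)) :=
        (lintegral_map_equiv (fun x ↦ f (x + b)) (MeasurableEquiv.mulLeft₀ a ha)).symm
    _ = ‖a‖ₑ⁻¹ * ∫⁻ x, f x := by
        rw [map_mul_left_volume ha, lintegral_smul_measure, lintegral_add_right_eq_self,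
          smul_eq_mul]

theorem volume_closedBall (x a : ℚ_[p]) : volume (closedBall x ‖a‖) = ‖a‖ₑ := by
  rcases eq_or_ne a 0 with rfl | ha
  · simp
  have hball : closedBall x ‖a‖ = x +ᵥ Units.mk0 a ha • closedBall (0 : ℚ_[p]) 1 := by
    simp [Units.smul_def, smul_closedBall' ha]
  rw [hball, measure_vadd, ← distribHaarChar_mul volume, distribHaarChar_padic,
    volume_closedBall_one, mul_one, Units.val_mk0]
  rfl

theorem norm_lt_norm_iff_le_norm_mul {x a : ℚ_[p]} (ha : a ≠ 0) : ‖x‖ < ‖a‖ ↔ ‖x‖ ≤ ‖p * a‖ := by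
  rw [norm_mul, Padic.norm_p, Padic.norm_eq_zpow_neg_valuation ha, ← _root_.zpow_neg_one,
    ← zpow_add₀ cast_pos.ne', Padic.norm_le_pow_iff_norm_lt_pow_add_one, neg_add_cancel_comm]

theorem volume_ball (x a : ℚ_[p]) : volume (ball x ‖a‖) = (p : ℝ≥0∞)⁻¹ * ‖a‖ₑ := by
  rcases eq_or_ne a 0 with rfl | ha
  · simp
  have hball : ball x ‖a‖ = closedBall x ‖p * a‖ := by
    ext y
    rw [mem_ball_iff_norm, mem_closedBall_iff_norm, norm_lt_norm_iff_le_norm_mul ha]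
  rw [hball, volume_closedBall, enorm_mul, ← ofReal_norm, Padic.norm_p,
    ENNReal.ofReal_inv_of_pos cast_pos, ENNReal.ofReal_natCast]

theorem volume_sphere (x a : ℚ_[p]) : volume (sphere x ‖a‖) = (1 - (p : ℝ≥0∞)⁻¹) * ‖a‖ₑ := by
  rw [← closedBall_sdiff_ball, measure_sdiff ball_subset_closedBall
    measurableSet_ball.nullMeasurableSet (by simp [volume_ball, ENNReal.mul_eq_top,
      (Fact.out : p.Prime).ne_zero]), volume_closedBall,
    volume_ball, ENNReal.sub_mul (by simp), one_mul]

theorem lintegral_comp_linear {a b c d : ℚ_[p]} (h : a * d - b * c ≠ 0)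
    {f : ℚ_[p] × ℚ_[p] → ℝ≥0∞} (hf : Measurable f) :
    ∫⁻ v : ℚ_[p] × ℚ_[p], f (a * v.1 + b * v.2, c * v.1 + d * v.2) =
      ‖a * d - b * c‖ₑ⁻¹ * ∫⁻ v, f v := by
  have hcomp (a b c d : ℚ_[p]) :
      Measurable fun v : ℚ_[p] × ℚ_[p] ↦ f (a * v.1 + b * v.2, c * v.1 + d * v.2) := by
    fun_prop
  wlog ha : a ≠ 0 generalizing a b c d
  · have hb : b ≠ 0 := by
      rintro rfl
      simp_all
    rw [Measure.volume_eq_prod, ← lintegral_prod_swap, ← Measure.volume_eq_prod]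
    rw [← neg_sub, neg_ne_zero] at h
    rw [← neg_sub, enorm_neg, ← this h hb]
    simp only [Prod.fst_swap, Prod.snd_swap, add_comm]
  calc ∫⁻ v : ℚ_[p] × ℚ_[p], f (a * v.1 + b * v.2, c * v.1 + d * v.2)
      = ∫⁻ y, ∫⁻ x, f (a * x + b * y, c / a * (a * x + b * y) + (a * d - b * c) / a * y) := by
        rw [Measure.volume_eq_prod, lintegral_prod_symm' _ (hcomp a b c d)]
        refine lintegral_congr fun y ↦ lintegral_congr fun x ↦ congrArg f (Prod.ext rfl ?_)
        field
    _ = ∫⁻ y, ‖a‖ₑ⁻¹ * ∫⁻ x, f (x, c / a * x + (a * d - b * c) / a * y) :=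
        lintegral_congr fun y ↦ lintegral_comp_mul_add ha (b * y)
          fun x ↦ f (x, c / a * x + (a * d - b * c) / a * y)
    _ = ‖a‖ₑ⁻¹ * ∫⁻ x, ∫⁻ y, f (x, (a * d - b * c) / a * y + c / a * x) := by
        rw [lintegral_const_mul _ (by fun_prop), lintegral_lintegral_swap (by fun_prop)]
        simp only [add_comm]
    _ = ‖a‖ₑ⁻¹ * ∫⁻ x, ‖(a * d - b * c) / a‖ₑ⁻¹ * ∫⁻ y, f (x, y) := by
        congr! with x
        exact lintegral_comp_mul_add (div_ne_zero h ha) _ fun y ↦ f (x, y)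
    _ = ‖a * d - b * c‖ₑ⁻¹ * ∫⁻ v, f v := by
        rw [lintegral_const_mul _ hf.lintegral_prod_right', ← mul_assoc,
          ← ENNReal.mul_inv (by simp [ha]) (by simp), ← enorm_mul, mul_div_cancel₀ _ ha,
          Measure.volume_eq_prod, lintegral_prod _ hf.aemeasurable]

end Substitution

section Squares

theorem norm_two (hp : Odd p) : ‖(2 : ℚ_[p])‖ = 1 :=
  mod_cast Padic.norm_natCast_eq_one_iff.2 hp.coprime_two_right

theorem toZMod_eq_zero_iff {x : ℤ_[p]} : x.toZMod = 0 ↔ ‖x‖ < 1 := by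
  rw [← RingHom.mem_ker, PadicInt.ker_toZMod, IsLocalRing.mem_maximalIdeal, PadicInt.mem_nonunits]

theorem toZMod_ne_zero_iff {x : ℤ_[p]} : x.toZMod ≠ 0 ↔ ‖x‖ = 1 := by
  rw [ne_eq, toZMod_eq_zero_iff, not_lt, (PadicInt.norm_le_one x).ge_iff_eq]

theorem isSquare_iff_isSquare_toZMod (hp : Odd p) {x : ℤ_[p]} (hx : ‖x‖ = 1) :
    IsSquare (x : ℚ_[p]) ↔ IsSquare x.toZMod := by
  constructor
  · rintro ⟨c, hc⟩
    have hc1 : ‖c‖ = 1 := by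
      have : ‖c‖ * ‖c‖ = 1 := by rw [← norm_mul, ← hc, ← PadicInt.norm_def, hx]
      nlinarith [norm_nonneg c]
    obtain ⟨c, rfl⟩ : ∃ z : ℤ_[p], (z : ℚ_[p]) = c := ⟨⟨c, hc1.le⟩, rfl⟩
    have hxc : x = c * c := PadicInt.ext hc
    exact ⟨_, by rw [hxc, map_mul]⟩
  · rintro ⟨y, hy⟩
    obtain ⟨w, rfl⟩ := ZMod.ringHom_surjective PadicInt.toZMod y
    have hw : ‖w‖ = 1 := by
      rw [← toZMod_ne_zero_iff] at hx ⊢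
      exact fun h ↦ hx (by rw [hy, h, zero_mul])
    have h2w : ‖2 * w‖ = 1 := by
      rw [norm_mul, hw, mul_one]
      exact norm_two hp
    have hclose : ‖w ^ 2 - x‖ < 1 := by
      rw [← toZMod_eq_zero_iff, map_sub, map_pow, hy, sq, sub_self]
    obtain ⟨z, hz, -⟩ := hensels_lemma (R := ℤ_[p]) (F := Polynomial.X ^ 2 - Polynomial.C x)
      (a := w) (by simpa [one_add_one_eq_two, h2w, ← norm_mul] using hclose)
    have hzx : z ^ 2 = x := by simpa [sub_eq_zero] using hz
    exact ⟨z, by rw [← hzx, sq, PadicInt.coe_mul]⟩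

theorem isSquare_of_norm_sub_lt (hp : Odd p) {x y : ℚ_[p]} (hy : IsSquare y)
    (h : ‖x - y‖ < ‖y‖) : IsSquare x := by
  have hy0 : y ≠ 0 := by
    rintro rfl
    exact absurd h (by simp)
  have hdiv : ‖x / y‖ = 1 := by
    rw [norm_div, Padic.norm_eq_of_norm_sub_lt_right h, div_self (norm_ne_zero_iff.2 hy0)]
  obtain ⟨z, hz⟩ : ∃ z : ℤ_[p], (z : ℚ_[p]) = x / y := ⟨⟨x / y, hdiv.le⟩, rfl⟩
  rw [← hz, ← PadicInt.norm_def] at hdiv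
  have hres : z.toZMod = 1 := by
    rw [← sub_eq_zero, ← map_one (PadicInt.toZMod (p := p)), ← map_sub, toZMod_eq_zero_iff,
      PadicInt.norm_def, PadicInt.coe_sub, hz, PadicInt.coe_one, div_sub_one hy0, norm_div,
      div_lt_one (norm_pos_iff.2 hy0)]
    exact h
  have hsq : IsSquare (x / y) :=
    hz ▸ (isSquare_iff_isSquare_toZMod hp hdiv).2 (hres ▸ IsSquare.one)
  simpa [hy0] using hsq.mul hy

theorem isSquare_mul_of_not_isSquare (hp : Odd p) {x y : ℚ_[p]} (hx : ‖x‖ = 1) (hy : ‖y‖ = 1)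
    (hxs : ¬IsSquare x) (hys : ¬IsSquare y) : IsSquare (x * y) := by
  obtain ⟨x, rfl⟩ : ∃ z : ℤ_[p], (z : ℚ_[p]) = x := ⟨⟨x, hx.le⟩, rfl⟩
  obtain ⟨y, rfl⟩ : ∃ z : ℤ_[p], (z : ℚ_[p]) = y := ⟨⟨y, hy.le⟩, rfl⟩
  rw [← PadicInt.norm_def] at hx hy
  rw [isSquare_iff_isSquare_toZMod hp hx] at hxs
  rw [isSquare_iff_isSquare_toZMod hp hy] at hys
  have hxy : ‖x * y‖ = 1 := by rw [norm_mul, hx, hy, one_mul]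
  rw [← PadicInt.coe_mul, isSquare_iff_isSquare_toZMod hp hxy,
    ← quadraticChar_one_iff_isSquare (toZMod_ne_zero_iff.2 hxy), map_mul, map_mul,
    quadraticChar_neg_one_iff_not_isSquare.2 hxs, quadraticChar_neg_one_iff_not_isSquare.2 hys]
  rfl

theorem exists_norm_eq_one_not_isSquare (hp : Odd p) :
    ∃ η : ℚ_[p], ‖η‖ = 1 ∧ ¬IsSquare η := by
  have hchar : ringChar (ZMod p) ≠ 2 := by
    rw [ZMod.ringChar_zmod_n]
    rintro rfl
    exact absurd hp (by decide)
  obtain ⟨a, ha⟩ := FiniteField.exists_nonsquare hchar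
  obtain ⟨η, rfl⟩ := ZMod.ringHom_surjective PadicInt.toZMod a
  have hη : ‖η‖ = 1 := toZMod_ne_zero_iff.1 fun h ↦ ha (h ▸ IsSquare.zero)
  exact ⟨η, hη, by rwa [isSquare_iff_isSquare_toZMod hp hη]⟩

theorem measurableSet_isSquare (hp : Odd p) : MeasurableSet {t : ℚ_[p] | IsSquare t} := by
  have hopen : IsOpen ({t : ℚ_[p] | IsSquare t} \ {0}) := by
    refine Metric.isOpen_iff.2 fun t ht ↦ ⟨‖t‖, norm_pos_iff.2 ht.2, fun x hx ↦ ?_⟩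
    have hlt := mem_ball_iff_norm.1 hx
    refine ⟨isSquare_of_norm_sub_lt hp ht.1 hlt, ?_⟩
    rintro rfl
    exact absurd hlt (by simp)
  have hinsert : {t : ℚ_[p] | IsSquare t} = insert 0 ({t : ℚ_[p] | IsSquare t} \ {0}) := by
    rw [insert_sdiff_singleton, insert_eq_of_mem]
    exact IsSquare.zero
  rw [hinsert]
  exact hopen.measurableSet.insert 0

theorem volume_isSquare_inter_unitSphere (hp : Odd p) :
    volume ({t : ℚ_[p] | IsSquare t} ∩ sphere 0 1) = 2⁻¹ * (1 - (p : ℝ≥0∞)⁻¹) := by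
  obtain ⟨η, hη, hηs⟩ := exists_norm_eq_one_not_isSquare hp
  have hη0 : η ≠ 0 := norm_ne_zero_iff.1 (by simp [hη])
  have hnonsq : sphere (0 : ℚ_[p]) 1 \ {t | IsSquare t} =
      Units.mk0 η hη0 • ({t : ℚ_[p] | IsSquare t} ∩ sphere 0 1) := by
    ext x
    have hsq : IsSquare η⁻¹ → IsSquare η := fun h ↦ by simpa using h.inv
    rw [mem_smul_set_iff_inv_smul_mem]
    simp only [Set.mem_sdiff, mem_sphere_zero_iff_norm, mem_ofPred_eq, mem_inter_iff,
      Units.smul_def, Units.val_inv_eq_inv_val, Units.val_mk0, smul_eq_mul, norm_mul, norm_inv, hη,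
      inv_one, one_mul]
    rw [and_comm]
    refine and_congr_left fun hx ↦ ⟨fun h ↦ isSquare_mul_of_not_isSquare hp (by simp [hη]) hx
      (mt hsq hηs) h, fun h hxs ↦ ?_⟩
    have hx0 : x ≠ 0 := norm_ne_zero_iff.1 (by simp [hx])
    exact hηs (hsq (by simpa [hx0] using h.div hxs))
  have hhalf : 1 - (p : ℝ≥0∞)⁻¹ = 2 * volume ({t : ℚ_[p] | IsSquare t} ∩ sphere 0 1) := by
    have hsphere := volume_sphere (0 : ℚ_[p]) 1
    rw [norm_one, enorm_one, mul_one] at hsphere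
    rw [← hsphere, ← measure_sdiff_add_inter _ (measurableSet_isSquare hp), hnonsq,
      ← distribHaarChar_mul volume, distribHaarChar_padic, Units.val_mk0, inter_comm, two_mul,
      show ‖η‖₊ = 1 from NNReal.eq hη, ENNReal.coe_one, one_mul]
  rw [hhalf, ← mul_assoc, ENNReal.inv_mul_cancel (by simp) (by simp), one_mul]

theorem volume_isSquare_inter_sphere (hp : Odd p) {a : ℚ_[p]} (ha : a ≠ 0) :
    volume ({t : ℚ_[p] | IsSquare t} ∩ {t | ‖t‖ = ‖a‖ ^ 2}) =
      2⁻¹ * (1 - (p : ℝ≥0∞)⁻¹) * ‖a‖ₑ ^ 2 := by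
  have hscale : {t : ℚ_[p] | IsSquare t} ∩ {t | ‖t‖ = ‖a‖ ^ 2} =
      Units.mk0 (a ^ 2) (pow_ne_zero 2 ha) • ({t : ℚ_[p] | IsSquare t} ∩ sphere 0 1) := by
    ext x
    have hsq : IsSquare ((a ^ 2)⁻¹ * x) ↔ IsSquare x :=
      ⟨fun h ↦ by simpa [ha] using (IsSquare.sq a).mul h, fun h ↦ (IsSquare.sq a).inv.mul h⟩
    rw [mem_smul_set_iff_inv_smul_mem]
    simp only [mem_inter_iff, mem_ofPred_eq, Units.smul_def,
      Units.val_inv_eq_inv_val, Units.val_mk0, smul_eq_mul, mem_sphere_zero_iff_norm, norm_mul,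
      norm_inv, norm_pow, hsq]
    rw [inv_mul_eq_one₀ (by simpa using ha), eq_comm]
  rw [hscale, ← distribHaarChar_mul volume, distribHaarChar_padic,
    volume_isSquare_inter_unitSphere hp, mul_comm, Units.val_mk0, nnnorm_pow, ENNReal.coe_pow]
  rfl

theorem injective_norm_p_zpow : Function.Injective fun n : ℤ ↦ ‖(p : ℚ_[p]) ^ n‖ := by
  simpa [Padic.norm_p_zpow, ← _root_.inv_zpow'] using
    zpow_right_injective₀ (inv_pos.2 cast_pos) (inv_ne_one.2 (one_lt_cast (p := p)).ne')

theorem exists_norm_eq_norm_p_zpow {x : ℚ_[p]} (hx : x ≠ 0) :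
    ∃ n : ℤ, ‖x‖ = ‖(p : ℚ_[p]) ^ n‖ :=
  ⟨x.valuation, by rw [Padic.norm_p_zpow, Padic.norm_eq_zpow_neg_valuation hx]⟩

theorem setLIntegral_isSquare (hp : Odd p) {Φ : ℚ_[p] → ℝ≥0∞}
    (hΦ : ∀ x y, ‖x‖ = ‖y‖ → Φ (x ^ 2) = Φ (y ^ 2)) :
    ∫⁻ t in {t : ℚ_[p] | IsSquare t}, Φ t = 2⁻¹ * ∫⁻ m : ℚ_[p], ‖m‖ₑ * Φ (m ^ 2) := by
  obtain ⟨φ, hφ⟩ : ∃ φ : ℝ → ℝ≥0∞, ∀ m : ℚ_[p], Φ (m ^ 2) = φ ‖m‖ :=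
    ⟨_, fun m ↦ ((Function.FactorsThrough.extend_apply (fun x y ↦ hΦ x y) 0 m)).symm⟩
  have hr : Function.Injective fun n : ℤ ↦ ‖(p : ℚ_[p]) ^ n‖ ^ 2 := fun m n h ↦
    injective_norm_p_zpow ((pow_left_inj₀ (norm_nonneg _) (norm_nonneg _) two_ne_zero).1 h)
  have hpn (n : ℤ) : (p : ℚ_[p]) ^ n ≠ 0 := zpow_ne_zero n cast_ne_zero
  have hsqrt : ∫⁻ t in {t : ℚ_[p] | IsSquare t}, Φ t =
      ∫⁻ t in {t : ℚ_[p] | IsSquare t}, φ √‖t‖ := by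
    refine setLIntegral_congr_fun (measurableSet_isSquare hp) ?_
    rintro _ ⟨m, rfl⟩
    simp only [← sq, hφ, norm_pow, Real.sqrt_sq (norm_nonneg m)]
  rw [hsqrt, setLIntegral_comp_eq_tsum measurable_norm hr (measurableSet_isSquare hp)
    (ae_ne_zero.mono fun t ht ⟨m, hm⟩ ↦ ?_) fun r ↦ φ √r]
  · have hright : ∫⁻ m : ℚ_[p], ‖m‖ₑ * Φ (m ^ 2) =
        ∑' n : ℤ, ‖(p : ℚ_[p]) ^ n‖ₑ * φ ‖(p : ℚ_[p]) ^ n‖ *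
          volume (sphere (0 : ℚ_[p]) ‖(p : ℚ_[p]) ^ n‖) := by
      have := setLIntegral_comp_eq_tsum (μ := volume) measurable_norm
        (injective_norm_p_zpow (p := p)) MeasurableSet.univ
        (ae_ne_zero.mono fun m hm _ ↦ exists_norm_eq_norm_p_zpow hm) fun r ↦ .ofReal r * φ r
      simpa only [hφ, setLIntegral_univ, ofReal_norm, univ_inter, ← mem_sphere_zero_iff_norm,
        ofPred_mem_eq] using this
    rw [hright, ← ENNReal.tsum_mul_left]
    refine tsum_congr fun n ↦ ?_
    rw [volume_isSquare_inter_sphere hp (hpn n), volume_sphere, Real.sqrt_sq (norm_nonneg _)]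
    ring
  · obtain ⟨n, hn⟩ := exists_norm_eq_norm_p_zpow (x := m) (by rintro rfl; simp_all)
    exact ⟨n, by rw [hm, norm_mul, hn, sq]⟩

end Squares

section Polar

/-- A quarter of the discriminant `(a - d)² + 4bc` of the matrix `!![a, b; c, d]`, in terms of
`(b, (a - d) / 2, c)`. -/
noncomputable def quarterDisc (x : ℚ_[p] × ℚ_[p] × ℚ_[p]) : ℚ_[p] := x.2.1 ^ 2 + x.1 * x.2.2

variable (p) in
/-- The triples with nonzero square `quarterDisc` whose level, in the sense of `fs`, is `l`. -/
def levelSet (l : ℕ) : Set (ℚ_[p] × ℚ_[p] × ℚ_[p]) :=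
  {x | IsSquare (quarterDisc x) ∧ quarterDisc x ≠ 0 ∧
    mcoord x ^ 2 = ‖quarterDisc x‖ * (p : ℝ) ^ (2 * l)}

variable (p) in
/-- The measure of the points of level `l`, relative to that of the points of level `0`. -/
noncomputable def levelWeight (l : ℕ) : ℝ≥0∞ := if l = 0 then 1 else (1 - (p : ℝ≥0∞)⁻¹) * p ^ l

@[fun_prop]
theorem measurable_quarterDisc :
    Measurable (quarterDisc : ℚ_[p] × ℚ_[p] × ℚ_[p] → ℚ_[p]) := by
  unfold quarterDisc
  fun_prop

theorem quarterDisc_swap (x : ℚ_[p] × ℚ_[p] × ℚ_[p]) :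
    quarterDisc (x.2.2, x.2.1, x.1) = quarterDisc x := by
  simp only [quarterDisc, mul_comm]

theorem mcoord_swap (x : ℚ_[p] × ℚ_[p] × ℚ_[p]) : mcoord (x.2.2, x.2.1, x.1) = mcoord x := by
  grind [mcoord]

theorem measurePreserving_swap_fst_trd :
    MeasurePreserving fun x : ℚ_[p] × ℚ_[p] × ℚ_[p] ↦ (x.2.2, x.2.1, x.1) :=
  (measurePreserving_prodAssoc _ _ _).comp
    ((Measure.measurePreserving_swap.prod (.id _)).comp Measure.measurePreserving_swap)

theorem setLIntegral_comp_quarterDisc {B : Set (ℚ_[p] × ℚ_[p])} (hB : MeasurableSet B)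
    {κ : ℝ≥0∞} (hκ : ∀ b, volume {ε | (b, ε) ∈ B} = κ * ‖b‖ₑ) {g : ℚ_[p] × ℚ_[p] → ℝ≥0∞}
    (hg : Measurable g) :
    ∫⁻ x in {x : ℚ_[p] × ℚ_[p] × ℚ_[p] | (x.1, x.2.1) ∈ B}, g (x.1, quarterDisc x) =
      κ * ∫⁻ t, ∫⁻ b, g (b, t) := by
  have hB' : MeasurableSet {x : ℚ_[p] × ℚ_[p] × ℚ_[p] | (x.1, x.2.1) ∈ B} :=
    hB.preimage (by fun_prop)
  calc ∫⁻ x in {x : ℚ_[p] × ℚ_[p] × ℚ_[p] | (x.1, x.2.1) ∈ B}, g (x.1, quarterDisc x)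
      = ∫⁻ x : ℚ_[p] × ℚ_[p] × ℚ_[p], B.indicator 1 (x.1, x.2.1) * g (x.1, quarterDisc x) := by
        rw [← lintegral_indicator hB']
        refine lintegral_congr fun x ↦ ?_
        by_cases hx : (x.1, x.2.1) ∈ B <;> simp [hx]
    _ = ∫⁻ b, ∫⁻ ε, B.indicator 1 (b, ε) * ∫⁻ c, g (b, b * c + ε ^ 2) := by
        rw [Measure.volume_eq_prod, lintegral_prod _ (by fun_prop)]
        refine lintegral_congr fun b ↦ ?_
        rw [Measure.volume_eq_prod, lintegral_prod _ (by fun_prop)]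
        refine lintegral_congr fun ε ↦ ?_
        simp only [quarterDisc, add_comm]
        rw [lintegral_const_mul _ (by fun_prop)]
    _ = ∫⁻ b, ∫⁻ ε, B.indicator 1 (b, ε) * (‖b‖ₑ⁻¹ * ∫⁻ t, g (b, t)) :=
        lintegral_congr_ae (ae_ne_zero.mono fun b hb ↦ lintegral_congr fun ε ↦ congrArg _ <|
          lintegral_comp_mul_add hb _ fun t ↦ g (b, t))
    _ = ∫⁻ b, κ * ∫⁻ t, g (b, t) := by
        refine lintegral_congr_ae (ae_ne_zero.mono fun b hb ↦ ?_)
        have hfib : ∫⁻ ε, B.indicator (1 : ℚ_[p] × ℚ_[p] → ℝ≥0∞) (b, ε) = κ * ‖b‖ₑ := by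
          rw [← hκ]
          exact lintegral_indicator_one (hB.preimage measurable_prodMk_left)
        dsimp only
        rw [lintegral_mul_const _ (by fun_prop), hfib, mul_assoc,
          ENNReal.mul_inv_cancel_left (by simpa using hb) (by simp)]
    _ = κ * ∫⁻ t, ∫⁻ b, g (b, t) := by
        rw [lintegral_const_mul _ (by fun_prop), lintegral_lintegral_swap (by fun_prop)]

theorem enorm_p_zpow_neg (l : ℕ) : ‖(p : ℚ_[p]) ^ (-(l : ℤ))‖ₑ = (p : ℝ≥0∞) ^ l := by
  rw [← ofReal_norm, Padic.norm_p_zpow, neg_neg, zpow_natCast, ENNReal.ofReal_pow cast_pos.le,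
    ENNReal.ofReal_natCast]

theorem volume_setOf_norm_sq_eq (m : ℚ_[p]) (l : ℕ) :
    volume {b : ℚ_[p] | ‖b‖ ^ 2 = ‖m ^ 2‖ * (p : ℝ) ^ (2 * l)} =
      (1 - (p : ℝ≥0∞)⁻¹) * (‖m‖ₑ * p ^ l) := by
  have hsphere : {b : ℚ_[p] | ‖b‖ ^ 2 = ‖m ^ 2‖ * (p : ℝ) ^ (2 * l)} =
      sphere 0 ‖m * (p : ℚ_[p]) ^ (-(l : ℤ))‖ := by
    ext b
    rw [mem_ofPred_eq, mem_sphere_zero_iff_norm, norm_mul, Padic.norm_p_zpow, neg_neg,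
      zpow_natCast, norm_pow, mul_comm 2 l, pow_mul, ← mul_pow,
      pow_left_inj₀ (norm_nonneg b) (by positivity) two_ne_zero]
  rw [hsphere, volume_sphere, enorm_mul, enorm_p_zpow_neg]

variable (p) in
/-- The pairs `(b, t)` with `t` a square and `|b| = p ^ l |t|^(1/2)`: where `b` is an entry of
largest absolute value, they are the image of `levelSet p l` under `x ↦ (b, quarterDisc x)`. -/
def squareLevel (l : ℕ) : Set (ℚ_[p] × ℚ_[p]) :=
  {z | IsSquare z.2 ∧ ‖z.1‖ ^ 2 = ‖z.2‖ * (p : ℝ) ^ (2 * l)}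

theorem measurableSet_squareLevel (hp : Odd p) (l : ℕ) : MeasurableSet (squareLevel p l) :=
  ((measurableSet_isSquare hp).preimage (by fun_prop)).inter
    (measurableSet_eq_fun (by fun_prop) (by fun_prop))

theorem lintegral_squareLevel (hp : Odd p) {Φ : ℚ_[p] → ℝ≥0∞}
    (hΦ : ∀ x y, ‖x‖ = ‖y‖ → Φ (x ^ 2) = Φ (y ^ 2)) (l : ℕ) :
    ∫⁻ t, ∫⁻ b, (squareLevel p l).indicator (fun z ↦ Φ z.2) (b, t) =
      2⁻¹ * ((1 - (p : ℝ≥0∞)⁻¹) * p ^ l) * ∫⁻ m, ‖m‖ₑ ^ 2 * Φ (m ^ 2) := by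
  have hsq (t : ℚ_[p]) : MeasurableSet {b : ℚ_[p] | ‖b‖ ^ 2 = ‖t‖ * (p : ℝ) ^ (2 * l)} :=
    measurableSet_eq_fun (by fun_prop) (by fun_prop)
  calc ∫⁻ t, ∫⁻ b, (squareLevel p l).indicator (fun z ↦ Φ z.2) (b, t)
      = ∫⁻ t in {t | IsSquare t},
          Φ t * volume {b : ℚ_[p] | ‖b‖ ^ 2 = ‖t‖ * (p : ℝ) ^ (2 * l)} := by
        rw [← lintegral_indicator (measurableSet_isSquare hp)]
        refine lintegral_congr fun t ↦ ?_
        by_cases ht : IsSquare t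
        · rw [indicator_of_mem (mem_ofPred.2 ht), ← lintegral_indicator_const (hsq t)]
          refine lintegral_congr fun b ↦ ?_
          by_cases hb : ‖b‖ ^ 2 = ‖t‖ * (p : ℝ) ^ (2 * l) <;> simp [squareLevel, ht, hb]
        · simp [squareLevel, ht]
    _ = 2⁻¹ * ∫⁻ m, ‖m‖ₑ * (Φ (m ^ 2) * ((1 - (p : ℝ≥0∞)⁻¹) * (‖m‖ₑ * p ^ l))) := by
        rw [setLIntegral_isSquare hp fun x y hxy ↦ by
          simp only [hΦ x y hxy, volume_setOf_norm_sq_eq, ← ofReal_norm, hxy]]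
        simp only [volume_setOf_norm_sq_eq]
    _ = 2⁻¹ * ((1 - (p : ℝ≥0∞)⁻¹) * p ^ l) * ∫⁻ m, ‖m‖ₑ ^ 2 * Φ (m ^ 2) := by
        rw [mul_assoc, ← lintegral_const_mul' (_ * _) _ (by finiteness)]
        congr! 3 with m
        ring

theorem setLIntegral_squareLevel (hp : Odd p) {B : Set (ℚ_[p] × ℚ_[p])} (hB : MeasurableSet B)
    {κ : ℝ≥0∞} (hκ : ∀ b, volume {ε | (b, ε) ∈ B} = κ * ‖b‖ₑ) {Φ : ℚ_[p] → ℝ≥0∞}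
    (hΦm : Measurable Φ) (hΦ : ∀ x y, ‖x‖ = ‖y‖ → Φ (x ^ 2) = Φ (y ^ 2)) (l : ℕ) :
    ∫⁻ x in {x | (x.1, x.2.1) ∈ B ∧ (x.1, quarterDisc x) ∈ squareLevel p l}, Φ (quarterDisc x) =
      κ * (2⁻¹ * ((1 - (p : ℝ≥0∞)⁻¹) * p ^ l) * ∫⁻ m, ‖m‖ₑ ^ 2 * Φ (m ^ 2)) := by
  have hS : MeasurableSet {x : ℚ_[p] × ℚ_[p] × ℚ_[p] | (x.1, quarterDisc x) ∈ squareLevel p l} :=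
    (measurableSet_squareLevel hp l).preimage (by fun_prop)
  rw [← lintegral_squareLevel hp hΦ, ← setLIntegral_comp_quarterDisc hB hκ
    (g := (squareLevel p l).indicator fun z ↦ Φ z.2)
    ((hΦm.comp measurable_snd).indicator (measurableSet_squareLevel hp l))]
  exact (inter_comm _ _ ▸ setLIntegral_indicator hS _).symm

theorem norm_trd_le {x : ℚ_[p] × ℚ_[p] × ℚ_[p]} (hb : x.1 ≠ 0) (hε : ‖x.2.1‖ ≤ ‖x.1‖)
    (ht : ‖quarterDisc x‖ ≤ ‖x.1‖ ^ 2) : ‖x.2.2‖ ≤ ‖x.1‖ := by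
  have hbc : ‖x.1‖ * ‖x.2.2‖ ≤ ‖x.1‖ * ‖x.1‖ := by
    calc ‖x.1‖ * ‖x.2.2‖ = ‖quarterDisc x - x.2.1 ^ 2‖ := by
          rw [quarterDisc, add_sub_cancel_left, norm_mul]
      _ ≤ max ‖quarterDisc x‖ ‖x.2.1 ^ 2‖ := by
          simpa only [sub_eq_add_neg, norm_neg] using
            IsUltrametricDist.norm_add_le_max (quarterDisc x) (-(x.2.1 ^ 2))
      _ ≤ ‖x.1‖ * ‖x.1‖ := by
          rw [← sq]
          exact max_le ht (by rw [norm_pow]; gcongr)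
  exact le_of_mul_le_mul_left hbc (norm_pos_iff.2 hb)

theorem norm_mul_lt_sq {x : ℚ_[p] × ℚ_[p] × ℚ_[p]} (hb : ‖x.1‖ < ‖x.2.1‖)
    (hc : ‖x.2.2‖ ≤ ‖x.2.1‖) : ‖quarterDisc x - x.2.1 ^ 2‖ < ‖x.2.1 ^ 2‖ := by
  rw [quarterDisc, add_sub_cancel_left, norm_mul, norm_pow, sq]
  exact mul_lt_mul_of_nonneg_of_pos hb hc (norm_nonneg _) ((norm_nonneg _).trans_lt hb)

theorem norm_quarterDisc_lt {x : ℚ_[p] × ℚ_[p] × ℚ_[p]} (hb : ‖x.1‖ < ‖x.2.2‖)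
    (hε : ‖x.2.1‖ < ‖x.2.2‖) : ‖quarterDisc x‖ < ‖x.2.2‖ ^ 2 := by
  refine (IsUltrametricDist.norm_add_le_max _ _).trans_lt (max_lt ?_ ?_)
  · rw [norm_pow]
    gcongr
  · rw [norm_mul, sq]
    exact mul_lt_mul_of_pos_right hb ((norm_nonneg _).trans_lt hb)

theorem mem_levelSet_of_mem_squareLevel {x : ℚ_[p] × ℚ_[p] × ℚ_[p]} (hb : x.1 ≠ 0) {l : ℕ}
    (hε : ‖x.2.1‖ ≤ ‖x.1‖) (hx : (x.1, quarterDisc x) ∈ squareLevel p l) : x ∈ levelSet p l := by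
  have hone : (1 : ℝ) ≤ (p : ℝ) ^ (2 * l) := one_le_pow₀ one_lt_cast.le
  have hc : ‖x.2.2‖ ≤ ‖x.1‖ := norm_trd_le hb hε <|
    (le_mul_of_one_le_right (norm_nonneg _) hone).trans hx.2.ge
  refine ⟨hx.1, fun h ↦ hb ?_, ?_⟩
  · simpa [h] using hx.2
  · rw [mcoord, max_eq_left hε, max_eq_left hc]
    exact hx.2

theorem mcoord_eq_of_norm_le (x : ℚ_[p] × ℚ_[p] × ℚ_[p]) :
    (‖x.2.1‖ ≤ ‖x.1‖ ∧ mcoord x = ‖x.1‖) ∨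
      (‖x.1‖ < ‖x.2.2‖ ∧ ‖x.2.1‖ < ‖x.2.2‖ ∧ mcoord x = ‖x.2.2‖) ∨
      (‖x.1‖ < ‖x.2.1‖ ∧ ‖x.2.2‖ ≤ ‖x.2.1‖ ∧ mcoord x = ‖x.2.1‖) := by
  grind [mcoord]

theorem mem_levelSet_zero_iff (hp : Odd p) {x : ℚ_[p] × ℚ_[p] × ℚ_[p]} (hb : x.1 ≠ 0) :
    x ∈ levelSet p 0 ↔ (‖x.2.1‖ ≤ ‖x.1‖ ∧ (x.1, quarterDisc x) ∈ squareLevel p 0) ∨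
      (‖x.1‖ < ‖x.2.1‖ ∧ ‖x.2.2‖ ≤ ‖x.2.1‖) := by
  constructor
  · rintro ⟨hsq, -, hlevel⟩
    rcases mcoord_eq_of_norm_le x with ⟨hε, hm⟩ | ⟨hbc, hεc, hm⟩ | ⟨hbε, hcε, -⟩
    · exact .inl ⟨hε, hsq, hm ▸ hlevel⟩
    · rw [hm, mul_zero, pow_zero, mul_one] at hlevel
      exact absurd hlevel (norm_quarterDisc_lt hbc hεc).ne'
    · exact .inr ⟨hbε, hcε⟩
  · rintro (⟨hε, hx⟩ | ⟨hbε, hcε⟩)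
    · exact mem_levelSet_of_mem_squareLevel hb hε hx
    · have hclose := norm_mul_lt_sq hbε hcε
      have hnorm := Padic.norm_eq_of_norm_sub_lt_right hclose
      have hε0 : x.2.1 ≠ 0 := norm_pos_iff.1 ((norm_nonneg _).trans_lt hbε)
      refine ⟨isSquare_of_norm_sub_lt hp (.sq _) hclose, ?_, ?_⟩
      · rw [← norm_ne_zero_iff, hnorm]
        simpa using hε0
      · rw [hnorm, mcoord, max_eq_right hbε.le, max_eq_left hcε]
        simp

theorem mem_levelSet_iff_of_ne_zero {x : ℚ_[p] × ℚ_[p] × ℚ_[p]} (hb : x.1 ≠ 0) (hc : x.2.2 ≠ 0)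
    {l : ℕ} (hl : l ≠ 0) :
    x ∈ levelSet p l ↔ (‖x.2.1‖ ≤ ‖x.1‖ ∧ (x.1, quarterDisc x) ∈ squareLevel p l) ∨
      (‖x.2.1‖ < ‖x.2.2‖ ∧ (x.2.2, quarterDisc x) ∈ squareLevel p l) := by
  constructor
  · rintro ⟨hsq, -, hlevel⟩
    rcases mcoord_eq_of_norm_le x with ⟨hε, hm⟩ | ⟨-, hεc, hm⟩ | ⟨hbε, hcε, hm⟩
    · exact .inl ⟨hε, hsq, hm ▸ hlevel⟩
    · exact .inr ⟨hεc, hsq, hm ▸ hlevel⟩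
    · rw [hm, Padic.norm_eq_of_norm_sub_lt_right (norm_mul_lt_sq hbε hcε), norm_pow] at hlevel
      have hε0 : ‖x.2.1‖ ^ 2 ≠ 0 := pow_ne_zero 2 ((norm_nonneg _).trans_lt hbε).ne'
      exact absurd ((mul_eq_left₀ hε0).1 hlevel.symm)
        (one_lt_pow₀ one_lt_cast (mul_ne_zero two_ne_zero hl)).ne'
  · rintro (⟨hε, hx⟩ | ⟨hε, hx⟩)
    · exact mem_levelSet_of_mem_squareLevel hb hε hx
    · have := mem_levelSet_of_mem_squareLevel (x := (x.2.2, x.2.1, x.1)) hc hε.le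
        (by rwa [quarterDisc_swap])
      rw [levelSet, mem_ofPred_eq, quarterDisc_swap] at this
      refine ⟨this.1, this.2.1, ?_⟩
      rw [← this.2.2, mcoord_swap]

theorem disjoint_squareLevel {l : ℕ} (hl : l ≠ 0) :
    Disjoint {x | ‖x.2.1‖ ≤ ‖x.1‖ ∧ (x.1, quarterDisc x) ∈ squareLevel p l}
      {x | ‖x.2.1‖ < ‖x.2.2‖ ∧ (x.2.2, quarterDisc x) ∈ squareLevel p l} := by
  refine disjoint_left.2 fun x ⟨_, hb⟩ ⟨hε, hc⟩ ↦ ?_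
  have hbc : ‖x.1‖ = ‖x.2.2‖ :=
    (pow_left_inj₀ (norm_nonneg _) (norm_nonneg _) two_ne_zero).1 (hb.2.trans hc.2.symm)
  have hclose : ‖quarterDisc x - x.1 * x.2.2‖ < ‖x.1 * x.2.2‖ := by
    rw [quarterDisc, add_sub_cancel_right, norm_mul, hbc, ← sq, norm_pow]
    gcongr
  have hnorm := Padic.norm_eq_of_norm_sub_lt_right hclose
  have hlevel : ‖x.2.2‖ ^ 2 = ‖x.2.2‖ ^ 2 * (p : ℝ) ^ (2 * l) := by
    simpa [hnorm, hbc, ← sq] using hc.2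
  exact absurd ((mul_eq_left₀ (pow_ne_zero 2 ((norm_nonneg _).trans_lt hε).ne')).1 hlevel.symm)
    (one_lt_pow₀ one_lt_cast (mul_ne_zero two_ne_zero hl)).ne'

theorem setLIntegral_norm_lt_of_norm_le {Ψ : ℚ_[p] → ℝ≥0∞} (hΨ : Measurable Ψ) :
    ∫⁻ x in {x : ℚ_[p] × ℚ_[p] × ℚ_[p] | ‖x.1‖ < ‖x.2.1‖ ∧ ‖x.2.2‖ ≤ ‖x.2.1‖}, Ψ x.2.1 =
      (p : ℝ≥0∞)⁻¹ * ∫⁻ ε, ‖ε‖ₑ ^ 2 * Ψ ε := by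
  have hm : MeasurableSet {x : ℚ_[p] × ℚ_[p] × ℚ_[p] | ‖x.1‖ < ‖x.2.1‖ ∧ ‖x.2.2‖ ≤ ‖x.2.1‖} := by
    measurability
  set R : Set (ℚ_[p] × ℚ_[p] × ℚ_[p]) := {x | ‖x.1‖ < ‖x.2.1‖ ∧ ‖x.2.2‖ ≤ ‖x.2.1‖}
  have hf : Measurable (R.indicator fun x ↦ Ψ x.2.1) := Measurable.indicator (by fun_prop) hm
  have hfib (b ε : ℚ_[p]) : ∫⁻ c, R.indicator (fun x ↦ Ψ x.2.1) (b, ε, c) =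
      (ball 0 ‖ε‖).indicator (fun _ ↦ Ψ ε * ‖ε‖ₑ) b := by
    by_cases hb : ‖b‖ < ‖ε‖
    · rw [indicator_of_mem (mem_ball_zero_iff.2 hb), ← volume_closedBall 0,
        ← lintegral_indicator_const measurableSet_closedBall]
      refine lintegral_congr fun c ↦ ?_
      by_cases hc : ‖c‖ ≤ ‖ε‖ <;> simp [R, hb, hc]
    · simp [R, hb]
  calc ∫⁻ x in R, Ψ x.2.1
      = ∫⁻ b : ℚ_[p], ∫⁻ ε, ∫⁻ c, R.indicator (fun x ↦ Ψ x.2.1) (b, ε, c) := by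
        rw [← lintegral_indicator hm, Measure.volume_eq_prod, lintegral_prod _ hf.aemeasurable]
        refine lintegral_congr fun b ↦ ?_
        rw [Measure.volume_eq_prod, lintegral_prod _ (by fun_prop)]
    _ = ∫⁻ ε : ℚ_[p], ∫⁻ b : ℚ_[p], (ball 0 ‖ε‖).indicator (fun _ ↦ Ψ ε * ‖ε‖ₑ) b := by
        rw [lintegral_lintegral_swap (by fun_prop)]
        simp only [hfib]
    _ = (p : ℝ≥0∞)⁻¹ * ∫⁻ ε, ‖ε‖ₑ ^ 2 * Ψ ε := by
        simp only [lintegral_indicator_const measurableSet_ball, volume_ball]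
        rw [← lintegral_const_mul _ (by fun_prop)]
        congr! 2 with ε
        ring

theorem ae_fst_ne_zero_and_trd_ne_zero :
    ∀ᵐ x : ℚ_[p] × ℚ_[p] × ℚ_[p], x.1 ≠ 0 ∧ x.2.2 ≠ 0 :=
  (Measure.quasiMeasurePreserving_fst.ae ae_ne_zero).and <|
    (Measure.quasiMeasurePreserving_snd.comp Measure.quasiMeasurePreserving_snd).ae ae_ne_zero

theorem volume_setOf_norm_le (b : ℚ_[p]) : volume {ε : ℚ_[p] | ‖ε‖ ≤ ‖b‖} = 1 * ‖b‖ₑ := by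
  simpa [closedBall, dist_zero_right] using volume_closedBall 0 b

theorem volume_setOf_norm_lt (b : ℚ_[p]) :
    volume {ε : ℚ_[p] | ‖ε‖ < ‖b‖} = (p : ℝ≥0∞)⁻¹ * ‖b‖ₑ := by
  simpa [ball, dist_zero_right] using volume_ball 0 b

theorem setLIntegral_levelSet_zero (hp : Odd p) {Φ : ℚ_[p] → ℝ≥0∞} (hΦm : Measurable Φ)
    (hΦ : ∀ x y, ‖x‖ = ‖y‖ → Φ (x ^ 2) = Φ (y ^ 2)) :
    ∫⁻ x in levelSet p 0, Φ (quarterDisc x) =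
      2⁻¹ * (1 + (p : ℝ≥0∞)⁻¹) * ∫⁻ m, ‖m‖ₑ ^ 2 * Φ (m ^ 2) := by
  set R₁ : Set (ℚ_[p] × ℚ_[p] × ℚ_[p]) :=
    {x | ‖x.2.1‖ ≤ ‖x.1‖ ∧ (x.1, quarterDisc x) ∈ squareLevel p 0}
  have hm₂ : MeasurableSet {x : ℚ_[p] × ℚ_[p] × ℚ_[p] | ‖x.1‖ < ‖x.2.1‖ ∧ ‖x.2.2‖ ≤ ‖x.2.1‖} := by
    measurability
  set R₂ : Set (ℚ_[p] × ℚ_[p] × ℚ_[p]) := {x | ‖x.1‖ < ‖x.2.1‖ ∧ ‖x.2.2‖ ≤ ‖x.2.1‖}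
  have hunion : levelSet p 0 =ᵐ[volume] (R₁ ∪ R₂ : Set _) :=
    ae_fst_ne_zero_and_trd_ne_zero.mono fun x hx ↦ propext (mem_levelSet_zero_iff hp hx.1)
  have hdisj : Disjoint R₁ R₂ := disjoint_left.2 fun x h₁ h₂ ↦ h₁.1.not_gt h₂.1
  have hΦR₂ : EqOn (fun x ↦ Φ (quarterDisc x)) (fun x ↦ Φ (x.2.1 ^ 2)) R₂ := by
    intro x hx
    have hclose := norm_mul_lt_sq hx.1 hx.2
    obtain ⟨m, hm⟩ := (isSquare_iff_exists_sq _).1 (isSquare_of_norm_sub_lt hp (.sq _) hclose)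
    have hnorm : ‖m‖ ^ 2 = ‖x.2.1‖ ^ 2 := by
      rw [← norm_pow, ← norm_pow, ← hm, Padic.norm_eq_of_norm_sub_lt_right hclose]
    dsimp only
    rw [hm, hΦ m x.2.1 ((pow_left_inj₀ (norm_nonneg _) (norm_nonneg _) two_ne_zero).1 hnorm)]
  have hR₁ : ∫⁻ x in R₁, Φ (quarterDisc x) =
      1 * (2⁻¹ * ((1 - (p : ℝ≥0∞)⁻¹) * p ^ 0) * ∫⁻ m, ‖m‖ₑ ^ 2 * Φ (m ^ 2)) :=
    setLIntegral_squareLevel hp (B := {z | ‖z.2‖ ≤ ‖z.1‖}) (by measurability)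
      volume_setOf_norm_le hΦm hΦ 0
  have hconst : 2⁻¹ * (1 - (p : ℝ≥0∞)⁻¹) + (p : ℝ≥0∞)⁻¹ = 2⁻¹ * (1 + (p : ℝ≥0∞)⁻¹) := by
    have hone : 1 - (p : ℝ≥0∞)⁻¹ + (p : ℝ≥0∞)⁻¹ = 1 :=
      tsub_add_cancel_of_le (ENNReal.inv_le_one.2 (mod_cast (Fact.out : p.Prime).one_le))
    calc 2⁻¹ * (1 - (p : ℝ≥0∞)⁻¹) + (p : ℝ≥0∞)⁻¹
        = 2⁻¹ * (1 - (p : ℝ≥0∞)⁻¹) + (2⁻¹ + 2⁻¹) * (p : ℝ≥0∞)⁻¹ := by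
          rw [ENNReal.inv_two_add_inv_two, one_mul]
      _ = 2⁻¹ * (1 - (p : ℝ≥0∞)⁻¹ + (p : ℝ≥0∞)⁻¹ + (p : ℝ≥0∞)⁻¹) := by ring
      _ = 2⁻¹ * (1 + (p : ℝ≥0∞)⁻¹) := by rw [hone]
  rw [setLIntegral_congr hunion, lintegral_union hm₂ hdisj, hR₁,
    setLIntegral_congr_fun hm₂ hΦR₂, setLIntegral_norm_lt_of_norm_le (Ψ := fun ε ↦ Φ (ε ^ 2))
    (by fun_prop), one_mul, pow_zero, mul_one, ← add_mul, hconst]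

theorem setLIntegral_levelSet_of_ne_zero (hp : Odd p) {Φ : ℚ_[p] → ℝ≥0∞} (hΦm : Measurable Φ)
    (hΦ : ∀ x y, ‖x‖ = ‖y‖ → Φ (x ^ 2) = Φ (y ^ 2)) {l : ℕ} (hl : l ≠ 0) :
    ∫⁻ x in levelSet p l, Φ (quarterDisc x) = 2⁻¹ * (1 + (p : ℝ≥0∞)⁻¹) *
      ((1 - (p : ℝ≥0∞)⁻¹) * p ^ l) * ∫⁻ m, ‖m‖ₑ ^ 2 * Φ (m ^ 2) := by
  set R₁ : Set (ℚ_[p] × ℚ_[p] × ℚ_[p]) :=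
    {x | ‖x.2.1‖ ≤ ‖x.1‖ ∧ (x.1, quarterDisc x) ∈ squareLevel p l}
  set R₂ : Set (ℚ_[p] × ℚ_[p] × ℚ_[p]) :=
    {x | ‖x.2.1‖ < ‖x.1‖ ∧ (x.1, quarterDisc x) ∈ squareLevel p l}
  set σ : ℚ_[p] × ℚ_[p] × ℚ_[p] → ℚ_[p] × ℚ_[p] × ℚ_[p] := fun x ↦ (x.2.2, x.2.1, x.1)
  have hσ : MeasurePreserving σ := measurePreserving_swap_fst_trd
  have hlt : MeasurableSet {x : ℚ_[p] × ℚ_[p] × ℚ_[p] | ‖x.2.1‖ < ‖x.1‖} := by measurability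
  have hm₂ : MeasurableSet R₂ := hlt.inter <| (measurableSet_squareLevel hp l).preimage
    (f := fun x : ℚ_[p] × ℚ_[p] × ℚ_[p] ↦ (x.1, quarterDisc x)) (by fun_prop)
  have hunion : levelSet p l =ᵐ[volume] (R₁ ∪ σ ⁻¹' R₂ : Set _) := by
    refine ae_fst_ne_zero_and_trd_ne_zero.mono fun x hx ↦ propext ?_
    refine (mem_levelSet_iff_of_ne_zero hx.1 hx.2 hl).trans (or_congr_right ?_)
    rw [← quarterDisc_swap]
    rfl
  have hdisj : Disjoint R₁ (σ ⁻¹' R₂) := by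
    simpa only [R₂, σ, preimage_ofPred_eq, quarterDisc_swap] using disjoint_squareLevel hl
  have hR₁ := setLIntegral_squareLevel hp (B := {z | ‖z.2‖ ≤ ‖z.1‖}) (by measurability)
      volume_setOf_norm_le hΦm hΦ l
  have hR₂ : ∫⁻ x in σ ⁻¹' R₂, Φ (quarterDisc x) = (p : ℝ≥0∞)⁻¹ *
      (2⁻¹ * ((1 - (p : ℝ≥0∞)⁻¹) * p ^ l) * ∫⁻ m, ‖m‖ₑ ^ 2 * Φ (m ^ 2)) := by
    simpa only [σ, quarterDisc_swap] using
      (hσ.setLIntegral_comp_preimage hm₂ (f := fun x ↦ Φ (quarterDisc x)) (by fun_prop)).trans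
      (setLIntegral_squareLevel hp (B := {z | ‖z.2‖ < ‖z.1‖}) (by measurability)
        volume_setOf_norm_lt hΦm hΦ l)
  rw [setLIntegral_congr hunion, lintegral_union (hσ.measurable hm₂) hdisj, hR₂]
  refine (congrArg (· + _) hR₁).trans ?_
  ring

theorem setLIntegral_levelSet (hp : Odd p) {Φ : ℚ_[p] → ℝ≥0∞} (hΦm : Measurable Φ)
    (hΦ : ∀ x y, ‖x‖ = ‖y‖ → Φ (x ^ 2) = Φ (y ^ 2)) (l : ℕ) :
    ∫⁻ x in levelSet p l, Φ (quarterDisc x) =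
      2⁻¹ * (1 + (p : ℝ≥0∞)⁻¹) * levelWeight p l * ∫⁻ m, ‖m‖ₑ ^ 2 * Φ (m ^ 2) := by
  rcases eq_or_ne l 0 with rfl | hl
  · rw [setLIntegral_levelSet_zero hp hΦm hΦ, levelWeight, if_pos rfl, mul_one]
  · rw [setLIntegral_levelSet_of_ne_zero hp hΦm hΦ hl, levelWeight, if_neg hl]

end Polar

section ProjectiveLine

/-- The maximum norm of `(1, x)`, the homogeneous coordinates of a point of the projective line. -/
noncomputable def height (x : ℚ_[p]) : ℝ := max 1 ‖x‖

theorem one_le_height (x : ℚ_[p]) : 1 ≤ height x := le_max_left _ _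

theorem height_pos (x : ℚ_[p]) : 0 < height x := one_pos.trans_le (one_le_height x)

@[fun_prop]
theorem measurable_height : Measurable (height : ℚ_[p] → ℝ) := by
  unfold height
  fun_prop

theorem exists_norm_eq_height (x : ℚ_[p]) : ∃ u : ℚ_[p], ‖u‖ = height x := by
  rcases max_choice 1 ‖x‖ with h | h
  · exact ⟨1, by rw [height, h, norm_one]⟩
  · exact ⟨x, h.symm⟩

theorem height_eq_height_of_norm_sub_lt {x y : ℚ_[p]} (h : ‖x - y‖ < height x) :
    height y = height x := by
  rcases le_or_gt ‖x‖ 1 with hx | hx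
  · have hy : ‖y‖ ≤ 1 := by
      rw [height, max_eq_left hx] at h
      simpa using (IsUltrametricDist.norm_add_le_max x (-(x - y))).trans
        (max_le hx (by rw [norm_neg]; exact h.le))
    rw [height, height, max_eq_left hx, max_eq_left hy]
  · rw [height, max_eq_right hx.le, norm_sub_rev] at h
    rw [height, height, Padic.norm_eq_of_norm_sub_lt_right h]

-- Gauss's lemma for the product of the polynomials `X + x` and `X + y`.
theorem height_mul_height (x y : ℚ_[p]) :
    height x * height y = max (max 1 ‖x + y‖) ‖x * y‖ := by
  have hadd := IsUltrametricDist.norm_add_le_max x y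
  wlog hxy : ‖x‖ ≤ ‖y‖ generalizing x y
  · rw [mul_comm, add_comm, mul_comm x]
    exact this y x (by rwa [add_comm, max_comm]) (le_of_not_ge hxy)
  rw [max_eq_right hxy] at hadd
  rw [norm_mul, height, height]
  rcases le_or_gt ‖y‖ 1 with hy | hy
  · have hmul : ‖x‖ * ‖y‖ ≤ 1 := mul_le_one₀ (hxy.trans hy) (norm_nonneg y) hy
    rw [max_eq_left (hxy.trans hy), max_eq_left hy, max_eq_left (hadd.trans hy),
      max_eq_left hmul, mul_one]
  rcases le_or_gt ‖x‖ 1 with hx | hx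
  · have hmul : ‖x‖ * ‖y‖ ≤ ‖y‖ := mul_le_of_le_one_left (norm_nonneg y) hx
    rw [max_eq_left hx, max_eq_right hy.le, one_mul,
      IsUltrametricDist.norm_add_eq_max_of_norm_ne_norm (hx.trans_lt hy).ne, max_eq_right hxy,
      max_eq_right hy.le, max_eq_left hmul]
  · have hmul : ‖y‖ ≤ ‖x‖ * ‖y‖ := le_mul_of_one_le_left (norm_nonneg y) hx.le
    rw [max_eq_right hx.le, max_eq_right hy.le,
      max_eq_right (max_le (hy.le.trans hmul) (hadd.trans hmul))]

variable (p) in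
/-- The measure on the affine chart of the projective line over `ℚ_p` that is invariant under
`GL₂(ℤ_p)`; with respect to it `‖x - y‖ / (height x * height y)` is the invariant distance. -/
noncomputable def projMeasure : Measure ℚ_[p] :=
  volume.withDensity fun x ↦ (ENNReal.ofReal (height x) ^ 2)⁻¹

instance : SFinite (projMeasure p) := inferInstanceAs (SFinite (volume.withDensity _))

theorem projMeasure_apply_of_height_eq {S : Set ℚ_[p]} (hS : MeasurableSet S) {r : ℝ}
    (h : ∀ x ∈ S, height x = r) :
    projMeasure p S = (ENNReal.ofReal r ^ 2)⁻¹ * volume S := by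
  rw [projMeasure, withDensity_apply _ hS, ← setLIntegral_const]
  exact setLIntegral_congr_fun hS fun x hx ↦ by simp only [h x hx]

theorem exists_height_eq_pow (x : ℚ_[p]) : ∃ n : ℕ, height x = (p : ℝ) ^ n := by
  rcases le_or_gt ‖x‖ 1 with hx | hx
  · exact ⟨0, by rw [height, max_eq_left hx, pow_zero]⟩
  have hx0 : x ≠ 0 := norm_pos_iff.1 (one_pos.trans hx)
  rw [height, max_eq_right hx.le]
  rw [Padic.norm_eq_zpow_neg_valuation hx0] at hx ⊢
  obtain ⟨n, hn⟩ := Int.eq_ofNat_of_zero_le ((one_lt_zpow_iff_right₀ one_lt_cast).1 hx).le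
  exact ⟨n, by rw [hn, zpow_natCast]⟩

theorem volume_setOf_height_eq_pow {n : ℕ} (hn : n ≠ 0) :
    volume {x : ℚ_[p] | height x = (p : ℝ) ^ n} = (1 - (p : ℝ≥0∞)⁻¹) * p ^ n := by
  have hsphere : {x : ℚ_[p] | height x = (p : ℝ) ^ n} =
      sphere 0 ‖(p : ℚ_[p]) ^ (-(n : ℤ))‖ := by
    have hpn : 1 < (p : ℝ) ^ n := one_lt_pow₀ one_lt_cast hn
    ext x
    rw [mem_ofPred_eq, mem_sphere_zero_iff_norm, Padic.norm_p_zpow, neg_neg, zpow_natCast]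
    grind [height]
  rw [hsphere, volume_sphere, enorm_p_zpow_neg]

theorem projMeasure_setOf_pow_le_height {l : ℕ} (hl : l ≠ 0) :
    projMeasure p {x | (p : ℝ) ^ l ≤ height x} = (p ^ l : ℝ≥0∞)⁻¹ := by
  have hp0 : (p : ℝ≥0∞) ≠ 0 := mod_cast (Fact.out : p.Prime).ne_zero
  have hp1 : 1 - (p : ℝ≥0∞)⁻¹ ≠ 0 :=
    (tsub_pos_of_lt (ENNReal.inv_lt_one.2 (mod_cast (Fact.out : p.Prime).one_lt))).ne'
  have hm : MeasurableSet {x : ℚ_[p] | (p : ℝ) ^ l ≤ height x} := by measurability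
  have hr : Function.Injective fun k ↦ (p : ℝ) ^ (l + k) := fun j k h ↦ by
    simpa using pow_right_injective₀ cast_pos one_lt_cast.ne' h
  have hset (k : ℕ) : {x : ℚ_[p] | (p : ℝ) ^ l ≤ height x} ∩ {x | height x = (p : ℝ) ^ (l + k)} =
      {x | height x = (p : ℝ) ^ (l + k)} :=
    inter_eq_right.2 fun x hx ↦
      (pow_le_pow_right₀ one_lt_cast.le (Nat.le_add_right l k)).trans hx.ge
  have hpow (x : ℚ_[p]) (hx : (p : ℝ) ^ l ≤ height x) :
      ∃ k : ℕ, height x = (p : ℝ) ^ (l + k) := by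
    obtain ⟨n, hn⟩ := exists_height_eq_pow x
    rw [hn, pow_le_pow_iff_right₀ one_lt_cast] at hx
    exact ⟨n - l, by rw [hn, Nat.add_sub_cancel' hx]⟩
  rw [projMeasure, withDensity_apply _ hm, setLIntegral_comp_eq_tsum measurable_height hr hm
    (.of_forall hpow) fun r ↦ (ENNReal.ofReal r ^ 2)⁻¹]
  calc ∑' k : ℕ, (ENNReal.ofReal ((p : ℝ) ^ (l + k)) ^ 2)⁻¹ * volume
          ({x : ℚ_[p] | (p : ℝ) ^ l ≤ height x} ∩ {x | height x = (p : ℝ) ^ (l + k)})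
      = ∑' k : ℕ, (p ^ l : ℝ≥0∞)⁻¹ * (1 - (p : ℝ≥0∞)⁻¹) * (p : ℝ≥0∞)⁻¹ ^ k := by
        refine tsum_congr fun k ↦ ?_
        rw [hset, volume_setOf_height_eq_pow (by omega), ENNReal.ofReal_pow cast_pos.le,
          ENNReal.ofReal_natCast, sq, ENNReal.mul_inv (by simp [hp0]) (by simp [hp0]), mul_assoc,
          mul_left_comm _ (1 - _), ENNReal.inv_mul_cancel (by simp [hp0]) (by simp)]
        rw [pow_add, ENNReal.mul_inv (by simp [hp0]) (by simp [hp0])]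
        simp only [ENNReal.inv_pow]
        ring
    _ = (p ^ l : ℝ≥0∞)⁻¹ := by
        rw [ENNReal.tsum_mul_left, ENNReal.tsum_geometric, mul_assoc,
          ENNReal.mul_inv_cancel hp1 (by finiteness), mul_one]

theorem projMeasure_univ : projMeasure p univ = 1 + (p : ℝ≥0∞)⁻¹ := by
  have hunion : (univ : Set ℚ_[p]) = closedBall 0 1 ∪ {x | (p : ℝ) ^ 1 ≤ height x} := by
    refine (eq_univ_of_forall fun x ↦ ?_).symm
    obtain ⟨n, hn⟩ := exists_height_eq_pow x
    rcases n.eq_zero_or_pos with rfl | hpos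
    · exact .inl (mem_closedBall_zero_iff.2 ((le_max_right _ _).trans_eq (hn.trans (pow_zero _))))
    · exact .inr ((pow_le_pow_right₀ one_lt_cast.le hpos).trans_eq hn.symm)
  have hdisj : Disjoint (closedBall (0 : ℚ_[p]) 1) {x | (p : ℝ) ^ 1 ≤ height x} := by
    refine disjoint_left.2 fun x hx h ↦ ?_
    rw [mem_closedBall_zero_iff] at hx
    rw [mem_ofPred_eq, pow_one, height, max_eq_left hx] at h
    exact h.not_gt one_lt_cast
  rw [hunion, measure_union hdisj (by measurability), projMeasure_setOf_pow_le_height one_ne_zero,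
    projMeasure_apply_of_height_eq measurableSet_closedBall
      fun x hx ↦ max_eq_left (mem_closedBall_zero_iff.1 hx), volume_closedBall_one]
  simp

theorem norm_sub_mul_pow_le_iff_of_height_lt {x y : ℚ_[p]} {l : ℕ} (hx : height x < (p : ℝ) ^ l) :
    ‖x - y‖ * (p : ℝ) ^ l ≤ height x * height y ↔
      ‖x - y‖ * (p : ℝ) ^ l ≤ height x ^ 2 := by
  have hpl : (0 : ℝ) < (p : ℝ) ^ l := pow_pos cast_pos l
  constructor <;> intro h
  · have hlt : ‖y - x‖ < height y := by
      rw [norm_sub_rev]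
      refine lt_of_mul_lt_mul_right (h.trans_lt ?_) hpl.le
      rw [mul_comm]
      exact mul_lt_mul_of_pos_left hx (height_pos y)
    rwa [← height_eq_height_of_norm_sub_lt hlt, ← sq] at h
  · have hlt : ‖x - y‖ < height x := by
      refine lt_of_mul_lt_mul_right (h.trans_lt ?_) hpl.le
      rw [sq]
      exact mul_lt_mul_of_pos_left hx (height_pos x)
    rwa [height_eq_height_of_norm_sub_lt hlt, ← sq]

theorem norm_sub_mul_pow_le_iff_of_le_height {x y : ℚ_[p]} {l : ℕ} (hl : l ≠ 0)
    (hx : (p : ℝ) ^ l ≤ height x) :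
    ‖x - y‖ * (p : ℝ) ^ l ≤ height x * height y ↔ (p : ℝ) ^ l ≤ height y := by
  have hpl : 1 < (p : ℝ) ^ l := one_lt_pow₀ one_lt_cast hl
  constructor <;> intro h
  · by_contra! hy
    have hxy : ‖y‖ < ‖x‖ := by grind [height]
    have hx' : height x = ‖x‖ := by grind [height]
    have hsub : ‖x - y‖ = ‖x‖ := by
      simpa [hxy.le, sub_eq_add_neg] using
        IsUltrametricDist.norm_add_eq_max_of_norm_ne_norm (x := x) (y := -y)
          (by simpa using hxy.ne')
    rw [hsub, ← hx'] at h
    exact hy.not_ge (le_of_mul_le_mul_left h (height_pos x))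
  · have hsub : ‖x - y‖ ≤ max (height x) (height y) := by
      have := IsUltrametricDist.norm_add_le_max x (-y)
      rw [← sub_eq_add_neg, norm_neg] at this
      exact this.trans (max_le_max (le_max_right _ _) (le_max_right _ _))
    rcases le_max_iff.1 hsub with hle | hle
    · exact mul_le_mul hle h (by positivity) (height_pos x).le
    · rw [mul_comm (height x)]
      exact mul_le_mul hle hx (by positivity) (height_pos y).le

theorem projMeasure_setOf_norm_sub_mul_pow_le (x : ℚ_[p]) {l : ℕ} (hl : l ≠ 0) :
    projMeasure p {y | ‖x - y‖ * (p : ℝ) ^ l ≤ height x * height y} = (p ^ l : ℝ≥0∞)⁻¹ := by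
  rcases le_or_gt ((p : ℝ) ^ l) (height x) with hx | hx
  · simp only [norm_sub_mul_pow_le_iff_of_le_height hl hx]
    exact projMeasure_setOf_pow_le_height hl
  obtain ⟨u, hu⟩ := exists_norm_eq_height x
  have hpl : (0 : ℝ) < (p : ℝ) ^ l := pow_pos cast_pos l
  have hball : {y | ‖x - y‖ * (p : ℝ) ^ l ≤ height x ^ 2} =
      closedBall x ‖(p : ℚ_[p]) ^ l * u ^ 2‖ := by
    ext y
    rw [mem_ofPred_eq, mem_closedBall_iff_norm', norm_mul, Padic.norm_p_pow, norm_pow, hu,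
      _root_.zpow_neg, zpow_natCast, inv_mul_eq_div, le_div_iff₀ hpl]
  have hheight : ∀ y ∈ closedBall x ‖(p : ℚ_[p]) ^ l * u ^ 2‖, height y = height x := by
    intro y hy
    rw [← hball, mem_ofPred_eq] at hy
    refine height_eq_height_of_norm_sub_lt (lt_of_mul_lt_mul_right (hy.trans_lt ?_) hpl.le)
    rw [sq]
    exact mul_lt_mul_of_pos_left hx (height_pos x)
  have hu0 : ‖u‖ₑ ≠ 0 := by
    rw [enorm_ne_zero, ← norm_ne_zero_iff, hu]
    exact (height_pos x).ne'
  simp only [norm_sub_mul_pow_le_iff_of_height_lt hx, hball]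
  rw [projMeasure_apply_of_height_eq measurableSet_closedBall hheight, volume_closedBall,
    enorm_mul, enorm_pow u, ← hu, ofReal_norm, mul_left_comm,
    ENNReal.inv_mul_cancel (by simpa using hu0) (by simp), mul_one, ← ofReal_norm,
    Padic.norm_p_pow, _root_.zpow_neg, zpow_natCast, ENNReal.ofReal_inv_of_pos hpl,
    ENNReal.ofReal_pow cast_pos.le, ENNReal.ofReal_natCast]

theorem norm_sub_le_height_mul_height (x y : ℚ_[p]) : ‖x - y‖ ≤ height x * height y := by
  have hsub : ‖x - y‖ ≤ max ‖x‖ ‖y‖ := by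
    simpa [sub_eq_add_neg] using IsUltrametricDist.norm_add_le_max x (-y)
  refine hsub.trans (max_le ?_ ?_)
  · exact (le_max_right _ _).trans (le_mul_of_one_le_right (height_pos x).le (one_le_height y))
  · exact (le_max_right _ _).trans (le_mul_of_one_le_left (height_pos y).le (one_le_height x))

theorem setOf_height_mul_height_eq (x : ℚ_[p]) (l : ℕ) :
    {y | height x * height y = ‖x - y‖ * (p : ℝ) ^ l} =
      {y | ‖x - y‖ * (p : ℝ) ^ l ≤ height x * height y} \
        {y | ‖x - y‖ * (p : ℝ) ^ (l + 1) ≤ height x * height y} := by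
  obtain ⟨u, hu⟩ := exists_norm_eq_height x
  ext y
  obtain ⟨v, hv⟩ := exists_norm_eq_height y
  have huv : u * v ≠ 0 := by
    rw [← norm_ne_zero_iff, norm_mul, hu, hv]
    exact (mul_pos (height_pos x) (height_pos y)).ne'
  have hlt := norm_lt_norm_iff_le_norm_mul (x := (x - y) * (p : ℚ_[p]) ^ (-(l : ℤ))) huv
  rw [norm_mul, norm_mul, norm_mul _ (u * v), norm_mul, Padic.norm_p_zpow, neg_neg, zpow_natCast,
    Padic.norm_p, hu, hv, le_inv_mul_iff₀' cast_pos, mul_assoc, ← pow_succ] at hlt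
  rw [Set.mem_sdiff, mem_ofPred_eq, mem_ofPred_eq, mem_ofPred_eq, ← hlt, not_lt, le_antisymm_iff,
    and_comm]

theorem projMeasure_setOf_height_mul_height_eq (x : ℚ_[p]) (l : ℕ) :
    (p : ℝ≥0∞) ^ (2 * l) * projMeasure p {y | height x * height y = ‖x - y‖ * (p : ℝ) ^ l} =
      levelWeight p l := by
  have hp0 : (p : ℝ≥0∞) ≠ 0 := mod_cast (Fact.out : p.Prime).ne_zero
  have hm : MeasurableSet {y : ℚ_[p] | ‖x - y‖ * (p : ℝ) ^ (l + 1) ≤ height x * height y} := by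
    measurability
  have hsub : {y : ℚ_[p] | ‖x - y‖ * (p : ℝ) ^ (l + 1) ≤ height x * height y} ⊆
      {y | ‖x - y‖ * (p : ℝ) ^ l ≤ height x * height y} := fun y hy ↦
    (mul_le_mul_of_nonneg_left (pow_le_pow_right₀ one_lt_cast.le l.le_succ)
      (norm_nonneg _)).trans hy
  rw [setOf_height_mul_height_eq, measure_sdiff hsub hm.nullMeasurableSet (by
    simp [projMeasure_setOf_norm_sub_mul_pow_le x l.succ_ne_zero, hp0]),
    projMeasure_setOf_norm_sub_mul_pow_le x l.succ_ne_zero, levelWeight]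
  split_ifs with hl
  · have huniv : {y | ‖x - y‖ * (p : ℝ) ^ l ≤ height x * height y} = univ :=
      eq_univ_of_forall fun y ↦ by simpa [hl] using norm_sub_le_height_mul_height x y
    rw [huniv, projMeasure_univ, hl, mul_zero, pow_zero, one_mul, pow_succ, pow_zero, one_mul,
      ENNReal.add_sub_cancel_right (by simpa using hp0)]
  · rw [projMeasure_setOf_norm_sub_mul_pow_le x hl, two_mul, pow_add, pow_succ,
      ENNReal.mul_inv (by simp) (by simp), mul_assoc, mul_comm (1 - _),
      ENNReal.mul_sub (by finiteness), ← mul_assoc _ _ (p : ℝ≥0∞)⁻¹,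
      ENNReal.mul_inv_cancel (by simp [hp0]) (by simp), one_mul]

theorem setLIntegral_height_mul_height_eq (l : ℕ) :
    ∫⁻ z : ℚ_[p] × ℚ_[p] in {z | height z.1 * height z.2 = ‖z.1 - z.2‖ * (p : ℝ) ^ l},
      (‖z.1 - z.2‖ₑ ^ 2)⁻¹ = (1 + (p : ℝ≥0∞)⁻¹) * levelWeight p l := by
  have hm : MeasurableSet {z : ℚ_[p] × ℚ_[p] | height z.1 * height z.2 =
      ‖z.1 - z.2‖ * (p : ℝ) ^ l} := measurableSet_eq_fun (by fun_prop) (by fun_prop)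
  set S := {z : ℚ_[p] × ℚ_[p] | height z.1 * height z.2 = ‖z.1 - z.2‖ * (p : ℝ) ^ l}
  have hw : EqOn (fun z : ℚ_[p] × ℚ_[p] ↦ (‖z.1 - z.2‖ₑ ^ 2)⁻¹) (fun z ↦ p ^ (2 * l) *
      ((ENNReal.ofReal (height z.1) ^ 2)⁻¹ * (ENNReal.ofReal (height z.2) ^ 2)⁻¹)) S := by
    intro z hz
    have hz' := congrArg ENNReal.ofReal hz
    rw [ENNReal.ofReal_mul (height_pos _).le, ENNReal.ofReal_mul (norm_nonneg _), ofReal_norm,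
      ENNReal.ofReal_pow cast_pos.le, ENNReal.ofReal_natCast] at hz'
    dsimp only
    rw [← ENNReal.mul_inv (by simp) (by simp), ← mul_pow, hz', mul_pow, ← pow_mul, mul_comm l,
      ENNReal.mul_inv (by simp) (by simp), mul_left_comm,
      ENNReal.mul_inv_cancel (by simp [(Fact.out : p.Prime).ne_zero]) (by simp), mul_one]
  calc ∫⁻ z in S, (‖z.1 - z.2‖ₑ ^ 2)⁻¹
      = p ^ (2 * l) * ((projMeasure p).prod (projMeasure p)) S := by
        rw [setLIntegral_congr_fun hm hw, lintegral_const_mul _ (by fun_prop), projMeasure,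
          prod_withDensity (by fun_prop) (by fun_prop), withDensity_apply _ hm]
        rfl
    _ = ∫⁻ _, levelWeight p l ∂projMeasure p := by
        rw [Measure.prod_apply hm, ← lintegral_const_mul _ (measurable_measure_prodMk_left hm)]
        exact lintegral_congr fun x ↦ projMeasure_setOf_height_mul_height_eq x l
    _ = (1 + (p : ℝ≥0∞)⁻¹) * levelWeight p l := by
        rw [lintegral_const, projMeasure_univ, mul_comm]

end ProjectiveLine

section TraceDeterminant

variable (p) in
/-- The pairs `(τ, t)` for which the polynomial `T ^ 2 - 2 τ T + (τ ^ 2 - t)`, of quarter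
discriminant `t`, has level `l`. -/
def polyLevel (l : ℕ) : Set (ℚ_[p] × ℚ_[p]) :=
  {z | max (max 1 ‖z.1‖) ‖z.1 ^ 2 - z.2‖ ^ 2 = ‖z.2‖ * (p : ℝ) ^ (2 * l)}

theorem measurableSet_polyLevel (l : ℕ) : MeasurableSet (polyLevel p l) :=
  measurableSet_eq_fun (by fun_prop) (by fun_prop)

theorem mem_polyLevel_sq_iff (hp : Odd p) {τ m : ℚ_[p]} {l : ℕ} :
    (τ, m ^ 2) ∈ polyLevel p l ↔ height (τ + m) * height (τ - m) = ‖m‖ * (p : ℝ) ^ l := by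
  have htwo : ‖τ + m + (τ - m)‖ = ‖τ‖ := by
    rw [add_add_sub_cancel, ← two_mul, norm_mul, norm_two hp, one_mul]
  have hprod : (τ + m) * (τ - m) = τ ^ 2 - m ^ 2 := by ring
  rw [height_mul_height, htwo, hprod, polyLevel, mem_ofPred_eq, norm_pow, mul_comm 2 l, pow_mul,
    ← mul_pow, pow_left_inj₀ (by positivity) (mul_nonneg (norm_nonneg _) (by positivity))
      two_ne_zero]

theorem mul_mem_polyLevel_iff {u : ℚ_[p]} (hu : ‖u‖ = 1) {τ t : ℚ_[p]} {l : ℕ} :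
    (u * τ, u ^ 2 * t) ∈ polyLevel p l ↔ (τ, t) ∈ polyLevel p l := by
  simp only [polyLevel, mem_ofPred_eq, mul_pow, ← mul_sub, norm_mul, norm_pow, hu, one_pow, one_mul]

theorem volume_polyLevel_sq_congr {x y : ℚ_[p]} (h : ‖x‖ = ‖y‖) (l : ℕ) :
    volume {τ | (τ, x ^ 2) ∈ polyLevel p l} = volume {τ | (τ, y ^ 2) ∈ polyLevel p l} := by
  rcases eq_or_ne y 0 with rfl | hy
  · rw [norm_eq_zero.1 (h.trans norm_zero)]
  have hu : ‖x / y‖ = 1 := by rw [norm_div, h, div_self (norm_ne_zero_iff.2 hy)]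
  have hx : x ≠ 0 := norm_ne_zero_iff.1 (h.trans_ne (norm_ne_zero_iff.2 hy))
  have hm (t : ℚ_[p]) : MeasurableSet {τ | (τ, t) ∈ polyLevel p l} :=
    (measurableSet_polyLevel l).preimage (f := fun τ ↦ (τ, t)) (by fun_prop)
  have hpre : {τ | (τ, y ^ 2) ∈ polyLevel p l} =
      (fun τ ↦ x / y * τ) ⁻¹' {τ | (τ, x ^ 2) ∈ polyLevel p l} := by
    ext τ
    rw [mem_preimage, mem_ofPred_eq, mem_ofPred_eq, ← mul_mem_polyLevel_iff hu, ← mul_pow,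
      div_mul_cancel₀ x hy]
  rw [hpre, ← Measure.map_apply (by fun_prop) (hm _),
    map_mul_left_volume (div_ne_zero hx hy), ← ofReal_norm, hu]
  simp

theorem lintegral_inv_mul_volume_polyLevel_sq (hp : Odd p) (l : ℕ) :
    ∫⁻ m : ℚ_[p], (‖m‖ₑ ^ 2)⁻¹ * volume {τ | (τ, m ^ 2) ∈ polyLevel p l} =
      (1 + (p : ℝ≥0∞)⁻¹) * levelWeight p l := by
  have hS : MeasurableSet {z : ℚ_[p] × ℚ_[p] | height z.1 * height z.2 =
      ‖z.1 - z.2‖ * (p : ℝ) ^ l} := measurableSet_eq_fun (by fun_prop) (by fun_prop)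
  set S := {z : ℚ_[p] × ℚ_[p] | height z.1 * height z.2 = ‖z.1 - z.2‖ * (p : ℝ) ^ l}
  set F : ℚ_[p] × ℚ_[p] → ℝ≥0∞ := S.indicator fun z ↦ (‖z.1 - z.2‖ₑ ^ 2)⁻¹
  have hF : Measurable F := Measurable.indicator (by fun_prop) hS
  have hdet : ‖(1 : ℚ_[p]) * -1 - 1 * 1‖ₑ = 1 := by
    rw [← ofReal_norm, show (1 : ℚ_[p]) * -1 - 1 * 1 = -2 by ring, norm_neg, norm_two hp,
      ENNReal.ofReal_one]
  have hfib (m τ : ℚ_[p]) : F (1 * τ + 1 * m, 1 * τ + -1 * m) =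
      {τ | (τ, m ^ 2) ∈ polyLevel p l}.indicator (fun _ ↦ (‖m‖ₑ ^ 2)⁻¹) τ := by
    have hsub : ‖τ + m - (τ - m)‖ = ‖m‖ := by
      rw [show τ + m - (τ - m) = 2 * m by ring, norm_mul, norm_two hp, one_mul]
    have hmem : (τ + m, τ - m) ∈ S ↔ (τ, m ^ 2) ∈ polyLevel p l := by
      rw [mem_polyLevel_sq_iff hp, mem_ofPred_eq, hsub]
    have hval : (‖τ + m - (τ - m)‖ₑ ^ 2)⁻¹ = (‖m‖ₑ ^ 2)⁻¹ := by
      rw [← ofReal_norm, hsub, ofReal_norm]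
    rw [one_mul, one_mul, neg_one_mul, ← sub_eq_add_neg]
    classical
    simp only [F, indicator_apply, hval, mem_ofPred_eq]
    exact if_congr hmem rfl rfl
  have hmeas (m : ℚ_[p]) : MeasurableSet {τ | (τ, m ^ 2) ∈ polyLevel p l} :=
    (measurableSet_polyLevel l).preimage (f := fun τ ↦ (τ, m ^ 2)) (by fun_prop)
  calc ∫⁻ m : ℚ_[p], (‖m‖ₑ ^ 2)⁻¹ * volume {τ | (τ, m ^ 2) ∈ polyLevel p l}
      = ∫⁻ m : ℚ_[p], ∫⁻ τ : ℚ_[p], F (1 * τ + 1 * m, 1 * τ + -1 * m) := by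
        simp only [hfib, lintegral_indicator_const (hmeas _)]
    _ = ∫⁻ v : ℚ_[p] × ℚ_[p], F (1 * v.1 + 1 * v.2, 1 * v.1 + -1 * v.2) := by
        rw [Measure.volume_eq_prod, lintegral_prod_symm' _ (by fun_prop)]
    _ = ∫⁻ z in S, (‖z.1 - z.2‖ₑ ^ 2)⁻¹ := by
        rw [lintegral_comp_linear (enorm_ne_zero.1 (hdet.trans_ne one_ne_zero)) hF, hdet, inv_one,
          one_mul, lintegral_indicator hS]
    _ = (1 + (p : ℝ≥0∞)⁻¹) * levelWeight p l := setLIntegral_height_mul_height_eq l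

variable (p) in
/-- The quadruples `(τ, x)` for which both the characteristic polynomial and the associated binary
quadratic form of the matrix `!![τ + ε, b; c, τ - ε]`, where `x = (b, ε, c)`, have nonzero square
discriminant, and their levels are `l₁` and `l₂`. -/
def bilevelSet (l₁ l₂ : ℕ) : Set (ℚ_[p] × ℚ_[p] × ℚ_[p] × ℚ_[p]) :=
  {z | (z.1, quarterDisc z.2) ∈ polyLevel p l₁ ∧ z.2 ∈ levelSet p l₂}

theorem measurableSet_levelSet (hp : Odd p) (l : ℕ) : MeasurableSet (levelSet p l) := by
  exact ((measurableSet_isSquare hp).preimage measurable_quarterDisc).inter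
    (((measurableSet_singleton 0).preimage measurable_quarterDisc).compl.inter
    (measurableSet_eq_fun (by unfold mcoord; fun_prop) (by fun_prop)))

theorem measurableSet_bilevelSet (hp : Odd p) (l₁ l₂ : ℕ) :
    MeasurableSet (bilevelSet p l₁ l₂) := by
  exact ((measurableSet_polyLevel l₁).preimage
    (f := fun z : ℚ_[p] × ℚ_[p] × ℚ_[p] × ℚ_[p] ↦ (z.1, quarterDisc z.2)) (by fun_prop)).inter
    ((measurableSet_levelSet hp l₂).preimage measurable_snd)

theorem setLIntegral_bilevelSet_eq_setLIntegral_levelSet (hp : Odd p) (l₁ l₂ : ℕ) :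
    ∫⁻ z in bilevelSet p l₁ l₂, (‖quarterDisc z.2‖ₑ ^ 2)⁻¹ =
      ∫⁻ x in levelSet p l₂,
        (‖quarterDisc x‖ₑ ^ 2)⁻¹ * volume {τ | (τ, quarterDisc x) ∈ polyLevel p l₁} := by
  have hmeas : Measurable ((bilevelSet p l₁ l₂).indicator fun z ↦ (‖quarterDisc z.2‖ₑ ^ 2)⁻¹) :=
    Measurable.indicator (by fun_prop) (measurableSet_bilevelSet hp l₁ l₂)
  rw [← lintegral_indicator (measurableSet_bilevelSet hp l₁ l₂), Measure.volume_eq_prod,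
    lintegral_prod_symm' _ hmeas, ← lintegral_indicator (measurableSet_levelSet hp l₂)]
  refine lintegral_congr fun x ↦ ?_
  have hm : MeasurableSet {τ | (τ, quarterDisc x) ∈ polyLevel p l₁} :=
    (measurableSet_polyLevel l₁).preimage (f := fun τ ↦ (τ, quarterDisc x)) (by fun_prop)
  by_cases hx : x ∈ levelSet p l₂
  · rw [indicator_of_mem hx]
    refine Eq.trans (lintegral_congr fun τ ↦ ?_) (lintegral_indicator_const hm _)
    by_cases h : (τ, quarterDisc x) ∈ polyLevel p l₁ <;> simp [bilevelSet, hx, h]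
  · simp [bilevelSet, hx]

theorem setLIntegral_bilevelSet (hp : Odd p) (l₁ l₂ : ℕ) :
    ∫⁻ z in bilevelSet p l₁ l₂, (‖quarterDisc z.2‖ₑ ^ 2)⁻¹ =
      2⁻¹ * (1 + (p : ℝ≥0∞)⁻¹) ^ 2 * (levelWeight p l₁ * levelWeight p l₂) := by
  set Φ : ℚ_[p] → ℝ≥0∞ := fun t ↦ (‖t‖ₑ ^ 2)⁻¹ * volume {τ | (τ, t) ∈ polyLevel p l₁}
  have hΦm : Measurable Φ := Measurable.mul (by fun_prop)
    (measurable_measure_prodMk_right (measurableSet_polyLevel l₁))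
  have hΦ (x y : ℚ_[p]) (h : ‖x‖ = ‖y‖) : Φ (x ^ 2) = Φ (y ^ 2) := by
    dsimp only [Φ]
    rw [volume_polyLevel_sq_congr h, ← ofReal_norm, ← ofReal_norm, norm_pow, norm_pow, h]
  have hcancel (m : ℚ_[p]) (hm : m ≠ 0) : ‖m‖ₑ ^ 2 * Φ (m ^ 2) =
      (‖m‖ₑ ^ 2)⁻¹ * volume {τ | (τ, m ^ 2) ∈ polyLevel p l₁} := by
    have hm0 : ‖m‖ₑ ^ 2 ≠ 0 := by simp [hm]
    have hmt : ‖m‖ₑ ^ 2 ≠ ∞ := by simp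
    dsimp only [Φ]
    rw [enorm_pow, sq (‖m‖ₑ ^ 2), ENNReal.mul_inv (.inl hm0) (.inl hmt), mul_assoc, ← mul_assoc,
      ENNReal.mul_inv_cancel hm0 hmt, one_mul]
  calc ∫⁻ z in bilevelSet p l₁ l₂, (‖quarterDisc z.2‖ₑ ^ 2)⁻¹
      = ∫⁻ x in levelSet p l₂, Φ (quarterDisc x) :=
        setLIntegral_bilevelSet_eq_setLIntegral_levelSet hp l₁ l₂
    _ = 2⁻¹ * (1 + (p : ℝ≥0∞)⁻¹) * levelWeight p l₂ *
          ∫⁻ m : ℚ_[p], (‖m‖ₑ ^ 2)⁻¹ * volume {τ | (τ, m ^ 2) ∈ polyLevel p l₁} := by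
        rw [setLIntegral_levelSet hp hΦm hΦ, lintegral_congr_ae (ae_ne_zero.mono hcancel)]
    _ = 2⁻¹ * (1 + (p : ℝ≥0∞)⁻¹) ^ 2 * (levelWeight p l₁ * levelWeight p l₂) := by
        rw [lintegral_inv_mul_volume_polyLevel_sq hp]
        ring

end TraceDeterminant

section Planar

section CommRing

variable {R : Type*} [CommRing R]

/-- The determinant of the `2 × 2` matrix with rows `v` and `w`. -/
def cross (v w : R × R) : R := v.1 * w.2 - v.2 * w.1

/-- The standard bilinear form on the plane. -/
def dot (v w : R × R) : R := v.1 * w.1 + v.2 * w.2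

theorem dot_comm (v w : R × R) : dot v w = dot w v := by
  simp only [dot, mul_comm]

theorem cross_dot_dot (v w k l : R × R) :
    cross (dot k v, dot l v) (dot k w, dot l w) = cross k l * cross v w := by
  simp only [cross, dot]
  ring

theorem cross_mul_dot (v k l m : R × R) :
    cross k l * dot m v = cross m l * dot k v + cross k m * dot l v := by
  simp only [cross, dot]
  ring

theorem cross_swap_right (v w : R × R) : cross v w.swap = -cross v.swap w := by
  simp only [cross, Prod.fst_swap, Prod.snd_swap]
  ring

end CommRing

theorem norm_dot_le_one_iff_of_norm_cross_le {K ι : Type*} [NormedField K] [IsUltrametricDist K]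
    {k : ι → K × K} {i j : ι} (hij : cross (k i) (k j) ≠ 0)
    (hmax : ∀ a b, ‖cross (k a) (k b)‖ ≤ ‖cross (k i) (k j)‖) (v : K × K) :
    (∀ l, ‖dot (k l) v‖ ≤ 1) ↔ ‖dot (k i) v‖ ≤ 1 ∧ ‖dot (k j) v‖ ≤ 1 := by
  refine ⟨fun h ↦ ⟨h i, h j⟩, fun ⟨hi, hj⟩ l ↦ ?_⟩
  refine le_of_mul_le_mul_left ?_ (norm_pos_iff.2 hij)
  rw [← norm_mul, cross_mul_dot, mul_one]
  refine (IsUltrametricDist.norm_add_le_max _ _).trans (max_le ?_ ?_) <;> rw [norm_mul]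
  · exact (mul_le_of_le_one_right (norm_nonneg _) hi).trans (hmax l j)
  · exact (mul_le_of_le_one_right (norm_nonneg _) hj).trans (hmax i l)

theorem setLIntegral_comp_of_measure_le_eq_pow {α : Type*} [MeasurableSpace α] {μ : Measure α}
    {N : α → ℝ} (hN : Measurable N) {ρ : ℝ} (hρ₀ : 0 < ρ) (hρ₁ : ρ < 1)
    (hval : ∀ᵐ x ∂μ, N x ≤ 1 → ∃ n : ℕ, N x = ρ ^ n) {r y : ℝ≥0∞} (hr : r ≠ ∞)
    (hμ : ∀ n : ℕ, μ {x | N x ≤ ρ ^ n} = r ^ n) {φ : ℝ → ℝ≥0∞} (hφ : ∀ n : ℕ, φ (ρ ^ n) = y ^ n) :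
    ∫⁻ x in {x | N x ≤ 1}, φ (N x) ∂μ = (1 - r) * (1 - r * y)⁻¹ := by
  have hm (a : ℝ) : MeasurableSet {x | N x ≤ a} := hN measurableSet_Iic
  have hlevel (n : ℕ) : μ ({x | N x ≤ 1} ∩ {x | N x = ρ ^ n}) = r ^ n * (1 - r) := by
    have hsub : {x | N x ≤ ρ ^ (n + 1)} ⊆ {x | N x ≤ ρ ^ n} := fun x hx ↦
      le_trans hx (pow_le_pow_of_le_one hρ₀.le hρ₁.le n.le_succ)
    have hae : ({x | N x ≤ 1} ∩ {x | N x = ρ ^ n} : Set α) =ᵐ[μ]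
        ({x | N x ≤ ρ ^ n} \ {x | N x ≤ ρ ^ (n + 1)} : Set α) := by
      refine hval.mono fun x hx ↦ propext ⟨fun ⟨_, h⟩ ↦ ⟨h.le, ?_⟩, fun ⟨h, h'⟩ ↦ ?_⟩
      · change ¬ N x ≤ _
        rw [not_le, show N x = ρ ^ n from h]
        exact pow_lt_pow_right_of_lt_one₀ hρ₀ hρ₁ n.lt_succ_self
      · have h1 : N x ≤ 1 := le_trans h (pow_le_one₀ hρ₀.le hρ₁.le)
        obtain ⟨m, hm⟩ := hx h1
        have hnm : n ≤ m := (pow_le_pow_iff_right_of_lt_one₀ hρ₀ hρ₁).1 (hm ▸ h)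
        have hmn : m < n + 1 := by
          rw [← pow_lt_pow_iff_right_of_lt_one₀ hρ₀ hρ₁, ← hm]
          exact not_le.1 h'
        exact ⟨h1, hm.trans (by rw [le_antisymm (Nat.lt_succ_iff.1 hmn) hnm])⟩
    rw [measure_congr hae, measure_sdiff hsub (hm _).nullMeasurableSet (by simp [hμ, hr]), hμ, hμ,
      ENNReal.mul_sub (by finiteness), mul_one, pow_succ]
  rw [setLIntegral_comp_eq_tsum hN (pow_right_injective₀ hρ₀ hρ₁.ne) (hm 1) hval φ]
  calc ∑' n : ℕ, φ (ρ ^ n) * μ ({x | N x ≤ 1} ∩ {x | N x = ρ ^ n})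
      = ∑' n : ℕ, (1 - r) * (r * y) ^ n := tsum_congr fun n ↦ by rw [hφ, hlevel, mul_pow]; ring
    _ = (1 - r) * (1 - r * y)⁻¹ := by rw [ENNReal.tsum_mul_left, ENNReal.tsum_geometric]

theorem exists_norm_eq_inv_pow {x : ℚ_[p]} (hx : x ≠ 0) (h : ‖x‖ ≤ 1) :
    ∃ n : ℕ, ‖x‖ = (p : ℝ)⁻¹ ^ n := by
  rw [Padic.norm_eq_zpow_neg_valuation hx] at h ⊢
  obtain ⟨n, hn⟩ := Int.eq_ofNat_of_zero_le
    (neg_nonpos.1 ((zpow_le_one_iff_right₀ one_lt_cast).1 h))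
  exact ⟨n, by rw [hn, _root_.zpow_neg, zpow_natCast, inv_pow]⟩

theorem ofReal_inv_pow_rpow (σ : ℝ) (n : ℕ) :
    ENNReal.ofReal ((p : ℝ)⁻¹ ^ n) ^ σ = ((p : ℝ≥0∞) ^ (-σ)) ^ n := by
  rw [ENNReal.ofReal_pow (by positivity), ENNReal.ofReal_inv_of_pos cast_pos,
    ENNReal.ofReal_natCast, ← ENNReal.rpow_natCast, ← ENNReal.rpow_natCast, ENNReal.rpow_neg,
    ← ENNReal.inv_rpow, ← ENNReal.rpow_mul, ← ENNReal.rpow_mul, mul_comm]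

theorem volume_setOf_norm_le_inv_pow (n : ℕ) :
    volume {x : ℚ_[p] | ‖x‖ ≤ (p : ℝ)⁻¹ ^ n} = (p : ℝ≥0∞)⁻¹ ^ n := by
  have hn : ‖(p : ℚ_[p]) ^ n‖ = (p : ℝ)⁻¹ ^ n := by rw [norm_pow, Padic.norm_p]
  rw [← hn, volume_setOf_norm_le, one_mul, ← ofReal_norm, hn,
    ENNReal.ofReal_pow (by positivity), ENNReal.ofReal_inv_of_pos cast_pos, ENNReal.ofReal_natCast]

theorem setLIntegral_enorm_rpow (σ : ℝ) :
    ∫⁻ x : ℚ_[p] in {x | ‖x‖ ≤ 1}, ‖x‖ₑ ^ σ =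
      (1 - (p : ℝ≥0∞)⁻¹) * (1 - (p : ℝ≥0∞)⁻¹ * (p : ℝ≥0∞) ^ (-σ))⁻¹ := by
  simp only [← ofReal_norm]
  exact setLIntegral_comp_of_measure_le_eq_pow (φ := fun t ↦ ENNReal.ofReal t ^ σ) measurable_norm
    (inv_pos.2 cast_pos) (inv_lt_one_of_one_lt₀ one_lt_cast)
    (ae_ne_zero.mono fun _ ↦ exists_norm_eq_inv_pow)
    (by simp [(Fact.out : p.Prime).ne_zero]) volume_setOf_norm_le_inv_pow (ofReal_inv_pow_rpow σ)

theorem setLIntegral_enorm_prod_rpow (σ : ℝ) :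
    ∫⁻ v : ℚ_[p] × ℚ_[p] in {v | ‖v‖ ≤ 1}, ‖v‖ₑ ^ σ =
      (1 - (p : ℝ≥0∞)⁻¹ ^ 2) * (1 - (p : ℝ≥0∞)⁻¹ ^ 2 * (p : ℝ≥0∞) ^ (-σ))⁻¹ := by
  have hval : ∀ᵐ v : ℚ_[p] × ℚ_[p], ‖v‖ ≤ 1 → ∃ n : ℕ, ‖v‖ = (p : ℝ)⁻¹ ^ n := by
    filter_upwards [Measure.quasiMeasurePreserving_fst.ae ae_ne_zero,
      Measure.quasiMeasurePreserving_snd.ae ae_ne_zero] with v h₁ h₂ h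
    rw [Prod.norm_def, max_le_iff] at h
    rcases max_choice ‖v.1‖ ‖v.2‖ with hv | hv <;> rw [Prod.norm_def, hv]
    · exact exists_norm_eq_inv_pow h₁ h.1
    · exact exists_norm_eq_inv_pow h₂ h.2
  have hvol (n : ℕ) :
      volume {v : ℚ_[p] × ℚ_[p] | ‖v‖ ≤ (p : ℝ)⁻¹ ^ n} = ((p : ℝ≥0∞)⁻¹ ^ 2) ^ n := by
    have hprod : {v : ℚ_[p] × ℚ_[p] | ‖v‖ ≤ (p : ℝ)⁻¹ ^ n} =
        {x | ‖x‖ ≤ (p : ℝ)⁻¹ ^ n} ×ˢ {x | ‖x‖ ≤ (p : ℝ)⁻¹ ^ n} := by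
      ext v
      simp [Prod.norm_def]
    rw [hprod, Measure.volume_eq_prod, Measure.prod_prod, volume_setOf_norm_le_inv_pow, ← sq,
      ← pow_mul, ← pow_mul, mul_comm]
  simp only [← ofReal_norm]
  exact setLIntegral_comp_of_measure_le_eq_pow (φ := fun t ↦ ENNReal.ofReal t ^ σ) measurable_norm
    (inv_pos.2 cast_pos) (inv_lt_one_of_one_lt₀ one_lt_cast) hval
    (by simp [(Fact.out : p.Prime).ne_zero]) hvol (ofReal_inv_pow_rpow σ)

@[fun_prop]
theorem measurable_cross {α : Type*} [MeasurableSpace α] {f g : α → ℚ_[p] × ℚ_[p]}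
    (hf : Measurable f) (hg : Measurable g) : Measurable fun x ↦ cross (f x) (g x) := by
  unfold cross
  fun_prop

@[fun_prop]
theorem measurable_dot {α : Type*} [MeasurableSpace α] {f g : α → ℚ_[p] × ℚ_[p]}
    (hf : Measurable f) (hg : Measurable g) : Measurable fun x ↦ dot (f x) (g x) := by
  unfold dot
  fun_prop

theorem norm_shear_le_one_iff {κ : ℚ_[p]} (hκ : ‖κ‖ ≤ 1) (w : ℚ_[p] × ℚ_[p]) :
    ‖(1 * w.1 + 0 * w.2, -κ * w.1 + 1 * w.2)‖ ≤ 1 ↔ ‖w‖ ≤ 1 := by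
  simp only [norm_prod_le_iff, one_mul, zero_mul, add_zero]
  refine and_congr_right fun h₁ ↦ ?_
  have hκw : ‖κ * w.1‖ ≤ 1 := by rw [norm_mul]; exact mul_le_one₀ hκ (norm_nonneg _) h₁
  constructor <;> intro h
  · rw [show w.2 = κ * w.1 + (-κ * w.1 + w.2) by ring]
    exact (IsUltrametricDist.norm_add_le_max _ _).trans (max_le hκw h)
  · refine (IsUltrametricDist.norm_add_le_max _ _).trans (max_le ?_ h)
    rwa [neg_mul, norm_neg]

theorem measurableSet_setOf_norm_le_one {E : Type*} [NormedAddCommGroup E] [MeasurableSpace E]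
    [OpensMeasurableSpace E] : MeasurableSet {x : E | ‖x‖ ≤ 1} := measurable_norm measurableSet_Iic

theorem setLIntegral_enorm_cross_rpow_of_norm_le {v : ℚ_[p] × ℚ_[p]} (hv : v.1 ≠ 0)
    (h : ‖v.2‖ ≤ ‖v.1‖) (σ : ℝ) :
    ∫⁻ w in {w | ‖w‖ ≤ 1}, ‖cross v w‖ₑ ^ σ =
      ‖v.1‖ₑ ^ σ * ∫⁻ u : ℚ_[p] in {u | ‖u‖ ≤ 1}, ‖u‖ₑ ^ σ := by
  have hκ : ‖v.2 / v.1‖ ≤ 1 := by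
    rw [norm_div]
    exact div_le_one_of_le₀ h (norm_nonneg _)
  set f : ℚ_[p] × ℚ_[p] → ℝ≥0∞ := {w | ‖w‖ ≤ 1}.indicator fun w ↦ ‖v.1 * w.2‖ₑ ^ σ
  have hf : Measurable f := Measurable.indicator (by fun_prop) measurableSet_setOf_norm_le_one
  have hshear (w : ℚ_[p] × ℚ_[p]) : {w | ‖w‖ ≤ 1}.indicator (fun w ↦ ‖cross v w‖ₑ ^ σ) w =
      f (1 * w.1 + 0 * w.2, -(v.2 / v.1) * w.1 + 1 * w.2) := by
    have hcross : v.1 * (-(v.2 / v.1) * w.1 + 1 * w.2) = cross v w := by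
      rw [cross]
      field_simp
      ring
    classical
    simp only [f, indicator_apply, hcross, mem_ofPred_eq, norm_shear_le_one_iff hκ]
  have hprod (w : ℚ_[p] × ℚ_[p]) : f w = {u : ℚ_[p] | ‖u‖ ≤ 1}.indicator 1 w.1 *
      {u : ℚ_[p] | ‖u‖ ≤ 1}.indicator (fun u ↦ ‖v.1‖ₑ ^ σ * ‖u‖ₑ ^ σ) w.2 := by
    by_cases h₁ : ‖w.1‖ ≤ 1 <;> by_cases h₂ : ‖w.2‖ ≤ 1 <;>
      simp [f, norm_prod_le_iff, h₁, h₂, enorm_mul, ENNReal.mul_rpow_of_ne_top]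
  calc ∫⁻ w in {w | ‖w‖ ≤ 1}, ‖cross v w‖ₑ ^ σ
      = ∫⁻ w : ℚ_[p] × ℚ_[p], f (1 * w.1 + 0 * w.2, -(v.2 / v.1) * w.1 + 1 * w.2) := by
        rw [← lintegral_indicator measurableSet_setOf_norm_le_one]
        exact lintegral_congr hshear
    _ = ∫⁻ w, f w := by
        rw [lintegral_comp_linear (by norm_num) hf]
        simp
    _ = ‖v.1‖ₑ ^ σ * ∫⁻ u : ℚ_[p] in {u | ‖u‖ ≤ 1}, ‖u‖ₑ ^ σ := by
        have hm : MeasurableSet {u : ℚ_[p] | ‖u‖ ≤ 1} := measurableSet_setOf_norm_le_one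
        rw [lintegral_congr hprod, Measure.volume_eq_prod, lintegral_prod_mul
          (measurable_one.indicator hm).aemeasurable
          (Measurable.indicator (by fun_prop) hm).aemeasurable, lintegral_indicator_one hm,
          volume_setOf_norm_le_one, one_mul, lintegral_indicator hm,
          lintegral_const_mul _ (by fun_prop)]

theorem setLIntegral_enorm_cross_rpow {v : ℚ_[p] × ℚ_[p]} (hv : v ≠ 0) (σ : ℝ) :
    ∫⁻ w in {w | ‖w‖ ≤ 1}, ‖cross v w‖ₑ ^ σ =
      ‖v‖ₑ ^ σ * ∫⁻ u : ℚ_[p] in {u | ‖u‖ ≤ 1}, ‖u‖ₑ ^ σ := by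
  wlog h : ‖v.2‖ ≤ ‖v.1‖ generalizing v
  · have hsw := this (v := v.swap) (fun h0 ↦ hv (Prod.swap_injective h0)) (le_of_not_ge h)
    have hnorm : ‖v.swap‖ = ‖v‖ := max_comm _ _
    have hpre : Prod.swap ⁻¹' {w : ℚ_[p] × ℚ_[p] | ‖w‖ ≤ 1} = {w | ‖w‖ ≤ 1} := by
      ext w
      rw [mem_preimage, mem_ofPred_eq, mem_ofPred_eq, norm_prod_le_iff, norm_prod_le_iff, and_comm]
      rfl
    rw [← ofReal_norm v, ← hnorm, ofReal_norm, ← hsw, Measure.volume_eq_prod,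
      ← Measure.measurePreserving_swap.setLIntegral_comp_preimage measurableSet_setOf_norm_le_one
        (by fun_prop), hpre]
    refine lintegral_congr fun w ↦ ?_
    rw [cross_swap_right, enorm_neg]
  have hv₁ : v.1 ≠ 0 := by
    intro h0
    rw [h0, norm_zero, norm_le_zero_iff] at h
    exact hv (Prod.ext h0 h)
  rw [setLIntegral_enorm_cross_rpow_of_norm_le hv₁ h, ← ofReal_norm v, Prod.norm_def,
    max_eq_left h, ofReal_norm]

variable (p) in
/-- The zeta integral `∫ |det x| ^ σ` over the integral `2 × 2` matrices `x`, evaluated in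
`setLIntegral_prod_enorm_cross_rpow`. -/
noncomputable def detZeta (σ : ℝ) : ℝ≥0∞ :=
  (1 - (p : ℝ≥0∞)⁻¹) * (1 - (p : ℝ≥0∞)⁻¹ * (p : ℝ≥0∞) ^ (-σ))⁻¹ *
    ((1 - (p : ℝ≥0∞)⁻¹ ^ 2) * (1 - (p : ℝ≥0∞)⁻¹ ^ 2 * (p : ℝ≥0∞) ^ (-σ))⁻¹)

theorem setLIntegral_prod_enorm_cross_rpow (σ : ℝ) :
    ∫⁻ x : (ℚ_[p] × ℚ_[p]) × (ℚ_[p] × ℚ_[p]) in {x | ‖x‖ ≤ 1}, ‖cross x.1 x.2‖ₑ ^ σ =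
      detZeta p σ := by
  have hball : {x : (ℚ_[p] × ℚ_[p]) × (ℚ_[p] × ℚ_[p]) | ‖x‖ ≤ 1} =
      {v | ‖v‖ ≤ 1} ×ˢ {w | ‖w‖ ≤ 1} := by
    ext x
    exact norm_prod_le_iff
  have hne : ∀ᵐ v : ℚ_[p] × ℚ_[p], v ≠ 0 :=
    (Measure.quasiMeasurePreserving_fst.ae ae_ne_zero).mono fun v h h0 ↦ h (congrArg Prod.fst h0)
  rw [hball, Measure.volume_eq_prod, setLIntegral_prod _ (by fun_prop),
    lintegral_congr_ae (ae_restrict_of_ae (hne.mono fun v hv ↦ setLIntegral_enorm_cross_rpow hv σ)),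
    lintegral_mul_const _ (by fun_prop), setLIntegral_enorm_prod_rpow, setLIntegral_enorm_rpow,
    mul_comm, detZeta]

theorem lintegral_comp_dot {k l : ℚ_[p] × ℚ_[p]} (h : cross k l ≠ 0)
    {f : ℚ_[p] × ℚ_[p] → ℝ≥0∞} (hf : Measurable f) :
    ∫⁻ v, f (dot k v, dot l v) = ‖cross k l‖ₑ⁻¹ * ∫⁻ v, f v :=
  lintegral_comp_linear h hf

theorem lintegral_prod_comp_dot {k l : ℚ_[p] × ℚ_[p]} (h : cross k l ≠ 0)
    {f : (ℚ_[p] × ℚ_[p]) × (ℚ_[p] × ℚ_[p]) → ℝ≥0∞} (hf : Measurable f) :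
    ∫⁻ x : (ℚ_[p] × ℚ_[p]) × (ℚ_[p] × ℚ_[p]),
      f ((dot k x.1, dot l x.1), (dot k x.2, dot l x.2)) = (‖cross k l‖ₑ ^ 2)⁻¹ * ∫⁻ x, f x := by
  have hfib (v : ℚ_[p] × ℚ_[p]) :
      ∫⁻ w, f (v, (dot k w, dot l w)) = ‖cross k l‖ₑ⁻¹ * ∫⁻ w, f (v, w) :=
    lintegral_comp_dot h (f := fun w ↦ f (v, w)) (by fun_prop)
  have hcomp : Measurable fun x : (ℚ_[p] × ℚ_[p]) × (ℚ_[p] × ℚ_[p]) ↦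
      f ((dot k x.1, dot l x.1), (dot k x.2, dot l x.2)) := by fun_prop
  rw [Measure.volume_eq_prod, lintegral_prod _ hcomp.aemeasurable,
    lintegral_prod _ hf.aemeasurable]
  simp only [hfib]
  rw [lintegral_const_mul _ (by fun_prop), lintegral_comp_dot h (f := fun v ↦ ∫⁻ w, f (v, w))
    (by fun_prop), ← mul_assoc, sq, ENNReal.mul_inv (by simp) (by simp)]

theorem setLIntegral_lattice_enorm_cross_rpow {ι : Type*} {k : ι → ℚ_[p] × ℚ_[p]} {i j : ι}
    (hij : cross (k i) (k j) ≠ 0)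
    (hmax : ∀ a b, ‖cross (k a) (k b)‖ ≤ ‖cross (k i) (k j)‖) (σ : ℝ) :
    ∫⁻ x : (ℚ_[p] × ℚ_[p]) × (ℚ_[p] × ℚ_[p]) in
        {x | (∀ l, ‖dot (k l) x.1‖ ≤ 1) ∧ ∀ l, ‖dot (k l) x.2‖ ≤ 1}, ‖cross x.1 x.2‖ₑ ^ σ =
      ‖cross (k i) (k j)‖ₑ ^ (-σ - 2) * detZeta p σ := by
  set D := cross (k i) (k j)
  have hD : ‖D‖ₑ ≠ 0 := enorm_ne_zero.2 hij
  set B : (ℚ_[p] × ℚ_[p]) × (ℚ_[p] × ℚ_[p]) → (ℚ_[p] × ℚ_[p]) × (ℚ_[p] × ℚ_[p]) :=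
    fun x ↦ ((dot (k i) x.1, dot (k j) x.1), (dot (k i) x.2, dot (k j) x.2))
  have hB : Measurable B := by fun_prop
  have hlattice : {x : (ℚ_[p] × ℚ_[p]) × (ℚ_[p] × ℚ_[p]) |
      (∀ l, ‖dot (k l) x.1‖ ≤ 1) ∧ ∀ l, ‖dot (k l) x.2‖ ≤ 1} = B ⁻¹' {x | ‖x‖ ≤ 1} := by
    ext x
    simp only [mem_ofPred_eq, norm_dot_le_one_iff_of_norm_cross_le hij hmax, mem_preimage, B,
      norm_prod_le_iff]
  set f : (ℚ_[p] × ℚ_[p]) × (ℚ_[p] × ℚ_[p]) → ℝ≥0∞ :=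
    {x | ‖x‖ ≤ 1}.indicator fun x ↦ ‖cross x.1 x.2‖ₑ ^ σ
  have hf : Measurable f := Measurable.indicator (by fun_prop) measurableSet_setOf_norm_le_one
  have hfB (x) : (B ⁻¹' {x | ‖x‖ ≤ 1}).indicator (fun x ↦ ‖cross x.1 x.2‖ₑ ^ σ) x =
      ‖D‖ₑ ^ (-σ) * f (B x) := by
    by_cases h : B x ∈ {x | ‖x‖ ≤ 1}
    · have hfx : f (B x) = ‖cross (B x).1 (B x).2‖ₑ ^ σ := indicator_of_mem h _
      rw [indicator_of_mem (mem_preimage.2 h), hfx, cross_dot_dot, enorm_mul,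
        ENNReal.mul_rpow_of_ne_top (by simp) (by simp), ← mul_assoc, ← ENNReal.rpow_add _ _ hD
        (by simp), neg_add_cancel, ENNReal.rpow_zero, one_mul]
    · rw [indicator_of_notMem (mem_preimage.not.2 h), show f (B x) = 0 from indicator_of_notMem h _,
        mul_zero]
  rw [hlattice, ← lintegral_indicator (hB measurableSet_setOf_norm_le_one), lintegral_congr hfB,
    lintegral_const_mul _ (by fun_prop), lintegral_prod_comp_dot hij hf,
    lintegral_indicator measurableSet_setOf_norm_le_one, setLIntegral_prod_enorm_cross_rpow,
    ← mul_assoc, ENNReal.rpow_sub _ _ hD (by simp), ENNReal.rpow_two, div_eq_mul_inv]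

end Planar

section Coordinates

theorem measurePreserving_of_measure_eq_one {G H : Type*} [AddGroup G] [TopologicalSpace G]
    [IsTopologicalAddGroup G] [MeasurableSpace G] [BorelSpace G] [AddGroup H] [TopologicalSpace H]
    [IsTopologicalAddGroup H] [LocallyCompactSpace H] [SecondCountableTopology H]
    [MeasurableSpace H] [BorelSpace H] (e : G ≃ₜ+ H) {μ : Measure G} {ν : Measure H}
    [μ.IsAddHaarMeasure] [ν.IsAddHaarMeasure] {K : Set H} (hK : MeasurableSet K)
    (hμ : μ (e ⁻¹' K) = 1) (hν : ν K = 1) : MeasurePreserving e μ ν := by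
  have he : Measurable e := e.continuous.measurable
  refine ⟨he, ?_⟩
  have := e.toAddEquiv.isAddHaarMeasure_map μ e.continuous e.symm.continuous
  exact addHaar_eq_of_measure_eq_one (μ.map e) ν ((Measure.map_apply he hK).trans hμ) hν

theorem volume_prod_setOf_norm_le_one {E F : Type*} [NormedAddCommGroup E] [NormedAddCommGroup F]
    [MeasureSpace E] [MeasureSpace F] [SFinite (volume : Measure F)] :
    volume {x : E × F | ‖x‖ ≤ 1} = volume {x : E | ‖x‖ ≤ 1} * volume {x : F | ‖x‖ ≤ 1} := by
  rw [← Measure.prod_prod, ← Measure.volume_eq_prod]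
  congr 1
  ext x
  exact norm_prod_le_iff

instance : BorelSpace (Matrix (Fin 2) (Fin 2) ℚ_[p]) :=
  inferInstanceAs (BorelSpace (Fin 2 → Fin 2 → ℚ_[p]))

instance : SecondCountableTopology (Matrix (Fin 2) (Fin 2) ℚ_[p]) :=
  inferInstanceAs (SecondCountableTopology (Fin 2 → Fin 2 → ℚ_[p]))

theorem norm_add_le_and_norm_sub_le_iff (hp : Odd p) {a b : ℚ_[p]} {r : ℝ} :
    ‖a + b‖ ≤ r ∧ ‖a - b‖ ≤ r ↔ ‖a‖ ≤ r ∧ ‖b‖ ≤ r := by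
  have himp {a b : ℚ_[p]} (h : ‖a‖ ≤ r ∧ ‖b‖ ≤ r) : ‖a + b‖ ≤ r ∧ ‖a - b‖ ≤ r :=
    ⟨(IsUltrametricDist.norm_add_le_max _ _).trans (max_le h.1 h.2),
      sub_eq_add_neg a b ▸ (IsUltrametricDist.norm_add_le_max _ _).trans
        (max_le h.1 ((norm_neg b).trans_le h.2))⟩
  refine ⟨fun h ↦ ?_, himp⟩
  have h2 := himp h
  rwa [show a + b + (a - b) = 2 * a by ring, show a + b - (a - b) = 2 * b by ring, norm_mul,
    norm_mul, norm_two hp, one_mul, one_mul] at h2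

instance {E F : Type*} [NormedAddCommGroup E] [MeasureSpace E] [BorelSpace E]
    [SecondCountableTopology E] [NormedAddCommGroup F] [MeasureSpace F] [BorelSpace F]
    [SecondCountableTopology F] [SFinite (volume : Measure E)] [SFinite (volume : Measure F)]
    [(volume : Measure E).IsAddHaarMeasure] [(volume : Measure F).IsAddHaarMeasure] :
    (volume : Measure (E × F)).IsAddHaarMeasure :=
  Measure.prod.instIsAddHaarMeasure _ _

variable (p) in
/-- A pair of matrices `(x, y)` as the pair of its first rows together with the pair of columns
formed by its second rows. -/
noncomputable def rowsColumns : VV p ≃ₜ+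
    ((ℚ_[p] × ℚ_[p]) × (ℚ_[p] × ℚ_[p])) × ((ℚ_[p] × ℚ_[p]) × (ℚ_[p] × ℚ_[p])) where
  toFun v := (((v.1 0 0, v.1 0 1), (v.2 0 0, v.2 0 1)), ((v.1 1 0, v.2 1 0), (v.1 1 1, v.2 1 1)))
  invFun x := (!![x.1.1.1, x.1.1.2; x.2.1.1, x.2.2.1], !![x.1.2.1, x.1.2.2; x.2.1.2, x.2.2.2])
  left_inv v := Prod.ext (Matrix.eta_fin_two _).symm (Matrix.eta_fin_two _).symm
  right_inv _ := rfl
  map_add' _ _ := rfl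
  continuous_toFun := by fun_prop
  continuous_invFun := by fun_prop

set_option synthInstance.maxSize 1000 in
theorem measurePreserving_rowsColumns {μ : Measure (VV p)} [μ.IsAddHaarMeasure]
    (hμ : μ {v : VV p | (∀ i j, ‖v.1 i j‖ ≤ 1) ∧ (∀ i j, ‖v.2 i j‖ ≤ 1)} = 1) :
    MeasurePreserving (rowsColumns p) μ volume := by
  refine measurePreserving_of_measure_eq_one (rowsColumns p) (K := {x | ‖x‖ ≤ 1})
    measurableSet_setOf_norm_le_one ?_ (by simp only [volume_prod_setOf_norm_le_one,
      volume_setOf_norm_le_one, mul_one])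
  rw [← hμ]
  congr 1
  ext v
  simp only [mem_preimage, mem_ofPred_eq, norm_prod_le_iff, Fin.forall_fin_two]
  tauto

variable (p) in
/-- The columns of the matrix `!![τ + ε, b; c, τ - ε]` attached to `(τ, b, ε, c)`. -/
noncomputable def columns : ℚ_[p] × ℚ_[p] × ℚ_[p] × ℚ_[p] ≃ₜ+
    (ℚ_[p] × ℚ_[p]) × (ℚ_[p] × ℚ_[p]) where
  toFun z := ((z.1 + z.2.2.1, z.2.2.2), (z.2.1, z.1 - z.2.2.1))
  invFun n := ((n.1.1 + n.2.2) / 2, n.2.1, (n.1.1 - n.2.2) / 2, n.1.2)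
  left_inv z := by ext <;> dsimp only <;> ring
  right_inv n := by ext <;> dsimp only <;> ring
  map_add' z z' := by ext <;> simp only [Prod.fst_add, Prod.snd_add] <;> ring
  continuous_toFun := by fun_prop
  continuous_invFun := by fun_prop

theorem measurePreserving_columns (hp : Odd p) : MeasurePreserving (columns p) := by
  refine measurePreserving_of_measure_eq_one (columns p) (K := {x | ‖x‖ ≤ 1})
    measurableSet_setOf_norm_le_one ?_ (by simp only [volume_prod_setOf_norm_le_one,
      volume_setOf_norm_le_one, mul_one])
  have hpre : columns p ⁻¹' {x | ‖x‖ ≤ 1} = {z | ‖z‖ ≤ 1} := by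
    ext z
    simp only [mem_preimage, mem_ofPred_eq, norm_prod_le_iff]
    change (‖z.1 + z.2.2.1‖ ≤ 1 ∧ _) ∧ (_ ∧ ‖z.1 - z.2.2.1‖ ≤ 1) ↔ _
    have := norm_add_le_and_norm_sub_le_iff hp (a := z.1) (b := z.2.2.1) (r := 1)
    tauto
  rw [hpre]
  simp only [volume_prod_setOf_norm_le_one, volume_setOf_norm_le_one, mul_one]

theorem ae_cross_ne_zero : ∀ᵐ y : (ℚ_[p] × ℚ_[p]) × (ℚ_[p] × ℚ_[p]), cross y.1 y.2 ≠ 0 := by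
  have hm : MeasurableSet {y : (ℚ_[p] × ℚ_[p]) × (ℚ_[p] × ℚ_[p]) | cross y.1 y.2 ≠ 0} :=
    (measurableSet_singleton 0).compl.preimage (by fun_prop)
  refine (Measure.ae_prod_iff_ae_ae hm).2 ?_
  filter_upwards [Measure.quasiMeasurePreserving_fst.ae ae_ne_zero] with v hv
  have hmv : MeasurableSet {w : ℚ_[p] × ℚ_[p] | cross v w ≠ 0} :=
    (measurableSet_singleton 0).compl.preimage (by fun_prop)
  refine (Measure.ae_prod_iff_ae_ae hmv).2 (.of_forall fun a ↦ ?_)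
  filter_upwards [Measure.ae_ne volume (v.2 * a / v.1)] with b hb h
  have h : v.1 * b - v.2 * a = 0 := h
  exact hb (by rw [eq_div_iff hv]; linear_combination h)

/-- The pair of matrices whose first rows are `y.1` and `y.2` and whose second rows are the images
of these first rows under `!![τ + ε, b; c, τ - ε]`, where `z = (τ, b, ε, c)`. Almost every point
of `V` is of this form. -/
noncomputable def pencil (z : ℚ_[p] × ℚ_[p] × ℚ_[p] × ℚ_[p])
    (y : (ℚ_[p] × ℚ_[p]) × (ℚ_[p] × ℚ_[p])) : VV p :=
  (!![y.1.1, y.1.2; dot (columns p z).1 y.1, dot (columns p z).2 y.1],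
    !![y.2.1, y.2.2; dot (columns p z).1 y.2, dot (columns p z).2 y.2])

theorem lintegral_eq_lintegral_pencil (hp : Odd p) {μ : Measure (VV p)} [μ.IsAddHaarMeasure]
    (hμ : μ {v : VV p | (∀ i j, ‖v.1 i j‖ ≤ 1) ∧ (∀ i j, ‖v.2 i j‖ ≤ 1)} = 1)
    {f : VV p → ℝ≥0∞} (hf : Measurable f) :
    ∫⁻ v, f v ∂μ = ∫⁻ z, ∫⁻ y, ‖cross y.1 y.2‖ₑ ^ 2 * f (pencil z y) := by
  have hsymm : Measurable (rowsColumns p).symm := (rowsColumns p).symm.continuous.measurable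
  set g := fun x ↦ f ((rowsColumns p).symm x)
  have hg : Measurable g := hf.comp hsymm
  have hgf (v) : g (rowsColumns p v) = f v := congrArg f ((rowsColumns p).symm_apply_apply v)
  have hpencil (z y) : f (pencil z y) =
      g (y, ((dot y.1 (columns p z).1, dot y.2 (columns p z).1),
        (dot y.1 (columns p z).2, dot y.2 (columns p z).2))) := by
    simp only [g, pencil, dot_comm]
    rfl
  calc ∫⁻ v, f v ∂μ = ∫⁻ x, g x := by
        rw [← (measurePreserving_rowsColumns hμ).lintegral_comp hg]
        simp only [hgf]
    _ = ∫⁻ y, ∫⁻ n : (ℚ_[p] × ℚ_[p]) × (ℚ_[p] × ℚ_[p]), ‖cross y.1 y.2‖ₑ ^ 2 *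
          g (y, ((dot y.1 n.1, dot y.2 n.1), (dot y.1 n.2, dot y.2 n.2))) := by
        rw [Measure.volume_eq_prod, lintegral_prod _ hg.aemeasurable]
        refine lintegral_congr_ae (ae_cross_ne_zero.mono fun y hy ↦ ?_)
        have hy' : ‖cross y.1 y.2‖ₑ ^ 2 ≠ 0 := pow_ne_zero 2 (enorm_ne_zero.2 hy)
        dsimp only
        rw [lintegral_const_mul _ (by fun_prop), lintegral_prod_comp_dot hy (f := fun u ↦ g (y, u))
          (by fun_prop), ← mul_assoc, ENNReal.mul_inv_cancel hy' (by finiteness), one_mul]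
    _ = ∫⁻ z, ∫⁻ y, ‖cross y.1 y.2‖ₑ ^ 2 * f (pencil z y) := by
        rw [lintegral_lintegral_swap (by fun_prop),
          ← (measurePreserving_columns hp).lintegral_comp (by fun_prop)]
        simp only [hpencil]

end Coordinates

section Cells

theorem columns_apply (z : ℚ_[p] × ℚ_[p] × ℚ_[p] × ℚ_[p]) :
    columns p z = ((z.1 + z.2.2.1, z.2.2.2), (z.2.1, z.1 - z.2.2.1)) := rfl

theorem Fmap1_pencil (z : ℚ_[p] × ℚ_[p] × ℚ_[p] × ℚ_[p])
    (y : (ℚ_[p] × ℚ_[p]) × (ℚ_[p] × ℚ_[p])) :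
    Fmap1 (pencil z y) = cross y.1 y.2 • (1, 2 * z.1, z.1 ^ 2 - quarterDisc z.2) := by
  simp only [Fmap1, pencil, columns_apply, cross, dot, quarterDisc, of_apply,
    cons_val', cons_val_zero, cons_val_one, cons_val_fin_one, Prod.smul_mk, smul_eq_mul,
    Prod.mk.injEq]
  exact ⟨by ring, by ring, by ring⟩

theorem Fmap2_pencil (z : ℚ_[p] × ℚ_[p] × ℚ_[p] × ℚ_[p])
    (y : (ℚ_[p] × ℚ_[p]) × (ℚ_[p] × ℚ_[p])) :
    Fmap2 (pencil z y) = cross y.1 y.2 • (z.2.2.2, -(2 * z.2.2.1), -z.2.1) := by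
  simp only [Fmap2, pencil, columns_apply, cross, dot, of_apply,
    cons_val', cons_val_zero, cons_val_one, cons_val_fin_one, Prod.smul_mk, smul_eq_mul,
    Prod.mk.injEq]
  exact ⟨by ring, by ring, by ring⟩

theorem Pq_eq_discrim_Fmap1 (v : VV p) :
    Pq v = (Fmap1 v).2.1 ^ 2 - 4 * (Fmap1 v).1 * (Fmap1 v).2.2 := by
  simp only [Pq, Fmap1, adjugate_fin_two, det_fin_two, Matrix.sub_apply, mul_apply,
    Fin.sum_univ_two, of_apply, cons_val', cons_val_zero, cons_val_one, cons_val_fin_one]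
  ring

theorem Pq_pencil (z : ℚ_[p] × ℚ_[p] × ℚ_[p] × ℚ_[p]) (y : (ℚ_[p] × ℚ_[p]) × (ℚ_[p] × ℚ_[p])) :
    Pq (pencil z y) = quarterDisc z.2 * (2 * cross y.1 y.2) ^ 2 := by
  rw [Pq_eq_discrim_Fmap1, Fmap1_pencil]
  simp only [Prod.smul_mk, smul_eq_mul]
  ring

theorem mcoord_smul (a : ℚ_[p]) (t : ℚ_[p] × ℚ_[p] × ℚ_[p]) : mcoord (a • t) = ‖a‖ * mcoord t := by
  simp only [mcoord, Prod.smul_fst, Prod.smul_snd, norm_smul, mul_max_of_nonneg _ _ (norm_nonneg a)]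

variable (p) in
/-- The set `V_1(ℤ_p)`, see `Vd_unit_sq`. -/
def splitLocus : Set (VV p) :=
  {v | ((∀ i j, ‖v.1 i j‖ ≤ 1) ∧ ∀ i j, ‖v.2 i j‖ ≤ 1) ∧ IsSquare (Pq v) ∧ Pq v ≠ 0}

variable (p) in
/-- The part of `V_1(ℤ_p)` on which the two levels are `l₁` and `l₂`. -/
def cell (l₁ l₂ : ℕ) : Set (VV p) :=
  {v ∈ splitLocus p | mcoord (Fmap1 v) ^ 2 = ‖Pq v‖ * (p : ℝ) ^ (2 * l₁) ∧
    mcoord (Fmap2 v) ^ 2 = ‖Pq v‖ * (p : ℝ) ^ (2 * l₂)}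

/-- The columns of the block matrix `(1 N)`, where `N = !![τ + ε, b; c, τ - ε]` is the matrix
attached to `z = (τ, b, ε, c)`. -/
noncomputable def blockColumns (z : ℚ_[p] × ℚ_[p] × ℚ_[p] × ℚ_[p]) : Fin 4 → ℚ_[p] × ℚ_[p] :=
  ![(1, 0), (0, 1), (columns p z).1, (columns p z).2]

/-- The lattice of pairs of rows `y` for which `pencil z y` is integral, see
`pencil_integral_iff`. -/
def integralRows (z : ℚ_[p] × ℚ_[p] × ℚ_[p] × ℚ_[p]) : Set ((ℚ_[p] × ℚ_[p]) × (ℚ_[p] × ℚ_[p])) :=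
  {y | (∀ l, ‖dot (blockColumns z l) y.1‖ ≤ 1) ∧ ∀ l, ‖dot (blockColumns z l) y.2‖ ≤ 1}

theorem pencil_integral_iff (z : ℚ_[p] × ℚ_[p] × ℚ_[p] × ℚ_[p])
    (y : (ℚ_[p] × ℚ_[p]) × (ℚ_[p] × ℚ_[p])) :
    ((∀ i j, ‖(pencil z y).1 i j‖ ≤ 1) ∧ ∀ i j, ‖(pencil z y).2 i j‖ ≤ 1) ↔
      y ∈ integralRows z := by
  have hrow (v : ℚ_[p] × ℚ_[p]) :
      (∀ i j, ‖!![v.1, v.2; dot (columns p z).1 v, dot (columns p z).2 v] i j‖ ≤ 1) ↔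
        ∀ l, ‖dot (blockColumns z l) v‖ ≤ 1 := by
    simp [Fin.forall_fin_succ, blockColumns, dot, and_assoc]
  exact and_congr (hrow y.1) (hrow y.2)

theorem pencil_mem_cell_iff (hp : Odd p) {z : ℚ_[p] × ℚ_[p] × ℚ_[p] × ℚ_[p]}
    {y : (ℚ_[p] × ℚ_[p]) × (ℚ_[p] × ℚ_[p])} (hy : cross y.1 y.2 ≠ 0) {l₁ l₂ : ℕ} :
    pencil z y ∈ cell p l₁ l₂ ↔ z ∈ bilevelSet p l₁ l₂ ∧ y ∈ integralRows z := by
  have hD : ‖cross y.1 y.2‖ ^ 2 ≠ 0 := pow_ne_zero 2 (norm_ne_zero_iff.2 hy)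
  have h2D : 2 * cross y.1 y.2 ≠ 0 := mul_ne_zero two_ne_zero hy
  have hsq : IsSquare (Pq (pencil z y)) ↔ IsSquare (quarterDisc z.2) := by
    rw [Pq_pencil]
    exact ⟨fun h ↦ by simpa [h2D] using h.div (.sq (2 * cross y.1 y.2)), fun h ↦ h.mul (.sq _)⟩
  have hne : Pq (pencil z y) ≠ 0 ↔ quarterDisc z.2 ≠ 0 := by
    rw [Pq_pencil, mul_ne_zero_iff, and_iff_left (pow_ne_zero 2 h2D)]
  have hnorm (a : ℝ) : ‖Pq (pencil z y)‖ * a = ‖cross y.1 y.2‖ ^ 2 * (‖quarterDisc z.2‖ * a) := by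
    rw [Pq_pencil, norm_mul, norm_pow, norm_mul, norm_two hp]
    ring
  have h₁ : mcoord (Fmap1 (pencil z y)) =
      ‖cross y.1 y.2‖ * max (max 1 ‖z.1‖) ‖z.1 ^ 2 - quarterDisc z.2‖ := by
    rw [Fmap1_pencil, mcoord_smul, mcoord, norm_one, norm_mul, norm_two hp, one_mul]
  have h₂ : mcoord (Fmap2 (pencil z y)) = ‖cross y.1 y.2‖ * mcoord z.2 := by
    rw [Fmap2_pencil, mcoord_smul, mcoord, mcoord, norm_neg, norm_neg, norm_mul, norm_two hp,
      one_mul, max_comm, ← max_assoc, max_right_comm, max_comm ‖z.2.1‖, max_right_comm]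
  rw [cell, splitLocus, mem_ofPred_eq, mem_ofPred_eq, pencil_integral_iff, hsq, hne, h₁, h₂,
    mul_pow, mul_pow, hnorm, hnorm, mul_right_inj' hD, mul_right_inj' hD]
  simp only [bilevelSet, polyLevel, levelSet, mem_ofPred_eq]
  tauto

end Cells

section Lattice

theorem forall_norm_cross_blockColumns_le_iff (hp : Odd p)
    (z : ℚ_[p] × ℚ_[p] × ℚ_[p] × ℚ_[p]) (r : ℝ) :
    (∀ a b, ‖cross (blockColumns z a) (blockColumns z b)‖ ≤ r) ↔
      max (max 1 ‖z.1‖) ‖z.1 ^ 2 - quarterDisc z.2‖ ≤ r ∧ mcoord z.2 ≤ r := by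
  have hε := norm_add_le_and_norm_sub_le_iff hp (a := z.1) (b := z.2.2.1) (r := r)
  have hr : 1 ≤ r → 0 ≤ r := zero_le_one.trans
  have hneg : ‖-z.2.2.1 + -z.1‖ = ‖z.1 + z.2.2.1‖ := by rw [← neg_add, norm_neg, add_comm]
  have hdet : (z.1 + z.2.2.1) * (z.1 - z.2.2.1) - z.2.1 * z.2.2.2 =
      z.1 ^ 2 - quarterDisc z.2 := by rw [quarterDisc]; ring
  have hdet' : z.2.1 * z.2.2.2 - (z.1 - z.2.2.1) * (z.1 + z.2.2.1) =
      quarterDisc z.2 - z.1 ^ 2 := by rw [quarterDisc]; ring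
  simp only [Fin.forall_fin_succ, blockColumns, columns_apply, cross]
  simp only [cons_val_zero, mul_zero, mul_one, sub_self, norm_zero, Fin.succ_zero_eq_one,
    cons_val_one, sub_zero, norm_one, Fin.succ_one_eq_two, cons_val, one_mul, zero_mul,
    Fin.reduceSucc, cons_val_succ, cons_val_fin_one, IsEmpty.forall_iff, and_true, zero_sub,
    norm_neg, neg_add_rev, neg_sub, mcoord, sup_le_iff, hdet, hdet', hneg, mul_comm z.2.2.2,
    mul_comm (z.1 - z.2.2.1) z.2.1, norm_sub_rev z.2.2.1 z.1, norm_sub_rev (quarterDisc z.2)]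
  tauto

theorem exists_norm_cross_blockColumns_sq_eq (hp : Odd p) {l₁ l₂ : ℕ}
    {z : ℚ_[p] × ℚ_[p] × ℚ_[p] × ℚ_[p]} (hz : z ∈ bilevelSet p l₁ l₂) :
    ∃ i j, cross (blockColumns z i) (blockColumns z j) ≠ 0 ∧
      (∀ a b, ‖cross (blockColumns z a) (blockColumns z b)‖ ≤
        ‖cross (blockColumns z i) (blockColumns z j)‖) ∧
      ‖cross (blockColumns z i) (blockColumns z j)‖ ^ 2 =
        ‖quarterDisc z.2‖ * (p : ℝ) ^ (2 * max l₁ l₂) := by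
  obtain ⟨⟨i, j⟩, hij⟩ := Finite.exists_max fun x : Fin 4 × Fin 4 ↦
    ‖cross (blockColumns z x.1) (blockColumns z x.2)‖
  have hmax (a b : Fin 4) := hij (a, b)
  dsimp only at hmax
  set D := cross (blockColumns z i) (blockColumns z j)
  set A := max (max 1 ‖z.1‖) ‖z.1 ^ 2 - quarterDisc z.2‖
  have hD : ‖D‖ = max A (mcoord z.2) := by
    have hle := (forall_norm_cross_blockColumns_le_iff hp z _).1 hmax
    exact le_antisymm ((forall_norm_cross_blockColumns_le_iff hp z _).2
      ⟨le_max_left _ _, le_max_right _ _⟩ i j) (max_le hle.1 hle.2)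
  have hA : 1 ≤ A := (le_max_left _ _).trans (le_max_left _ _)
  have hB : 0 ≤ mcoord z.2 := (norm_nonneg _).trans (le_max_right _ _)
  have hpow : Monotone fun l ↦ ‖quarterDisc z.2‖ * (p : ℝ) ^ (2 * l) := fun l l' h ↦ by
    have := one_lt_cast (p := p)
    dsimp only
    gcongr
    exact this.le
  obtain ⟨hA', -, -, hB'⟩ := hz
  refine ⟨i, j, norm_pos_iff.1 ?_, hmax, ?_⟩
  · rw [hD]
    exact lt_max_of_lt_left (one_pos.trans_le hA)
  · rw [hD, (pow_left_strictMonoOn₀ two_ne_zero).monotoneOn.map_max (zero_le_one.trans hA) hB,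
      hA', hB', ← hpow.map_max]

theorem setLIntegral_integralRows (hp : Odd p) {l₁ l₂ : ℕ}
    {z : ℚ_[p] × ℚ_[p] × ℚ_[p] × ℚ_[p]} (hz : z ∈ bilevelSet p l₁ l₂) (s : ℝ) :
    ∫⁻ y in integralRows z, ‖cross y.1 y.2‖ₑ ^ (2 * s - 2) =
      ‖quarterDisc z.2‖ₑ ^ (-s) *
        ((p : ℝ≥0∞) ^ (-(2 * s))) ^ max l₁ l₂ * detZeta p (2 * s - 2) := by
  obtain ⟨i, j, hij, hmax, hsq⟩ := exists_norm_cross_blockColumns_sq_eq hp hz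
  have hsq' : ‖cross (blockColumns z i) (blockColumns z j)‖ₑ ^ 2 =
      ‖quarterDisc z.2‖ₑ * p ^ (2 * max l₁ l₂) := by
    rw [← ofReal_norm, ← ofReal_norm, ← ENNReal.ofReal_pow (norm_nonneg _), hsq,
      ENNReal.ofReal_mul (norm_nonneg _), ENNReal.ofReal_pow cast_pos.le, ENNReal.ofReal_natCast]
  rw [integralRows, setLIntegral_lattice_enorm_cross_rpow hij hmax]
  congr 1
  calc ‖cross (blockColumns z i) (blockColumns z j)‖ₑ ^ (-(2 * s - 2) - 2)
      = (‖cross (blockColumns z i) (blockColumns z j)‖ₑ ^ 2) ^ (-s) := by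
        rw [← ENNReal.rpow_two, ← ENNReal.rpow_mul]
        ring_nf
    _ = ‖quarterDisc z.2‖ₑ ^ (-s) * ((p : ℝ≥0∞) ^ (-(2 * s))) ^ max l₁ l₂ := by
        rw [hsq', ENNReal.mul_rpow_of_ne_top (by simp) (by simp), ← ENNReal.rpow_natCast,
          ← ENNReal.rpow_natCast, ← ENNReal.rpow_mul, ← ENNReal.rpow_mul]
        push_cast
        ring_nf

@[fun_prop]
theorem measurable_Pq : Measurable (Pq : VV p → ℚ_[p]) := by
  have : Continuous (Pq : VV p → ℚ_[p]) := by unfold Pq; fun_prop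
  exact this.measurable

theorem measurable_mcoord : Measurable (mcoord : ℚ_[p] × ℚ_[p] × ℚ_[p] → ℝ) := by
  unfold mcoord
  fun_prop

theorem measurableSet_splitLocus (hp : Odd p) : MeasurableSet (splitLocus p) := by
  have hint : IsClosed {v : VV p | (∀ i j, ‖v.1 i j‖ ≤ 1) ∧ ∀ i j, ‖v.2 i j‖ ≤ 1} := by
    simp only [ofPred_and, ofPred_forall]
    exact .inter
      (isClosed_iInter fun i ↦ isClosed_iInter fun j ↦ isClosed_le (by fun_prop) (by fun_prop))
      (isClosed_iInter fun i ↦ isClosed_iInter fun j ↦ isClosed_le (by fun_prop) (by fun_prop))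
  exact hint.measurableSet.inter (((measurableSet_isSquare hp).preimage measurable_Pq).inter
    ((measurableSet_singleton 0).preimage measurable_Pq).compl)

theorem measurableSet_cell (hp : Odd p) (l₁ l₂ : ℕ) : MeasurableSet (cell p l₁ l₂) := by
  have h₁ : Continuous (Fmap1 : VV p → _) := by unfold Fmap1; fun_prop
  have h₂ : Continuous (Fmap2 : VV p → _) := by unfold Fmap2; fun_prop
  have hlevel {F : VV p → ℚ_[p] × ℚ_[p] × ℚ_[p]} (hF : Continuous F) (l : ℕ) :
      MeasurableSet {v | mcoord (F v) ^ 2 = ‖Pq v‖ * (p : ℝ) ^ (2 * l)} :=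
    measurableSet_eq_fun ((measurable_mcoord.comp hF.measurable).pow_const 2) (by fun_prop)
  exact (measurableSet_splitLocus hp).inter ((hlevel h₁ l₁).inter (hlevel h₂ l₂))

theorem enorm_Pq_pencil_rpow (hp : Odd p) {z : ℚ_[p] × ℚ_[p] × ℚ_[p] × ℚ_[p]}
    {y : (ℚ_[p] × ℚ_[p]) × (ℚ_[p] × ℚ_[p])} (hy : cross y.1 y.2 ≠ 0) (s : ℝ) :
    ‖cross y.1 y.2‖ₑ ^ 2 * ‖Pq (pencil z y)‖ₑ ^ (s - 2) =
      ‖quarterDisc z.2‖ₑ ^ (s - 2) * ‖cross y.1 y.2‖ₑ ^ (2 * s - 2) := by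
  have h2 : ‖(2 : ℚ_[p])‖ₑ = 1 := by rw [← ofReal_norm, norm_two hp, ENNReal.ofReal_one]
  have hy' : ‖cross y.1 y.2‖ₑ ≠ 0 := enorm_ne_zero.2 hy
  rw [Pq_pencil, enorm_mul, enorm_pow, enorm_mul, h2, one_mul,
    ENNReal.mul_rpow_of_ne_top (by simp) (by simp), mul_left_comm, ← ENNReal.rpow_two,
    ← ENNReal.rpow_mul, ← ENNReal.rpow_add _ _ hy' (by simp)]
  ring_nf

theorem measurableSet_integralRows (z : ℚ_[p] × ℚ_[p] × ℚ_[p] × ℚ_[p]) :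
    MeasurableSet (integralRows z) := by
  have h (l) : MeasurableSet {v : ℚ_[p] × ℚ_[p] | ‖dot (blockColumns z l) v‖ ≤ 1} :=
    measurableSet_le (by fun_prop) (by fun_prop)
  simp only [integralRows, ofPred_and, ofPred_forall]
  exact (MeasurableSet.iInter fun l ↦ (h l).preimage measurable_fst).inter
    (MeasurableSet.iInter fun l ↦ (h l).preimage measurable_snd)

theorem lintegral_pencil_indicator_cell (hp : Odd p) (l₁ l₂ : ℕ) (s : ℝ)
    (z : ℚ_[p] × ℚ_[p] × ℚ_[p] × ℚ_[p]) :
    ∫⁻ y, ‖cross y.1 y.2‖ₑ ^ 2 *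
        (cell p l₁ l₂).indicator (fun v ↦ ‖Pq v‖ₑ ^ (s - 2)) (pencil z y) =
      (bilevelSet p l₁ l₂).indicator (fun z ↦ (‖quarterDisc z.2‖ₑ ^ 2)⁻¹) z *
        (((p : ℝ≥0∞) ^ (-(2 * s))) ^ max l₁ l₂ * detZeta p (2 * s - 2)) := by
  by_cases hz : z ∈ bilevelSet p l₁ l₂
  · have ht : ‖quarterDisc z.2‖ₑ ≠ 0 := enorm_ne_zero.2 hz.2.2.1
    have hexp : s - 2 + -s = -2 := by ring
    calc ∫⁻ y, ‖cross y.1 y.2‖ₑ ^ 2 *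
          (cell p l₁ l₂).indicator (fun v ↦ ‖Pq v‖ₑ ^ (s - 2)) (pencil z y)
        = ∫⁻ y in integralRows z,
            ‖quarterDisc z.2‖ₑ ^ (s - 2) * ‖cross y.1 y.2‖ₑ ^ (2 * s - 2) := by
          rw [← lintegral_indicator (measurableSet_integralRows z)]
          refine lintegral_congr_ae (ae_cross_ne_zero.mono fun y hy ↦ ?_)
          by_cases h : y ∈ integralRows z <;>
            simp [h, hz, pencil_mem_cell_iff hp hy, enorm_Pq_pencil_rpow hp hy]
      _ = _ := by
          rw [lintegral_const_mul _ (by fun_prop), setLIntegral_integralRows hp hz,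
            indicator_of_mem hz, mul_assoc (_ ^ (-s)), ← mul_assoc,
            ← ENNReal.rpow_add _ _ ht (by simp), hexp, ENNReal.rpow_neg, ENNReal.rpow_two]
  · rw [indicator_of_notMem hz, zero_mul, lintegral_congr_ae (g := 0), Pi.zero_def, lintegral_zero]
    exact ae_cross_ne_zero.mono fun y hy ↦ by simp [pencil_mem_cell_iff hp hy, hz]

theorem setLIntegral_cell (hp : Odd p) {μ : Measure (VV p)} [μ.IsAddHaarMeasure]
    (hμ : μ {v : VV p | (∀ i j, ‖v.1 i j‖ ≤ 1) ∧ (∀ i j, ‖v.2 i j‖ ≤ 1)} = 1) (l₁ l₂ : ℕ) (s : ℝ) :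
    ∫⁻ v in cell p l₁ l₂, ‖Pq v‖ₑ ^ (s - 2) ∂μ =
      2⁻¹ * (1 + (p : ℝ≥0∞)⁻¹) ^ 2 * detZeta p (2 * s - 2) *
        (levelWeight p l₁ * levelWeight p l₂ * ((p : ℝ≥0∞) ^ (-(2 * s))) ^ max l₁ l₂) := by
  have hcell := measurableSet_cell hp l₁ l₂
  have hlevel := measurableSet_bilevelSet hp l₁ l₂
  rw [← lintegral_indicator hcell, lintegral_eq_lintegral_pencil hp hμ
    (Measurable.indicator (by fun_prop) hcell),
    lintegral_congr (lintegral_pencil_indicator_cell hp l₁ l₂ s),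
    lintegral_mul_const _ (Measurable.indicator (by fun_prop) hlevel), lintegral_indicator hlevel,
    setLIntegral_bilevelSet hp]
  ring

end Lattice

section Series

theorem exists_abs_le_mul_pow_of_recurrence {a : ℕ → ℝ} {A B : ℝ}
    (h : ∀ n, a (n + 2) = A * a (n + 1) - B * a n) :
    ∃ C, ∀ n, |a n| ≤ C * (|A| + |B| + 1) ^ n := by
  set K := |A| + |B| + 1
  have hK : 1 ≤ K := le_add_of_nonneg_left (by positivity)
  refine ⟨|a 0| + |a 1|, fun n ↦ ?_⟩
  set C := |a 0| + |a 1|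
  have hC : 0 ≤ C := by positivity
  induction n using Nat.twoStepInduction with
  | zero => simp [C]
  | one =>
    calc |a 1| ≤ C := le_add_of_nonneg_left (abs_nonneg _)
      _ ≤ C * K ^ 1 := by simpa using le_mul_of_one_le_right hC hK
  | more n ih₀ ih₁ =>
    calc |a (n + 2)| ≤ |A| * |a (n + 1)| + |B| * |a n| := by
          rw [h, ← abs_mul, ← abs_mul]
          exact abs_sub _ _
      _ ≤ |A| * (C * K ^ (n + 1)) + |B| * (C * K ^ (n + 1)) := by
          gcongr
          exact ih₀.trans (by gcongr; exact n.le_succ)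
      _ = C * K ^ (n + 1) * (|A| + |B|) := by ring
      _ ≤ C * K ^ (n + 1) * K := by gcongr; exact le_add_of_nonneg_right zero_le_one
      _ = C * K ^ (n + 2) := by ring

theorem sum_product_mul_mul_pow_max {R : Type*} [CommRing R] (a : ℕ → R) (x : R) (N : ℕ) :
    ∑ l ∈ Finset.range N ×ˢ Finset.range N, a l.1 * a l.2 * x ^ max l.1 l.2 =
      ∑ n ∈ Finset.range N,
        x ^ n * ((∑ l ∈ Finset.range (n + 1), a l) ^ 2 - (∑ l ∈ Finset.range n, a l) ^ 2) := by
  induction N with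
  | zero => simp
  | succ N ih =>
    have hmax (f : ℕ → R) : ∑ l ∈ Finset.range N, f l * x ^ max l N =
        (∑ l ∈ Finset.range N, f l) * x ^ N := by
      rw [Finset.sum_mul]
      exact Finset.sum_congr rfl fun l hl ↦ by rw [max_eq_right (Finset.mem_range.1 hl).le]
    rw [Finset.sum_product] at ih ⊢
    simp only [Finset.sum_range_succ, Finset.sum_add_distrib, ih, max_self, max_comm N, hmax,
      ← Finset.sum_mul, ← Finset.mul_sum]
    ring

theorem hasSum_mul_mul_pow_max {a : ℕ → ℝ} {x S : ℝ}
    (ha : Summable fun l : ℕ × ℕ ↦ a l.1 * a l.2 * x ^ max l.1 l.2)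
    (hS : HasSum (fun n ↦ (∑ l ∈ Finset.range (n + 1), a l) ^ 2 * x ^ n) S) :
    HasSum (fun l : ℕ × ℕ ↦ a l.1 * a l.2 * x ^ max l.1 l.2) ((1 - x) * S) := by
  have hshift : HasSum (fun n ↦ (∑ l ∈ Finset.range n, a l) ^ 2 * x ^ n) (x * S) := by
    rw [← hasSum_nat_add_iff' 1]
    simpa [pow_succ' x, mul_left_comm] using hS.mul_left x
  have hdiff : HasSum (fun n ↦ x ^ n * ((∑ l ∈ Finset.range (n + 1), a l) ^ 2 -
      (∑ l ∈ Finset.range n, a l) ^ 2)) ((1 - x) * S) := by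
    simpa only [mul_comm (x ^ _), sub_mul, one_mul] using hS.sub hshift
  have hsquare : Tendsto (fun N ↦ Finset.range N ×ˢ Finset.range N) atTop atTop :=
    tendsto_atTop_finset_of_monotone
      (fun M N h ↦ Finset.product_subset_product (Finset.range_mono h) (Finset.range_mono h))
      fun l ↦ ⟨max l.1 l.2 + 1, by simp⟩
  have hpartial := ha.hasSum.comp hsquare
  simp only [Function.comp_def, sum_product_mul_mul_pow_max] at hpartial
  rw [← tendsto_nhds_unique hpartial hdiff.tendsto_sum_nat]
  exact ha.hasSum

theorem mul_eq_of_hasSum_sq_of_recurrence {u : ℕ → ℝ} {t q x S : ℝ}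
    (hu : ∀ n, u (n + 2) = t * u (n + 1) - q * u n) (hS : HasSum (fun n ↦ u n ^ 2 * x ^ n) S) :
    (1 - (t ^ 2 - q) * x + q * (t ^ 2 - q) * x ^ 2 - q ^ 3 * x ^ 3) * S =
      u 0 ^ 2 + (u 1 ^ 2 - (t ^ 2 - q) * u 0 ^ 2) * x + q * (u 1 - t * u 0) ^ 2 * x ^ 2 := by
  have hrec (n : ℕ) : u (n + 3) ^ 2 * x ^ (n + 3) =
      (t ^ 2 - q) * x * (u (n + 2) ^ 2 * x ^ (n + 2)) -
        q * (t ^ 2 - q) * x ^ 2 * (u (n + 1) ^ 2 * x ^ (n + 1)) +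
        q ^ 3 * x ^ 3 * (u n ^ 2 * x ^ n) := by
    rw [hu (n + 1), hu n]
    ring
  have h (k : ℕ) := (hasSum_nat_add_iff' k).2 hS
  have hsum := (((h 2).mul_left ((t ^ 2 - q) * x)).sub
    ((h 1).mul_left (q * (t ^ 2 - q) * x ^ 2))).add (hS.mul_left (q ^ 3 * x ^ 3))
  have heq := (h 3).unique (by simpa only [hrec] using hsum)
  simp only [Finset.sum_range_succ, Finset.sum_range_zero, hu 0] at heq
  linear_combination heq

theorem denominator_pos {t q x : ℝ} (hq : 0 ≤ q) (hx : 0 ≤ x) (hqx : q * x < 1)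
    (htx : t ^ 2 * x < 1) :
    0 < 1 - (t ^ 2 - q) * x + q * (t ^ 2 - q) * x ^ 2 - q ^ 3 * x ^ 3 := by
  have hfactor : 1 - (t ^ 2 - q) * x + q * (t ^ 2 - q) * x ^ 2 - q ^ 3 * x ^ 3 =
      (1 - q * x) * ((1 + q * x) ^ 2 - t ^ 2 * x) := by ring
  have hone : 1 ≤ (1 + q * x) ^ 2 := one_le_pow₀ (le_add_of_nonneg_right (by positivity))
  rw [hfactor]
  exact mul_pos (sub_pos.2 hqx) (sub_pos.2 (htx.trans_le hone))

theorem summable_mul_mul_pow_max {a : ℕ → ℝ} {C K y : ℝ} (ha : ∀ n, |a n| ≤ C * K ^ n)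
    (hK : 0 ≤ K) (hy : 0 ≤ y) (hy1 : y ≤ 1) (hKy : K * y < 1) :
    Summable fun l : ℕ × ℕ ↦ a l.1 * a l.2 * (y ^ 2) ^ max l.1 l.2 := by
  have hgeom : Summable fun n : ℕ ↦ C * (K * y) ^ n :=
    (summable_geometric_of_lt_one (mul_nonneg hK hy) hKy).mul_left C
  have hterm (n : ℕ) : |a n| * y ^ n ≤ C * (K * y) ^ n := by
    rw [mul_pow, ← mul_assoc]
    gcongr
    exact ha n
  have hnonneg (n : ℕ) : 0 ≤ C * (K * y) ^ n := (by positivity : 0 ≤ |a n| * y ^ n).trans (hterm n)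
  refine (hgeom.mul_of_nonneg hgeom hnonneg hnonneg).of_norm_bounded fun l ↦ ?_
  calc ‖a l.1 * a l.2 * (y ^ 2) ^ max l.1 l.2‖
      = |a l.1| * |a l.2| * y ^ (2 * max l.1 l.2) := by
        rw [Real.norm_eq_abs, abs_mul, abs_mul, ← pow_mul, abs_of_nonneg (pow_nonneg hy _)]
    _ ≤ |a l.1| * |a l.2| * y ^ (l.1 + l.2) := by
        gcongr ?_ * ?_
        exact pow_le_pow_of_le_one hy hy1 (by omega)
    _ = |a l.1| * y ^ l.1 * (|a l.2| * y ^ l.2) := by ring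
    _ ≤ C * (K * y) ^ l.1 * (C * (K * y) ^ l.2) :=
        mul_le_mul (hterm _) (hterm _) (by positivity) (hnonneg _)

theorem summable_sq_mul_pow {u : ℕ → ℝ} {C K y : ℝ} (hu : ∀ n, |u n| ≤ C * K ^ n) (hK : 0 ≤ K)
    (hy : 0 ≤ y) (hKy : K * y < 1) : Summable fun n ↦ u n ^ 2 * (y ^ 2) ^ n := by
  have hgeom := summable_geometric_of_lt_one (sq_nonneg (K * y))
    (pow_lt_one₀ (mul_nonneg hK hy) hKy two_ne_zero)
  refine (hgeom.mul_left (C ^ 2)).of_norm_bounded fun n ↦ ?_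
  calc ‖u n ^ 2 * (y ^ 2) ^ n‖ = |u n| ^ 2 * (y ^ 2) ^ n := by
        rw [norm_mul, norm_pow, Real.norm_eq_abs, Real.norm_of_nonneg (by positivity)]
    _ ≤ (C * K ^ n) ^ 2 * (y ^ 2) ^ n := by
        gcongr
        exact hu n
    _ = C ^ 2 * ((K * y) ^ 2) ^ n := by ring

end Series

section Integrand

theorem Vd_unit_sq (c : ℤ_[p]ˣ) : Vd p ((c : ℤ_[p]) ^ 2) = splitLocus p := by
  have hc : ((c : ℤ_[p]) : ℚ_[p]) ≠ 0 := fun h ↦ c.ne_zero (Subtype.ext h)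
  ext v
  rw [Vd, splitLocus, mem_ofPred_eq, mem_ofPred_eq, and_assoc, PadicInt.coe_pow]
  refine and_congr_right fun _ ↦ and_congr_right fun _ ↦ ⟨?_, ?_⟩
  · rintro ⟨e, he, h⟩
    rw [h, ← mul_pow]
    exact ⟨.sq _, pow_ne_zero 2 (mul_ne_zero hc he)⟩
  · rintro ⟨⟨e, he⟩, h⟩
    refine ⟨e / c, div_ne_zero (fun h0 ↦ h (by rw [he, h0, zero_mul])) hc, ?_⟩
    rw [← mul_pow, mul_div_cancel₀ _ hc, he, sq]

theorem norm_unit_sq (c : ℤ_[p]ˣ) : ‖(((c : ℤ_[p]) ^ 2 : ℤ_[p]) : ℚ_[p])‖ = 1 := by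
  rw [PadicInt.coe_pow, norm_pow, ← PadicInt.norm_def, PadicInt.norm_units, one_pow]

theorem level_unique {t : ℚ_[p]} (ht : t ≠ 0) {m : ℝ} {l l' : ℕ} (h : m = ‖t‖ * (p : ℝ) ^ (2 * l))
    (h' : m = ‖t‖ * (p : ℝ) ^ (2 * l')) : l = l' := by
  have hpow := mul_left_cancel₀ (norm_ne_zero_iff.2 ht) (h.symm.trans h')
  exact Nat.eq_of_mul_eq_mul_left two_pos (pow_right_injective₀ cast_pos one_lt_cast.ne' hpow)

theorem pairwise_disjoint_cell :
    Pairwise (Function.onFun Disjoint fun l : ℕ × ℕ ↦ cell p l.1 l.2) :=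
  fun _ _ hne ↦ disjoint_left.2 fun _ hl hl' ↦ hne <|
    Prod.ext (level_unique hl.1.2.2 hl.2.1 hl'.2.1) (level_unique hl.1.2.2 hl.2.2 hl'.2.2)

theorem fs_of_mem_cell {d : ℤ_[p]} (hd : ‖(d : ℚ_[p])‖ = 1) (β : ℕ → ℝ) (s : ℝ) {l₁ l₂ : ℕ}
    {v : VV p} (hv : v ∈ cell p l₁ l₂) : fs p d β s v = β l₁ * β l₂ * ‖Pq v‖ ^ (s - 2) := by
  obtain ⟨⟨-, -, hP⟩, h₁, h₂⟩ := hv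
  rw [← one_mul (mcoord _ ^ 2), ← hd] at h₁ h₂
  have hex₁ : ∃ l : ℕ, ‖(d : ℚ_[p])‖ * mcoord (Fmap1 v) ^ 2 = ‖Pq v‖ * (p : ℝ) ^ (2 * l) := ⟨l₁, h₁⟩
  have hex₂ : ∃ l : ℕ, ‖(d : ℚ_[p])‖ * mcoord (Fmap2 v) ^ 2 = ‖Pq v‖ * (p : ℝ) ^ (2 * l) := ⟨l₂, h₂⟩
  rw [fs, dif_pos ⟨hP, hex₁, hex₂⟩, level_unique hP hex₁.choose_spec h₁,
    level_unique hP hex₂.choose_spec h₂]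

theorem fs_eq_zero_of_notMem_cell {d : ℤ_[p]} (hd : ‖(d : ℚ_[p])‖ = 1) (β : ℕ → ℝ) (s : ℝ)
    {v : VV p} (hv : v ∈ splitLocus p) (hcell : ∀ l₁ l₂, v ∉ cell p l₁ l₂) :
    fs p d β s v = 0 := by
  refine dif_neg ?_
  simp only [hd, one_mul]
  exact fun ⟨_, ⟨l₁, h₁⟩, l₂, h₂⟩ ↦ hcell l₁ l₂ ⟨hv, h₁, h₂⟩

end Integrand

section CellIntegral

theorem toReal_one_sub_inv_pow (n : ℕ) : (1 - (p : ℝ≥0∞)⁻¹ ^ n).toReal = 1 - (p : ℝ)⁻¹ ^ n := by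
  have h : (p : ℝ≥0∞)⁻¹ ^ n ≤ 1 :=
    pow_le_one₀ zero_le (ENNReal.inv_le_one.2 (mod_cast (Fact.out : p.Prime).one_le))
  rw [ENNReal.toReal_sub_of_le h ENNReal.one_ne_top]
  simp

theorem toReal_levelWeight (l : ℕ) :
    (levelWeight p l).toReal = if l = 0 then 1 else (1 - (p : ℝ)⁻¹) * (p : ℝ) ^ l := by
  have h := toReal_one_sub_inv_pow (p := p) 1
  rw [pow_one, pow_one] at h
  rw [levelWeight]
  split_ifs
  · exact ENNReal.toReal_one
  · rw [ENNReal.toReal_mul, h, ENNReal.toReal_pow, ENNReal.toReal_natCast]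

omit [Fact p.Prime] in
theorem levelWeight_ne_top (l : ℕ) : levelWeight p l ≠ ∞ := by
  rw [levelWeight]
  split_ifs <;> finiteness

theorem toReal_levelWeight_le (l : ℕ) : (levelWeight p l).toReal ≤ (p : ℝ) ^ l := by
  have hp := cast_pos (p := p)
  rw [toReal_levelWeight]
  split_ifs with hl
  · rw [hl, pow_zero]
  · exact mul_le_of_le_one_left (by positivity) (sub_le_self 1 (by positivity))

theorem inv_pow_mul_rpow_lt_one {σ : ℝ} (hσ : -1 < σ) {n : ℕ} (hn : 1 ≤ n) :
    (p : ℝ≥0∞)⁻¹ ^ n * (p : ℝ≥0∞) ^ (-σ) < 1 := by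
  have hp : (p : ℝ≥0∞) ≠ 0 := mod_cast (Fact.out : p.Prime).ne_zero
  have hn' : (1 : ℝ) ≤ n := mod_cast hn
  rw [← ENNReal.rpow_natCast, ENNReal.inv_rpow, ← ENNReal.rpow_neg,
    ← ENNReal.rpow_add _ _ hp (by simp)]
  exact ENNReal.rpow_lt_one_of_one_lt_of_neg (mod_cast (Fact.out : p.Prime).one_lt) (by linarith)

theorem detZeta_ne_top {σ : ℝ} (hσ : -1 < σ) : detZeta p σ ≠ ∞ := by
  have h (n : ℕ) (hn : 1 ≤ n) : (1 - (p : ℝ≥0∞)⁻¹ ^ n * (p : ℝ≥0∞) ^ (-σ))⁻¹ ≠ ∞ :=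
    ENNReal.inv_ne_top.2 (tsub_pos_of_lt (inv_pow_mul_rpow_lt_one hσ hn)).ne'
  have h₁ := h 1 le_rfl
  have h₂ := h 2 one_le_two
  rw [pow_one] at h₁
  rw [detZeta]
  finiteness

theorem toReal_detZeta {σ : ℝ} (hσ : -1 < σ) :
    (detZeta p σ).toReal = (1 - (p : ℝ)⁻¹) * (1 - (p : ℝ)⁻¹ * (p : ℝ) ^ (-σ))⁻¹ *
      ((1 - (p : ℝ)⁻¹ ^ 2) * (1 - (p : ℝ)⁻¹ ^ 2 * (p : ℝ) ^ (-σ))⁻¹) := by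
  have h (n : ℕ) (hn : 1 ≤ n) : (1 - (p : ℝ≥0∞)⁻¹ ^ n * (p : ℝ≥0∞) ^ (-σ)).toReal =
      1 - (p : ℝ)⁻¹ ^ n * (p : ℝ) ^ (-σ) := by
    rw [ENNReal.toReal_sub_of_le (inv_pow_mul_rpow_lt_one hσ hn).le ENNReal.one_ne_top,
      ENNReal.toReal_mul, ← ENNReal.toReal_rpow]
    simp
  have h₁ := h 1 le_rfl
  have h₁' := toReal_one_sub_inv_pow (p := p) 1
  simp only [pow_one] at h₁ h₁'
  rw [detZeta]
  simp only [ENNReal.toReal_mul, ENNReal.toReal_inv, h 2 one_le_two, toReal_one_sub_inv_pow, h₁,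
    h₁']

variable {μ : Measure (VV p)} [μ.IsAddHaarMeasure]

theorem setLIntegral_cell_ofReal (hp : Odd p)
    (hμ : μ {v : VV p | (∀ i j, ‖v.1 i j‖ ≤ 1) ∧ (∀ i j, ‖v.2 i j‖ ≤ 1)} = 1) (l₁ l₂ : ℕ) (s : ℝ) :
    ∫⁻ v in cell p l₁ l₂, ENNReal.ofReal (‖Pq v‖ ^ (s - 2)) ∂μ =
      2⁻¹ * (1 + (p : ℝ≥0∞)⁻¹) ^ 2 * detZeta p (2 * s - 2) *
        (levelWeight p l₁ * levelWeight p l₂ * ((p : ℝ≥0∞) ^ (-(2 * s))) ^ max l₁ l₂) := by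
  rw [← setLIntegral_cell hp hμ]
  refine setLIntegral_congr_fun (measurableSet_cell hp l₁ l₂) fun v hv ↦ ?_
  rw [← ofReal_norm, ENNReal.ofReal_rpow_of_pos (norm_pos_iff.2 hv.1.2.2)]

theorem integrableOn_cell (hp : Odd p)
    (hμ : μ {v : VV p | (∀ i j, ‖v.1 i j‖ ≤ 1) ∧ (∀ i j, ‖v.2 i j‖ ≤ 1)} = 1) (l₁ l₂ : ℕ) {s : ℝ}
    (hs : 1 / 2 < s) : IntegrableOn (fun v ↦ ‖Pq v‖ ^ (s - 2)) (cell p l₁ l₂) μ := by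
  have hdet : detZeta p (2 * s - 2) ≠ ∞ := detZeta_ne_top (by linarith)
  have h₁ := levelWeight_ne_top (p := p) l₁
  have h₂ := levelWeight_ne_top (p := p) l₂
  have hp0 : (p : ℝ≥0∞) ≠ 0 := mod_cast (Fact.out : p.Prime).ne_zero
  refine ⟨Measurable.aestronglyMeasurable (by fun_prop), ?_⟩
  rw [hasFiniteIntegral_iff_ofReal (.of_forall fun v ↦ by positivity),
    setLIntegral_cell_ofReal hp hμ]
  finiteness

theorem setIntegral_cell (hp : Odd p)
    (hμ : μ {v : VV p | (∀ i j, ‖v.1 i j‖ ≤ 1) ∧ (∀ i j, ‖v.2 i j‖ ≤ 1)} = 1) (l₁ l₂ : ℕ) (s : ℝ) :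
    ∫ v in cell p l₁ l₂, ‖Pq v‖ ^ (s - 2) ∂μ =
      2⁻¹ * (1 + (p : ℝ)⁻¹) ^ 2 * (detZeta p (2 * s - 2)).toReal *
        ((levelWeight p l₁).toReal * (levelWeight p l₂).toReal *
          ((p : ℝ) ^ (-(2 * s))) ^ max l₁ l₂) := by
  have hp0 : (p : ℝ≥0∞) ≠ 0 := mod_cast (Fact.out : p.Prime).ne_zero
  rw [integral_eq_lintegral_of_nonneg_ae (.of_forall fun v ↦ by positivity)
    (Measurable.aestronglyMeasurable (by fun_prop)), setLIntegral_cell_ofReal hp hμ]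
  simp [ENNReal.toReal_add, hp0, ← ENNReal.toReal_rpow]

end CellIntegral

section WeightedSums

variable {β : ℕ → ℝ} {lam : ℝ}

theorem exists_abs_levelWeight_mul_le (hrec : ∀ k, p * β (k + 2) - lam * β (k + 1) + β k = 0) :
    ∃ C, ∀ l, |(levelWeight p l).toReal * β l| ≤ C * (|lam| + p + 1) ^ l := by
  have hb (n : ℕ) : (p : ℝ) ^ (n + 2) * β (n + 2) =
      lam * ((p : ℝ) ^ (n + 1) * β (n + 1)) - p * ((p : ℝ) ^ n * β n) := by
    linear_combination (p : ℝ) ^ (n + 1) * hrec n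
  obtain ⟨C, hC⟩ := exists_abs_le_mul_pow_of_recurrence (a := fun n ↦ (p : ℝ) ^ n * β n) hb
  refine ⟨C, fun l ↦ ?_⟩
  calc |(levelWeight p l).toReal * β l| = (levelWeight p l).toReal * |β l| := by
        rw [abs_mul, abs_of_nonneg ENNReal.toReal_nonneg]
    _ ≤ (p : ℝ) ^ l * |β l| := by
        gcongr
        exact toReal_levelWeight_le l
    _ = |(p : ℝ) ^ l * β l| := by rw [abs_mul, abs_of_pos (pow_pos cast_pos l)]
    _ ≤ C * (|lam| + p + 1) ^ l := by simpa only [Nat.abs_cast] using hC l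

theorem sum_levelWeight_mul_recurrence (hβ0 : β 0 = 1) (hβ1 : β 1 = (lam - 2) / (p - 1))
    (hrec : ∀ k, p * β (k + 2) - lam * β (k + 1) + β k = 0) (n : ℕ) :
    ∑ l ∈ Finset.range (n + 3), (levelWeight p l).toReal * β l =
      lam * ∑ l ∈ Finset.range (n + 2), (levelWeight p l).toReal * β l -
        p * ∑ l ∈ Finset.range (n + 1), (levelWeight p l).toReal * β l := by
  have hp := cast_pos (p := p)
  have hp1 : (p : ℝ) - 1 ≠ 0 := sub_ne_zero.2 one_lt_cast.ne'
  induction n with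
  | zero =>
    have hβ2 : β 2 = (lam * β 1 - 1) / p := by
      rw [eq_div_iff hp.ne']
      linear_combination hrec 0 - hβ0
    simp only [Finset.sum_range_succ, Finset.sum_range_zero, toReal_levelWeight, hβ2, hβ1, hβ0,
      ↓reduceIte, one_ne_zero, two_ne_zero]
    field_simp
    ring
  | succ n ih =>
    have hweight (m : ℕ) :
        (levelWeight p (m + 1)).toReal = (1 - (p : ℝ)⁻¹) * (p : ℝ) ^ (m + 1) := by
      rw [toReal_levelWeight, if_neg m.succ_ne_zero]
    rw [Finset.sum_range_succ _ (n + 3), hweight]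
    rw [Finset.sum_range_succ _ (n + 2), hweight] at ih ⊢
    rw [Finset.sum_range_succ _ (n + 1), hweight] at ih ⊢
    linear_combination ih + (1 - (p : ℝ)⁻¹) * (p : ℝ) ^ (n + 2) * hrec (n + 1)

theorem sum_range_two_levelWeight_mul (hβ0 : β 0 = 1) (hβ1 : β 1 = (lam - 2) / (p - 1)) :
    ∑ l ∈ Finset.range 2, (levelWeight p l).toReal * β l = lam - 1 := by
  have hp := cast_pos (p := p)
  have hp1 : (p : ℝ) - 1 ≠ 0 := sub_ne_zero.2 one_lt_cast.ne'
  simp only [Finset.sum_range_succ, Finset.sum_range_zero, toReal_levelWeight, hβ1, hβ0,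
    ↓reduceIte, one_ne_zero]
  field_simp
  ring

theorem hasSum_levelWeight_mul (hβ0 : β 0 = 1) (hβ1 : β 1 = (lam - 2) / (p - 1))
    (hrec : ∀ k, p * β (k + 2) - lam * β (k + 1) + β k = 0) {y : ℝ} (hy : 0 ≤ y)
    (hlt : (|lam| + p + 1) * y < 1) :
    HasSum (fun l : ℕ × ℕ ↦ (levelWeight p l.1).toReal * β l.1 *
        ((levelWeight p l.2).toReal * β l.2) * (y ^ 2) ^ max l.1 l.2)
      ((1 - y ^ 2) * ((1 + (1 + p - 2 * lam) * y ^ 2 + p * (y ^ 2) ^ 2) /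
        (1 - (lam ^ 2 - p) * y ^ 2 + p * (lam ^ 2 - p) * (y ^ 2) ^ 2 - p ^ 3 * (y ^ 2) ^ 3))) := by
  have hp := cast_pos (p := p)
  have hK : 0 ≤ |lam| + p + 1 := by positivity
  have hlam : |lam| * y < 1 := hlt.trans_le' (by gcongr; linarith)
  have hpy : p * y < 1 := hlt.trans_le' (by gcongr; linarith [abs_nonneg lam])
  have hy1 : y ≤ 1 := hlt.le.trans' (le_mul_of_one_le_left hy (by linarith [abs_nonneg lam]))
  set u := fun n ↦ ∑ l ∈ Finset.range (n + 1), (levelWeight p l).toReal * β l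
  have hu : ∀ n, u (n + 2) = lam * u (n + 1) - p * u n :=
    sum_levelWeight_mul_recurrence hβ0 hβ1 hrec
  have hu0 : u 0 = 1 := by simp [u, toReal_levelWeight, hβ0]
  have hu1 : u 1 = lam - 1 := sum_range_two_levelWeight_mul hβ0 hβ1
  obtain ⟨C, hC⟩ := exists_abs_levelWeight_mul_le hrec
  obtain ⟨C', hC'⟩ := exists_abs_le_mul_pow_of_recurrence hu
  rw [Nat.abs_cast] at hC'
  have hS := (summable_sq_mul_pow hC' hK hy hlt).hasSum
  have hx := sq_nonneg y
  have hpx : p * y ^ 2 < 1 := by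
    rw [sq, ← mul_assoc]
    exact mul_lt_one_of_nonneg_of_lt_one_left (by positivity) hpy hy1
  have hlamx : lam ^ 2 * y ^ 2 < 1 := by
    rw [← sq_abs, ← mul_pow]
    exact pow_lt_one₀ (by positivity) hlam two_ne_zero
  convert hasSum_mul_mul_pow_max (summable_mul_mul_pow_max hC hK hy hy1 hlt) hS using 2
  rw [div_eq_iff (denominator_pos hp.le hx hpx hlamx).ne', mul_comm (tsum _),
    mul_eq_of_hasSum_sq_of_recurrence hu hS, hu0, hu1]
  ring

end WeightedSums

section ZetaIntegral

variable {μ : Measure (VV p)} [μ.IsAddHaarMeasure]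

theorem norm_fs (d : ℤ_[p]) (β : ℕ → ℝ) (s : ℝ) (v : VV p) :
    ‖fs p d β s v‖ = fs p d (fun l ↦ |β l|) s v := by
  unfold fs
  split_ifs
  · rw [norm_mul, norm_mul, Real.norm_of_nonneg (r := _ ^ _) (by positivity), Real.norm_eq_abs,
      Real.norm_eq_abs]
  · exact norm_zero

theorem integrableOn_cell_fs (hp : Odd p)
    (hμ : μ {v : VV p | (∀ i j, ‖v.1 i j‖ ≤ 1) ∧ (∀ i j, ‖v.2 i j‖ ≤ 1)} = 1)
    {d : ℤ_[p]} (hd : ‖(d : ℚ_[p])‖ = 1) (β : ℕ → ℝ) {s : ℝ} (hs : 1 / 2 < s) (l₁ l₂ : ℕ) :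
    IntegrableOn (fs p d β s) (cell p l₁ l₂) μ :=
  (integrableOn_congr_fun (fun _ ↦ fs_of_mem_cell hd β s) (measurableSet_cell hp l₁ l₂)).2
    ((integrableOn_cell hp hμ l₁ l₂ hs).const_mul _)

theorem setIntegral_cell_fs (hp : Odd p)
    (hμ : μ {v : VV p | (∀ i j, ‖v.1 i j‖ ≤ 1) ∧ (∀ i j, ‖v.2 i j‖ ≤ 1)} = 1)
    {d : ℤ_[p]} (hd : ‖(d : ℚ_[p])‖ = 1) (β : ℕ → ℝ) (s : ℝ) (l₁ l₂ : ℕ) :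
    ∫ v in cell p l₁ l₂, fs p d β s v ∂μ =
      2⁻¹ * (1 + (p : ℝ)⁻¹) ^ 2 * (detZeta p (2 * s - 2)).toReal *
        ((levelWeight p l₁).toReal * β l₁ * ((levelWeight p l₂).toReal * β l₂) *
          ((p : ℝ) ^ (-(2 * s))) ^ max l₁ l₂) := by
  rw [setIntegral_congr_fun (measurableSet_cell hp l₁ l₂) fun v hv ↦ fs_of_mem_cell hd β s hv,
    integral_const_mul, setIntegral_cell hp hμ]
  ring

theorem integrableOn_iUnion_cell_fs (hp : Odd p)
    (hμ : μ {v : VV p | (∀ i j, ‖v.1 i j‖ ≤ 1) ∧ (∀ i j, ‖v.2 i j‖ ≤ 1)} = 1)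
    {d : ℤ_[p]} (hd : ‖(d : ℚ_[p])‖ = 1) {β : ℕ → ℝ} {s : ℝ} (hs : 1 / 2 < s)
    (hβ : Summable fun l : ℕ × ℕ ↦ (levelWeight p l.1).toReal * β l.1 *
        ((levelWeight p l.2).toReal * β l.2) * ((p : ℝ) ^ (-(2 * s))) ^ max l.1 l.2) :
    IntegrableOn (fs p d β s) (⋃ l : ℕ × ℕ, cell p l.1 l.2) μ := by
  refine integrableOn_iUnion_of_summable_integral_norm
    (fun l ↦ integrableOn_cell_fs hp hμ hd β hs l.1 l.2) ?_
  simp only [norm_fs, setIntegral_cell_fs hp hμ hd]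
  refine (hβ.abs.congr fun l ↦ ?_).mul_left _
  have hp0 := cast_pos (p := p)
  simp only [abs_mul, abs_of_nonneg ENNReal.toReal_nonneg,
    abs_of_nonneg (pow_nonneg (Real.rpow_nonneg hp0.le _) _)]

omit [μ.IsAddHaarMeasure] in
theorem integrableOn_splitLocus_fs (hp : Odd p) {d : ℤ_[p]} (hd : ‖(d : ℚ_[p])‖ = 1)
    {β : ℕ → ℝ} {s : ℝ} (h : IntegrableOn (fs p d β s) (⋃ l : ℕ × ℕ, cell p l.1 l.2) μ) :
    IntegrableOn (fs p d β s) (splitLocus p) μ ∧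
      ∫ v in splitLocus p, fs p d β s v ∂μ =
        ∫ v in ⋃ l : ℕ × ℕ, cell p l.1 l.2, fs p d β s v ∂μ := by
  have hzero : ∀ v ∈ splitLocus p \ ⋃ l : ℕ × ℕ, cell p l.1 l.2, fs p d β s v = 0 :=
    fun v hv ↦ fs_eq_zero_of_notMem_cell hd β s hv.1
      fun l₁ l₂ h ↦ hv.2 (mem_iUnion.2 ⟨(l₁, l₂), h⟩)
  have hloc := measurableSet_splitLocus hp
  exact ⟨h.of_forall_sdiff_eq_zero hloc hzero, setIntegral_eq_of_subset_of_forall_sdiff_eq_zero hloc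
    (iUnion_subset fun l ↦ sep_subset _ _) hzero⟩

theorem setIntegral_splitLocus_fs (hp : Odd p)
    (hμ : μ {v : VV p | (∀ i j, ‖v.1 i j‖ ≤ 1) ∧ (∀ i j, ‖v.2 i j‖ ≤ 1)} = 1)
    {d : ℤ_[p]} (hd : ‖(d : ℚ_[p])‖ = 1) {β : ℕ → ℝ} {s : ℝ} (hs : 1 / 2 < s) {S : ℝ}
    (hβ : HasSum (fun l : ℕ × ℕ ↦ (levelWeight p l.1).toReal * β l.1 *
        ((levelWeight p l.2).toReal * β l.2) * ((p : ℝ) ^ (-(2 * s))) ^ max l.1 l.2) S) :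
    IntegrableOn (fs p d β s) (splitLocus p) μ ∧
      ∫ v in splitLocus p, fs p d β s v ∂μ =
        2⁻¹ * (1 + (p : ℝ)⁻¹) ^ 2 * (detZeta p (2 * s - 2)).toReal * S := by
  have hint := integrableOn_iUnion_cell_fs hp hμ hd hs hβ.summable
  have hsum := hasSum_integral_iUnion (s := fun l : ℕ × ℕ ↦ cell p l.1 l.2)
    (fun l ↦ measurableSet_cell hp l.1 l.2) pairwise_disjoint_cell hint
  simp only [setIntegral_cell_fs hp hμ hd] at hsum
  obtain ⟨hfs, heq⟩ := integrableOn_splitLocus_fs hp hd hint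
  exact ⟨hfs, heq.trans (hsum.unique (hβ.mul_left _))⟩

end ZetaIntegral

section ClosedForm

theorem rpow_natCast_sub_two_mul (n : ℕ) (s : ℝ) :
    (p : ℝ) ^ (n - 2 * n * s) = p ^ n * ((p : ℝ) ^ (-(2 * s))) ^ n := by
  have hp := cast_pos (p := p)
  rw [← Real.rpow_natCast p n, ← Real.rpow_mul_natCast hp.le, ← Real.rpow_add hp]
  ring_nf

theorem toReal_detZeta_two_mul_sub_two {s : ℝ} (hs : 1 / 2 < s) :
    (detZeta p (2 * s - 2)).toReal = (1 - (p : ℝ)⁻¹) * (1 - (p : ℝ) * (p : ℝ) ^ (-(2 * s)))⁻¹ *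
      ((1 - (p : ℝ)⁻¹ ^ 2) * (1 - (p : ℝ) ^ (-(2 * s)))⁻¹) := by
  have hp := cast_pos (p := p)
  have hpow : (p : ℝ) ^ (-(2 * s - 2)) = p ^ 2 * (p : ℝ) ^ (-(2 * s)) := by
    rw [← Real.rpow_natCast p 2, ← Real.rpow_add hp]
    ring_nf
  rw [toReal_detZeta (by linarith), hpow]
  field_simp

theorem local_factor_eq {s : ℝ} (hs : 1 / 2 < s) (lam : ℝ) :
    2⁻¹ * (1 + (p : ℝ)⁻¹) ^ 2 * (detZeta p (2 * s - 2)).toReal *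
        ((1 - (p : ℝ) ^ (-(2 * s))) * ((1 + (1 + p - 2 * lam) * (p : ℝ) ^ (-(2 * s)) +
          p * ((p : ℝ) ^ (-(2 * s))) ^ 2) /
        (1 - (lam ^ 2 - p) * (p : ℝ) ^ (-(2 * s)) +
          p * (lam ^ 2 - p) * ((p : ℝ) ^ (-(2 * s))) ^ 2 -
          p ^ 3 * ((p : ℝ) ^ (-(2 * s))) ^ 3))) =
      (1 / 2) * (1 - (p : ℝ)⁻¹)⁻¹ * (1 - (p : ℝ)⁻¹ ^ 2) ^ 3 * (1 - (p : ℝ) ^ (1 - 2 * s))⁻¹ *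
        (1 - ((p : ℝ)⁻¹ * lam ^ 2 - 1) * (p : ℝ) ^ (1 - 2 * s) +
            ((p : ℝ)⁻¹ * lam ^ 2 - 1) * (p : ℝ) ^ (2 - 4 * s) - (p : ℝ) ^ (3 - 6 * s))⁻¹ *
        (1 + (1 + (p : ℝ)⁻¹ + (p : ℝ) ^ (-(2 * s)) - 2 * (p : ℝ)⁻¹ * lam) *
          (p : ℝ) ^ (1 - 2 * s)) := by
  have hp := cast_pos (p := p)
  have hx : 1 - (p : ℝ) ^ (-(2 * s)) ≠ 0 :=
    (sub_pos.2 (Real.rpow_lt_one_of_one_lt_of_neg one_lt_cast (by linarith))).ne'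
  have h₁ := rpow_natCast_sub_two_mul (p := p) 1 s
  have h₂ := rpow_natCast_sub_two_mul (p := p) 2 s
  have h₃ := rpow_natCast_sub_two_mul (p := p) 3 s
  norm_num only [Nat.cast_one, Nat.cast_ofNat, pow_one] at h₁ h₂ h₃
  rw [toReal_detZeta_two_mul_sub_two hs, h₁, h₂, h₃]
  set x := (p : ℝ) ^ (-(2 * s))
  have hden : 1 - ((p : ℝ)⁻¹ * lam ^ 2 - 1) * (p * x) +
      ((p : ℝ)⁻¹ * lam ^ 2 - 1) * (p ^ 2 * x ^ 2) - p ^ 3 * x ^ 3 =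
      1 - (lam ^ 2 - p) * x + p * (lam ^ 2 - p) * x ^ 2 - p ^ 3 * x ^ 3 := by
    field_simp
  have hnum : 1 + (1 + (p : ℝ)⁻¹ + x - 2 * (p : ℝ)⁻¹ * lam) * (p * x) =
      1 + (1 + p - 2 * lam) * x + p * x ^ 2 := by
    field_simp
    ring
  have hfactor : 1 - (p : ℝ)⁻¹ ^ 2 = (1 - (p : ℝ)⁻¹) * (1 + (p : ℝ)⁻¹) := by ring
  rw [hden, hnum, hfactor, div_eq_mul_inv]
  field_simp

end ClosedForm

end LocalZeta

open LocalZeta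

theorem stmt17_general (p : ℕ) [Fact p.Prime] (hp : Odd p) (lam : ℝ) (d : ℤ_[p])
    (hd : ∃ c : ℤ_[p]ˣ, d = (c : ℤ_[p]) ^ 2)
    (β : ℕ → ℝ) (hβ0 : β 0 = 1) (hβ1 : β 1 = (lam - 2) / (p - 1))
    (hrec : ∀ k : ℕ, p * β (k + 2) - lam * β (k + 1) + β k = 0)
    (μ : Measure (VV p)) [μ.IsAddHaarMeasure]
    (hμ : μ {v : VV p | (∀ i j, ‖v.1 i j‖ ≤ 1) ∧ (∀ i j, ‖v.2 i j‖ ≤ 1)} = 1) :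
    ∃ s₀ : ℝ, ∀ s : ℝ, s₀ < s →
      IntegrableOn (fs p d β s) (Vd p d) μ ∧
      ∫ v in Vd p d, fs p d β s v ∂μ =
        (1 / 2) * (1 - (p : ℝ)⁻¹)⁻¹ * (1 - (p : ℝ)⁻¹ ^ 2) ^ 3 * (1 - (p : ℝ) ^ (1 - 2 * s))⁻¹ *
          (1 - ((p : ℝ)⁻¹ * lam ^ 2 - 1) * (p : ℝ) ^ (1 - 2 * s) +
              ((p : ℝ)⁻¹ * lam ^ 2 - 1) * (p : ℝ) ^ (2 - 4 * s) - (p : ℝ) ^ (3 - 6 * s))⁻¹ *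
          (1 + (1 + (p : ℝ)⁻¹ + (p : ℝ) ^ (-(2 * s)) - 2 * (p : ℝ)⁻¹ * lam) *
            (p : ℝ) ^ (1 - 2 * s)) := by
  have hp0 := cast_pos (p := p)
  have hK : 0 < |lam| + p + 1 := by positivity
  refine ⟨Real.logb p (|lam| + p + 1), fun s hs ↦ ?_⟩
  have hlt : (|lam| + p + 1) * (p : ℝ) ^ (-s) < 1 := by
    rw [Real.rpow_neg hp0.le, mul_inv_lt_iff₀ (by positivity), one_mul]
    exact (Real.logb_lt_iff_lt_rpow one_lt_cast hK).1 hs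
  have hs' : 1 / 2 < s := by
    have hlog : 1 ≤ Real.logb p (|lam| + p + 1) := by
      rw [Real.le_logb_iff_rpow_le one_lt_cast hK, Real.rpow_one]
      linarith [abs_nonneg lam]
    linarith
  have hsq : ((p : ℝ) ^ (-s)) ^ 2 = (p : ℝ) ^ (-(2 * s)) := by
    rw [← Real.rpow_mul_natCast hp0.le, Nat.cast_ofNat, mul_comm (-s), mul_neg]
  have hsum := hasSum_levelWeight_mul hβ0 hβ1 hrec (Real.rpow_nonneg hp0.le (-s)) hlt
  rw [hsq] at hsum
  obtain ⟨c, rfl⟩ := hd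
  rw [Vd_unit_sq, ← local_factor_eq hs']
  exact setIntegral_splitLocus_fs hp hμ (norm_unit_sq c) hs' hsum

/-- the split unramified case (`d` a square in `ℤ_pˣ`): explicit value of
the local zeta integral `∫_{V_d(ℤ_p)} f_s`. -/
theorem stmt17 (p : ℕ) [Fact p.Prime] (hp : Odd p) (q lam : ℝ) (hq : q = p)
    (hlam : |lam| ≤ q + 1)
    (d : ℤ_[p]) (hdval : ‖(d : ℚ_[p])‖ = 1 ∨ ‖(d : ℚ_[p])‖ = (p : ℝ)⁻¹)
    (hd : ∃ c : ℤ_[p]ˣ, d = (c : ℤ_[p]) ^ 2)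
    (β : ℕ → ℝ) (hβ0 : β 0 = 1) (hβ1 : β 1 = (lam - 2) / (q - 1))
    (hrec : ∀ k : ℕ, q * β (k + 2) - lam * β (k + 1) + β k = 0)
    (μ : Measure (VV p)) [μ.IsAddHaarMeasure]
    (hμ : μ {v : VV p | (∀ i j, ‖v.1 i j‖ ≤ 1) ∧ (∀ i j, ‖v.2 i j‖ ≤ 1)} = 1) :
    ∃ s₀ : ℝ, ∀ s : ℝ, s₀ < s →
      IntegrableOn (fs p d β s) (Vd p d) μ ∧
      ∫ v in Vd p d, fs p d β s v ∂μ =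
        (1 / 2) * (1 - q⁻¹)⁻¹ * (1 - q⁻¹ ^ 2) ^ 3 * (1 - q ^ (1 - 2 * s))⁻¹ *
          (1 - (q⁻¹ * lam ^ 2 - 1) * q ^ (1 - 2 * s) +
              (q⁻¹ * lam ^ 2 - 1) * q ^ (2 - 4 * s) - q ^ (3 - 6 * s))⁻¹ *
          (1 + (1 + q⁻¹ + q ^ (-(2 * s)) - 2 * q⁻¹ * lam) * q ^ (1 - 2 * s)) := by
  subst hq
  exact stmt17_general p hp lam d hd β hβ0 hβ1 hrec μ hμ
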